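/- arXiv:1703.04510 — 11 statements merged into one kernel-verified Lean document; each statement's English description precedes it below -/
import Mathlib

section
/- Let X be a Banach space, K ⊂ X a cone, U a relatively open subset of K, and T : cl(U) → K a (not necessarily continuous) map which sends bounded subsets of cl(U) into relatively compact subsets of X. Then the closed–convex envelope 𝕋 of T assumes compact values, i.e. 𝕋x is a compact subset of X for every x ∈ cl(U). -/
open Set Metric Filter Topology

/-- The closed–convex envelope of an operator `T` over the set `U`:
`𝕋 x = ⋂_{ε>0} closedConvexHull (T (closedBall x ε ∩ U))`. -/
noncomputable def ccEnvelope {X : Type*} [NormedAddCommGroup X] [NormedSpace ℝ X]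
    (U : Set X) (T : X → X) (x : X) : Set X :=
  ⋂ ε > (0:ℝ), closure (convexHull ℝ (T '' (closedBall x ε ∩ U)))

theorem isCompact_closure_convexHull_of_totallyBounded {E : Type*} [AddCommGroup E] [Module ℝ E]
    [UniformSpace E] [IsUniformAddGroup E] [ContinuousSMul ℝ E] [LocallyConvexSpace ℝ E]
    [CompleteSpace E] {s : Set E} (hs : TotallyBounded s) :
    IsCompact (closure (convexHull ℝ s)) :=
  hs.convexHull.closure.isCompact_of_isClosed isClosed_closure

section ccEnvelope

variable {X : Type*} [NormedAddCommGroup X] [NormedSpace ℝ X]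

theorem isClosed_ccEnvelope (S : Set X) (T : X → X) (x : X) : IsClosed (ccEnvelope S T x) :=
  isClosed_biInter fun _ _ ↦ isClosed_closure

theorem ccEnvelope_subset_closure_convexHull (S : Set X) (T : X → X) (x : X) {ε : ℝ}
    (hε : 0 < ε) :
    ccEnvelope S T x ⊆ closure (convexHull ℝ (T '' (closedBall x ε ∩ S))) :=
  iInter₂_subset ε hε

theorem ccEnvelope_isCompact_general [CompleteSpace X] {S : Set X} {T : X → X} {x : X} {ε : ℝ}
    (hε : 0 < ε) (hT : TotallyBounded (T '' (closedBall x ε ∩ S))) :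
    IsCompact (ccEnvelope S T x) :=
  (isCompact_closure_convexHull_of_totallyBounded hT).of_isClosed_subset
    (isClosed_ccEnvelope S T x) (ccEnvelope_subset_closure_convexHull S T x hε)

end ccEnvelope

/-- If `T : cl(U) → K` maps bounded sets into relatively compact sets, then its
closed–convex envelope assumes compact values. -/
theorem ccEnvelope_isCompact
    {X : Type*} [NormedAddCommGroup X] [NormedSpace ℝ X] [CompleteSpace X]
    (K : Set X) (hKcl : IsClosed K) (hKconv : Convex ℝ K)
    (hKcone : ∀ x ∈ K, ∀ l : ℝ, 0 ≤ l → l • x ∈ K)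
    (hKpointed : ∀ x ∈ K, -x ∈ K → x = 0)
    (U : Set X) (hU : ∃ V : Set X, IsOpen V ∧ U = V ∩ K)
    (T : X → X) (hTmaps : ∀ x ∈ closure U, T x ∈ K)
    (hTcompact : ∀ B ⊆ closure U, Bornology.IsBounded B → IsCompact (closure (T '' B)))
    (x : X) (hx : x ∈ closure U) :
    IsCompact (ccEnvelope (closure U) T x) :=
  ccEnvelope_isCompact_general one_pos <| totallyBounded_closure.1 <|
    (hTcompact _ inter_subset_right (isBounded_closedBall.subset inter_subset_left)).totallyBounded
end

section
/- Let X be a Banach space, K ⊂ X a cone, U a relatively open subset of K, and T : cl(U) → K a map which sends bounded subsets of cl(U) into relatively compact subsets of X. Then the closed–convex envelope 𝕋 of T is upper semicontinuous as a multivalued map: whenever x_n → x in cl(U), y_n ∈ 𝕋x_n for all n, and y_n → y, it follows that y ∈ 𝕋x. -/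
open Set Metric Filter Topology

section

variable {X : Type*} [NormedAddCommGroup X] [NormedSpace ℝ X] (S : Set X) (T : X → X)

theorem ccEnvelope_subset_closure_convexHull_of_dist_lt {x x' : X} {ε : ℝ} (h : dist x' x < ε) :
    ccEnvelope S T x' ⊆ closure (convexHull ℝ (T '' (closedBall x ε ∩ S))) := by
  have hball : closedBall x' (ε - dist x' x) ⊆ closedBall x ε :=
    closedBall_subset_closedBall' (sub_add_cancel ε (dist x' x)).le
  calc ccEnvelope S T x'
      ⊆ closure (convexHull ℝ (T '' (closedBall x' (ε - dist x' x) ∩ S))) :=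
        biInter_subset_of_mem (sub_pos.2 h)
    _ ⊆ closure (convexHull ℝ (T '' (closedBall x ε ∩ S))) := by gcongr

theorem ccEnvelope_usc_general : IsClosed {p : X × X | p.2 ∈ ccEnvelope S T p.1} := by
  refine isClosed_of_closure_subset fun p hp ↦ mem_iInter₂.2 fun ε hε ↦ ?_
  have hgraph : ∃ᶠ q : X × X in 𝓝 p, q.2 ∈ ccEnvelope S T q.1 :=
    mem_closure_iff_frequently.1 hp
  have hnear : ∀ᶠ q : X × X in 𝓝 p, dist q.1 p.1 < ε :=
    continuousAt_fst.eventually (ball_mem_nhds p.1 hε)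
  have hhull : ∃ᶠ q : X × X in 𝓝 p,
      q.2 ∈ closure (convexHull ℝ (T '' (closedBall p.1 ε ∩ S))) :=
    (hgraph.and_eventually hnear).mono fun _ hq ↦
      ccEnvelope_subset_closure_convexHull_of_dist_lt S T hq.2 hq.1
  exact isClosed_closure.mem_of_frequently_of_tendsto hhull continuousAt_snd

end

/-- If `T : cl(U) → K` maps bounded sets into relatively compact sets, then its
closed–convex envelope is upper semicontinuous: if `xₙ → x` in `cl(U)`, `yₙ ∈ 𝕋 xₙ`
and `yₙ → y`, then `y ∈ 𝕋 x`. -/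
theorem ccEnvelope_usc
    {X : Type*} [NormedAddCommGroup X] [NormedSpace ℝ X] [CompleteSpace X]
    (K : Set X) (hKcl : IsClosed K) (hKconv : Convex ℝ K)
    (hKcone : ∀ x ∈ K, ∀ l : ℝ, 0 ≤ l → l • x ∈ K)
    (hKpointed : ∀ x ∈ K, -x ∈ K → x = 0)
    (U : Set X) (hU : ∃ V : Set X, IsOpen V ∧ U = V ∩ K)
    (T : X → X) (hTmaps : ∀ x ∈ closure U, T x ∈ K)
    (hTcompact : ∀ B ⊆ closure U, Bornology.IsBounded B → IsCompact (closure (T '' B)))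
    (x : X) (hx : x ∈ closure U)
    (xn : ℕ → X) (hxn : ∀ n, xn n ∈ closure U) (hxn_lim : Tendsto xn atTop (𝓝 x))
    (yn : ℕ → X) (hyn : ∀ n, yn n ∈ ccEnvelope (closure U) T (xn n))
    (y : X) (hyn_lim : Tendsto yn atTop (𝓝 y)) :
    y ∈ ccEnvelope (closure U) T x :=
  (ccEnvelope_usc_general (closure U) T).mem_of_tendsto (x := (x, y))
    (hxn_lim.prodMk_nhds hyn_lim) (.of_forall hyn)
end

section
/- (Krasnoselskii fixed point theorem for discontinuous operators, first version.) Let K be a cone in a Banach space X, let r₁, r₂ ≤ R be positive numbers with r₁ ≠ r₂, and let T : closedBall(0,R) ∩ K → K be a map such that T(closedBall(0,R) ∩ K) is relatively compact and {x} ∩ 𝕋x ⊆ {Tx} for all x ∈ closedBall(0,R) ∩ K, where 𝕋 is the closed–convex envelope of T. Suppose that (a) λx ∉ 𝕋x for all x ∈ K with ‖x‖ = r₁ and all λ ≥ 1, and (b) there exists w ∈ K with ‖w‖ ≠ 0 such that x ∉ 𝕋x + λw for all λ ≥ 0 and all x ∈ K with ‖x‖ = r₂. Then T has at least one fixed point x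 ∈ K with min{r₁,r₂} < ‖x‖ < max{r₁,r₂}. -/
open Set Metric Filter Topology

/-!
Scarf's combinatorial lemma gives Brouwer's theorem on a simplex, and hence that every self-map of a
closed convex set with relatively compact range, continuous or not, has a point lying in its own
closed–convex envelope.

Both boundary conditions are carried by one map of the cone into itself,
`x ↦ (min ‖x‖ 2 / φ ‖x‖) T (g x) + max 0 (1 - ‖x‖) w`, where `g x = (φ ‖x‖ / ‖x‖) x` and `φ` moves
from `r₂` to `r₁` as its argument moves from `1` to `2`. The coefficient of `T` vanishes at the only
discontinuity `x = 0` of `g`, and `w ≠ 0` keeps `0` out of its own envelope. A point `x` in its own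
envelope thus yields `z = g x` such that
* if `‖x‖ ≤ 1`, then `‖z‖ = r₂` and `z ∈ 𝕋 z + λ w` with `λ ≥ 0`, contradicting (b);
* if `‖x‖ ≥ 2`, then `‖z‖ = r₁` and `λ z ∈ 𝕋 z` with `λ ≥ 1`, contradicting (a);
* otherwise `z ∈ 𝕋 z` and `‖z‖` lies strictly between the two radii.
-/

open scoped Finset

section FinsetCounting

variable {V I : Type*}

lemma finset_image_image_of_leftInverse [DecidableEq V] [DecidableEq I] {c : V → I} {s : I → V}
    (hcs : Function.LeftInverse c s) (J : Finset I) : (J.image s).image c = J := by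
  rw [Finset.image_image, hcs.comp_eq_id, Finset.image_id]

lemma even_card_filter_powersetCard_image_eq [DecidableEq I] {c : V → I} {r : Finset V}
    {J : Finset I} (hr : #r = #J + 1) (hc : ¬ Set.InjOn c r) :
    Even #{d ∈ r.powersetCard #J | d.image c = J} := by
  classical
  obtain ⟨x, hx, y, hy, hcxy, hxy⟩ : ∃ x ∈ r, ∃ y ∈ r, c x = c y ∧ x ≠ y := by
    simpa [Set.InjOn] using hc
  have eq_erase {z : V} {d : Finset V} (hz : z ∈ r) (hd : d ⊆ r ∧ #d = #J) (hzd : z ∉ d) :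
      d = r.erase z :=
    Finset.eq_of_subset_of_card_le (Finset.subset_erase.2 ⟨hd.1, hzd⟩)
      (by rw [Finset.card_erase_of_mem hz]; omega)
  have image_erase {a b : V} (hb : b ∈ r) (hab : a ≠ b) (hcab : c a = c b) :
      (r.erase a).image c = r.image c := by
    refine (Finset.image_subset_image (Finset.erase_subset a r)).antisymm fun k hk ↦ ?_
    obtain ⟨z, hz, rfl⟩ := Finset.mem_image.1 hk
    by_cases hza : z = a
    · exact Finset.mem_image.2 ⟨b, by simp [hb, hab.symm], by rw [hza, hcab]⟩
    · exact Finset.mem_image_of_mem c (Finset.mem_erase.2 ⟨hza, hz⟩)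
  have hx_image := image_erase hy hxy hcxy
  have hy_image := image_erase hx hxy.symm hcxy.symm
  have eq_or_eq {d : Finset V} (hd : d ⊆ r ∧ #d = #J) (himg : d.image c = J) :
      d = r.erase x ∨ d = r.erase y := by
    have hinj : Set.InjOn c d := Finset.card_image_iff.1 (by rw [himg, hd.2])
    by_cases hxd : x ∈ d
    · exact .inr (eq_erase hy hd fun hyd ↦ hxy (hinj hxd hyd hcxy))
    · exact .inl (eq_erase hx hd hxd)
  by_cases hJ : r.image c = J
  · have : {d ∈ r.powersetCard #J | d.image c = J} = {r.erase x, r.erase y} := by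
      ext d
      simp only [Finset.mem_filter, Finset.mem_powersetCard, Finset.mem_insert,
        Finset.mem_singleton]
      refine ⟨fun h ↦ eq_or_eq h.1 h.2, ?_⟩
      rintro (rfl | rfl)
      · simp [Finset.erase_subset, hx, hr, hx_image, hJ]
      · simp [Finset.erase_subset, hy, hr, hy_image, hJ]
    rw [this, Finset.card_pair fun h ↦ hxy ((Finset.erase_inj r hx).1 h)]
    exact even_two
  · rw [Finset.filter_eq_empty_iff.2 fun d hd himg ↦ hJ ?_]
    · simp
    · rcases eq_or_eq (Finset.mem_powersetCard.1 hd) himg with rfl | rfl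
      · rw [← hx_image, himg]
      · rw [← hy_image, himg]

lemma card_filter_superset_eq [Fintype V] [DecidableEq V] {P : Finset V → Prop} [DecidablePred P]
    {d A : Finset V} (hA : Disjoint A d) (h : ∀ w ∉ d, P (insert w d) ↔ w ∈ A) :
    #{r | (P r ∧ #r = #d + 1) ∧ d ⊆ r} = #A := by
  have hAd {w : V} (hw : w ∈ A) : w ∉ d := Finset.disjoint_left.1 hA hw
  have : ({r | (P r ∧ #r = #d + 1) ∧ d ⊆ r} : Finset (Finset V)) = A.image (insert · d) := by
    ext r
    simp only [Finset.mem_filter, Finset.mem_univ, true_and, Finset.mem_image]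
    constructor
    · rintro ⟨⟨hPr, hr⟩, hdr⟩
      obtain ⟨w, hw, rfl⟩ := Finset.covBy_iff_exists_insert.1
        (Finset.covBy_iff_card_sdiff_eq_one.2
          ⟨hdr, by rw [Finset.card_sdiff_of_subset hdr]; omega⟩)
      exact ⟨w, (h w hw).1 hPr, rfl⟩
    · rintro ⟨w, hw, rfl⟩
      exact ⟨⟨(h w (hAd hw)).2 hw, Finset.card_insert_of_notMem (hAd hw)⟩,
        Finset.subset_insert w d⟩
  rw [this, Finset.card_image_of_injOn fun v hv w _ hvw ↦ ?_]
  exact (Finset.insert_inj (hAd hv)).1 hvw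

lemma exists_odd_card_bipartiteBelow {α β : Type*} {s : Finset α} {t : Finset β}
    (r : α → β → Prop) [∀ a b, Decidable (r a b)] {a : α} (ha : a ∈ s)
    (hodd : Odd #(t.bipartiteAbove r a))
    (heven : ∀ b ∈ s, b ≠ a → Even #(t.bipartiteAbove r b)) :
    ∃ b ∈ t, Odd #(s.bipartiteBelow r b) := by
  classical
  by_contra! hcon
  have hcount := Finset.sum_card_bipartiteAbove_eq_sum_card_bipartiteBelow (s := s) (t := t) r
  rw [← Finset.add_sum_erase _ _ ha] at hcount
  refine Nat.not_even_iff_odd.2 (hodd.add_even (Finset.even_sum _ fun b hb ↦ ?_)) <|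
    hcount ▸ Finset.even_sum _ fun b hb ↦ Nat.not_odd_iff_even.1 (hcon b hb)
  exact heven b (Finset.mem_of_mem_erase hb) (Finset.ne_of_mem_erase hb)

end FinsetCounting

section Scarf

variable {V I α : Type*} [LinearOrder α] {u : I → V → α} {σ τ d r : Finset V} {k l : I}

/-- A finite set `σ` is *dominant* for the utilities `u i` when no point `t` beats the worst point
of `σ` under every utility at once. -/
def ScarfDominant (u : I → V → α) (σ : Finset V) : Prop :=
  ∀ t, ∃ i, ∀ x ∈ σ, u i t ≤ u i x

/-- The points that beat the worst point of `d` under every utility except possibly `u k`. These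
are the candidates for being added to a dominant set `d` as its new worst point under `u k`. -/
def scarfSide (u : I → V → α) (d : Finset V) (k : I) : Set V :=
  {t | ∀ l ≠ k, ∃ x ∈ d, u l x < u l t}

namespace ScarfDominant

lemma anti (hτ : ScarfDominant u τ) (h : σ ⊆ τ) : ScarfDominant u σ := fun t ↦
  (hτ t).imp fun _ hi x hx ↦ hi x (h hx)

lemma le_of_mem_scarfSide (hd : ScarfDominant u d) {t x : V} (ht : t ∈ scarfSide u d k)
    (hx : x ∈ d) : u k t ≤ u k x := by
  obtain ⟨i, hi⟩ := hd t
  obtain rfl : i = k := by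
    by_contra hik
    obtain ⟨z, hz, hzt⟩ := ht i hik
    exact hzt.not_ge (hi z hz)
  exact hi x hx

lemma disjoint_scarfSide (hd : ScarfDominant u d) (hkl : k ≠ l) :
    Disjoint (scarfSide u d k) (scarfSide u d l) := by
  refine Set.disjoint_left.2 fun t htk htl ↦ ?_
  obtain ⟨x, hx, hxt⟩ := htl k hkl
  exact hxt.not_ge (hd.le_of_mem_scarfSide htk hx)

lemma insert_iff [DecidableEq V] (hd : ScarfDominant u d) {y : V} (hy : y ∈ scarfSide u d k) :
    ScarfDominant u (insert y d) ↔ ∀ t ∈ scarfSide u d k, u k t ≤ u k y := by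
  refine ⟨fun h t ht ↦ h.le_of_mem_scarfSide (fun l hl ↦ ?_) (Finset.mem_insert_self y d),
    fun h t ↦ ?_⟩
  · exact (ht l hl).imp fun x hx ↦ ⟨Finset.mem_insert_of_mem hx.1, hx.2⟩
  · by_cases ht : t ∈ scarfSide u d k
    · exact ⟨k, Finset.forall_mem_insert _ _ _ |>.2
        ⟨h t ht, fun x hx ↦ hd.le_of_mem_scarfSide ht hx⟩⟩
    · obtain ⟨l, hl, htl⟩ : ∃ l ≠ k, ∀ x ∈ d, u l t ≤ u l x := by
        simpa [scarfSide] using ht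
      obtain ⟨x, hx, hxy⟩ := hy l hl
      exact ⟨l, Finset.forall_mem_insert _ _ _ |>.2 ⟨(htl x hx).trans hxy.le, htl⟩⟩

lemma exists_insert [DecidableEq V] [Finite V] (hd : ScarfDominant u d)
    (hk : (scarfSide u d k).Nonempty) :
    ∃ y ∈ scarfSide u d k, ScarfDominant u (insert y d) :=
  (Set.exists_max_image _ (u k) (Set.toFinite _) hk).imp fun _ hy ↦
    ⟨hy.1, (hd.insert_iff hy.1).2 hy.2⟩

lemma eq_of_insert [DecidableEq V] (hd : ScarfDominant u d) (hu : Function.Injective (u k))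
    {y z : V} (hy : y ∈ scarfSide u d k) (hz : z ∈ scarfSide u d k)
    (hdy : ScarfDominant u (insert y d)) (hdz : ScarfDominant u (insert z d)) : y = z :=
  hu (((hd.insert_iff hz).1 hdz y hy).antisymm ((hd.insert_iff hy).1 hdy z hz))

lemma injOn_of_odd_card [Fintype V] [DecidableEq V] [DecidableEq I]
    [DecidablePred (ScarfDominant u)] (hr : ScarfDominant u r) {c : V → I} {J : Finset I}
    (hcard : #r = #J + 1)
    (hodd : Odd #{d | ((ScarfDominant u d ∧ #d = #J) ∧ d.image c = J) ∧ d ⊆ r}) :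
    Set.InjOn c r := by
  by_contra hc
  refine Nat.not_even_iff_odd.2 hodd ?_
  convert even_card_filter_powersetCard_image_eq hcard hc using 2
  ext d
  simp only [Finset.mem_filter, Finset.mem_univ, true_and, Finset.mem_powersetCard]
  exact ⟨fun h ↦ ⟨⟨h.2, h.1.1.2⟩, h.1.2⟩, fun h ↦ ⟨⟨⟨hr.anti h.1.1, h.1.2⟩, h.2⟩, h.1.1⟩⟩

lemma exists_worst (hσ : ScarfDominant u σ) (hu : ∀ i, Function.Injective (u i)) :
    ∃ ι : V → I, Set.InjOn ι σ ∧ ∀ x ∈ σ, ∀ y ∈ σ, x ≠ y → u (ι x) x < u (ι x) y := by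
  choose ι hι using hσ
  refine ⟨ι, fun x hx y hy hxy ↦ hu (ι x) ((hι x y hy).antisymm ?_), fun x _ y hy hxy ↦
    (hι x y hy).lt_of_ne ((hu _).ne hxy)⟩
  rw [hxy]
  exact hι y x hx

variable [Fintype I]

lemma exists_mem_scarfSide_erase [DecidableEq V] (hr : ScarfDominant u r)
    (hu : ∀ i, Function.Injective (u i)) (hcard : #r = Fintype.card I) {w : V} (hw : w ∈ r) :
    ∃ k, w ∈ scarfSide u (r.erase w) k := by
  obtain ⟨ι, hinj, hι⟩ := hr.exists_worst hu
  refine ⟨ι w, fun l hl ↦ ?_⟩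
  obtain ⟨x, hx, rfl⟩ := Finset.surjOn_of_injOn_of_card_le ι (t := Finset.univ)
    (fun _ _ ↦ Finset.mem_univ _) hinj (by rw [Finset.card_univ, hcard]) (Finset.mem_univ l)
  have hxw : x ≠ w := fun h ↦ hl (h ▸ rfl)
  exact ⟨x, Finset.mem_erase.2 ⟨hxw, hx⟩, hι x hx w hw hxw⟩

/-- The worst points of `d` exhaust `d`, so exactly two utilities `u i`, `u j` share one. -/
lemma exists_pair_disjoint_scarfSide (hd : ScarfDominant u d)
    (hu : ∀ i, Function.Injective (u i)) (hcard : #d + 1 = Fintype.card I) (hne : d.Nonempty) :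
    ∃ i j, i ≠ j ∧ ∀ k, Disjoint (d : Set V) (scarfSide u d k) ↔ k = i ∨ k = j := by
  classical
  obtain ⟨ι, hinj, hι⟩ := hd.exists_worst hu
  obtain ⟨i, hi⟩ : ∃ i, (d.image ι)ᶜ = {i} := by
    rw [← Finset.card_eq_one, Finset.card_compl, Finset.card_image_of_injOn hinj]
    omega
  have hιi {x : V} (hx : x ∈ d) : ι x ≠ i := by
    rintro rfl
    exact Finset.mem_compl.1 (hi ▸ Finset.mem_singleton_self _) (Finset.mem_image_of_mem ι hx)
  have hrange {l : I} (hl : l ≠ i) : ∃ x ∈ d, ι x = l := by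
    rw [← Finset.mem_image, ← Finset.notMem_compl, hi, Finset.mem_singleton]
    exact hl
  obtain ⟨x₀, hx₀, hmin⟩ := d.exists_min_image (u i) hne
  refine ⟨i, ι x₀, (hιi hx₀).symm, fun k ↦ ⟨fun hk ↦ ?_, fun hk ↦ ?_⟩⟩
  · refine or_iff_not_imp_left.2 fun hki ↦ ?_
    obtain ⟨x, hx, rfl⟩ := hrange hki
    by_contra hne
    have hxx₀ : x₀ ≠ x := fun h ↦ hne (h ▸ rfl)
    refine Set.disjoint_left.1 hk hx fun l hl ↦ ?_
    by_cases hli : l = i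
    · exact ⟨x₀, hx₀, hli ▸ (hmin x hx).lt_of_ne ((hu i).ne hxx₀)⟩
    · obtain ⟨y, hy, rfl⟩ := hrange hli
      exact ⟨y, hy, hι y hy x hx fun h ↦ hl (h ▸ rfl)⟩
  · have notMem_scarfSide {l : I} {x : V} (hlk : l ≠ k) (hl : ∀ y ∈ d, u l x ≤ u l y) :
        x ∉ scarfSide u d k := fun h ↦ by
      obtain ⟨y, hy, hyx⟩ := h l hlk
      exact hyx.not_ge (hl y hy)
    have worst_le {x : V} (hx : x ∈ d) (y : V) (hy : y ∈ d) : u (ι x) x ≤ u (ι x) y := by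
      rcases eq_or_ne x y with rfl | hxy
      exacts [le_rfl, (hι x hx y hy hxy).le]
    refine Set.disjoint_left.2 fun x hx ↦ ?_
    rcases hk with rfl | rfl
    · exact notMem_scarfSide (hιi hx) (worst_le hx)
    · rcases eq_or_ne x x₀ with rfl | hxx₀
      · exact notMem_scarfSide (hιi hx₀).symm hmin
      · exact notMem_scarfSide (fun h ↦ hxx₀ (hinj hx hx₀ h)) (worst_le hx)

lemma exists_pair_insert_iff [DecidableEq V] [Finite V] (hd : ScarfDominant u d)
    (hu : ∀ i, Function.Injective (u i)) (hcard : #d + 1 = Fintype.card I) (hne : d.Nonempty)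
    (hside : ∀ k, (scarfSide u d k).Nonempty) :
    ∃ y z, y ≠ z ∧ y ∉ d ∧ z ∉ d ∧ ∀ w ∉ d, ScarfDominant u (insert w d) ↔ w = y ∨ w = z := by
  obtain ⟨i, j, hij, hsides⟩ := hd.exists_pair_disjoint_scarfSide hu hcard hne
  obtain ⟨y, hy, hdy⟩ := hd.exists_insert (hside i)
  obtain ⟨z, hz, hdz⟩ := hd.exists_insert (hside j)
  refine ⟨y, z, (hd.disjoint_scarfSide hij).ne_of_mem hy hz,
    fun h ↦ Set.disjoint_left.1 ((hsides i).2 (.inl rfl)) h hy,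
    fun h ↦ Set.disjoint_left.1 ((hsides j).2 (.inr rfl)) h hz,
    fun w hw ↦ ⟨fun hdw ↦ ?_, ?_⟩⟩
  · obtain ⟨k, hk⟩ := hdw.exists_mem_scarfSide_erase hu
      (by rw [Finset.card_insert_of_notMem hw, hcard]) (Finset.mem_insert_self w d)
    rw [Finset.erase_insert hw] at hk
    have hdisj : Disjoint (d : Set V) (scarfSide u d k) := Set.disjoint_left.2 fun x hx hxk ↦ by
      -- A candidate `x ∈ d` is already worst, so `w` would tie with it.
      have hwx := (hd.insert_iff hk).1 hdw x hxk
      exact hw (hu k (hwx.antisymm (hd.le_of_mem_scarfSide hk hx)) ▸ hx)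
    rcases (hsides k).1 hdisj with rfl | rfl
    · exact .inl (hd.eq_of_insert (hu _) hk hy hdw hdy)
    · exact .inr (hd.eq_of_insert (hu _) hk hz hdw hdz)
  · rintro (rfl | rfl) <;> assumption

end ScarfDominant

/-- A system of *slack points*: `s i` is the worst point under `u i`, while under `u i` every other
slack point beats all points that are not slack. They play the role of the vertices of the simplex
in Sperner's lemma. -/
structure IsScarfSlack (u : I → V → α) (s : I → V) : Prop where
  le : ∀ i v, u i (s i) ≤ u i v
  lt : ∀ i j v, j ≠ i → v ∉ Set.range s → u i v < u i (s j)

namespace IsScarfSlack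

variable {s : I → V} [Fintype I] [DecidableEq I] [DecidableEq V]

lemma scarfSide_nonempty (hs : IsScarfSlack u s) (hu : ∀ i, Function.Injective (u i))
    (hinj : Function.Injective s) (hcard : #d + 1 = Fintype.card I)
    (hd : ∀ l, d ≠ (Finset.univ.erase l).image s) (k : I) : (scarfSide u d k).Nonempty := by
  refine ⟨s k, fun l hlk ↦ ?_⟩
  by_contra! hle
  have hsub : d ⊆ (Finset.univ.erase l).image s := fun x hx ↦ by
    obtain ⟨a, rfl⟩ : x ∈ Set.range s := by
      by_contra hxs
      exact (hs.lt l k x hlk.symm hxs).not_ge (hle x hx)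
    refine Finset.mem_image_of_mem s (Finset.mem_erase.2 ⟨?_, Finset.mem_univ a⟩)
    rintro rfl
    exact hlk (hinj (hu a ((hs.le a _).antisymm (hle _ hx))))
  refine hd l (Finset.eq_of_subset_of_card_le hsub ?_)
  rw [Finset.card_image_of_injective _ hinj, Finset.card_erase_of_mem (Finset.mem_univ l),
    Finset.card_univ]
  omega

lemma scarfDominant_image_erase (hs : IsScarfSlack u s) (i₀ : I) :
    ScarfDominant u ((Finset.univ.erase i₀).image s) := fun t ↦ by
  by_cases ht : t ∈ Set.range s
  · obtain ⟨k, rfl⟩ := ht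
    exact ⟨k, fun x _ ↦ hs.le k x⟩
  · refine ⟨i₀, fun x hx ↦ ?_⟩
    obtain ⟨k, hk, rfl⟩ := Finset.mem_image.1 hx
    exact (hs.lt i₀ k t (Finset.ne_of_mem_erase hk) ht).le

lemma exists_insert_image_erase_iff [Finite V] (hs : IsScarfSlack u s)
    (hu : ∀ i, Function.Injective (u i)) (hinj : Function.Injective s)
    (hord : ∃ v, v ∉ Set.range s) (i₀ : I) :
    ∃ y ∉ (Finset.univ.erase i₀).image s, ∀ w ∉ (Finset.univ.erase i₀).image s,
      ScarfDominant u (insert w ((Finset.univ.erase i₀).image s)) ↔ w = y := by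
  obtain ⟨v, hv⟩ := hord
  set d := (Finset.univ.erase i₀).image s with hd_def
  have hd : ScarfDominant u d := hs.scarfDominant_image_erase i₀
  have mem_d {k : I} : s k ∈ d ↔ k ≠ i₀ := by simp [hd_def, hinj.eq_iff]
  have slack_notMem {a k : I} (hak : a ≠ k) : s a ∉ scarfSide u d k := fun h ↦ by
    obtain ⟨x, -, hx⟩ := h a hak
    exact hx.not_ge (hs.le a x)
  have hside : v ∈ scarfSide u d i₀ := fun l hl ↦
    ⟨s l, mem_d.2 hl, (hs.le l v).lt_of_ne ((hu l).ne fun h ↦ hv ⟨l, h⟩)⟩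
  obtain ⟨y, hy, hdy⟩ := hd.exists_insert ⟨v, hside⟩
  refine ⟨y, fun hyd ↦ ?_, fun w hw ↦ ⟨fun hdw ↦ ?_, fun h ↦ h ▸ hdy⟩⟩
  · obtain ⟨a, ha, rfl⟩ := Finset.mem_image.1 hyd
    exact slack_notMem (Finset.ne_of_mem_erase ha) hy
  · have hcard : #(insert w d) = Fintype.card I := by
      rw [Finset.card_insert_of_notMem hw, Finset.card_image_of_injective _ hinj,
        Finset.card_erase_add_one (Finset.mem_univ i₀), Finset.card_univ]
    obtain ⟨k, hk⟩ := hdw.exists_mem_scarfSide_erase hu hcard (Finset.mem_insert_self w d)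
    rw [Finset.erase_insert hw] at hk
    obtain rfl : k = i₀ := by
      by_contra hki
      obtain ⟨x, hx, hxw⟩ := hk i₀ (Ne.symm hki)
      obtain ⟨b, hb, rfl⟩ := Finset.mem_image.1 hx
      obtain ⟨a, rfl⟩ : w ∈ Set.range s := by
        by_contra hws
        exact hxw.not_gt (hs.lt i₀ b w (Finset.ne_of_mem_erase hb) hws)
      rcases eq_or_ne a k with rfl | hak
      exacts [hw (mem_d.2 hki), slack_notMem hak hk]
    exact hd.eq_of_insert (hu _) hk hy hdw hdy

lemma exists_pair_insert_iff [Finite V] (hs : IsScarfSlack u s)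
    (hu : ∀ i, Function.Injective (u i)) {c : V → I} (hcs : Function.LeftInverse c s)
    (hd : ScarfDominant u d) (hcard : #d + 1 = Fintype.card I) {i₀ : I}
    (himg : d.image c = Finset.univ.erase i₀) (hne : d ≠ (Finset.univ.erase i₀).image s) :
    ∃ y z, y ≠ z ∧ y ∉ d ∧ z ∉ d ∧ ∀ w ∉ d, ScarfDominant u (insert w d) ↔ w = y ∨ w = z := by
  have hne_slack (l : I) : d ≠ (Finset.univ.erase l).image s := fun h ↦ hne <| by
    rw [h, finset_image_image_of_leftInverse hcs] at himg
    rw [h, himg]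
  have hdne : d.Nonempty := Finset.nonempty_iff_ne_empty.2 fun h ↦ hne <| by
    rw [← himg, h, Finset.image_empty, Finset.image_empty]
  exact hd.exists_pair_insert_iff hu hcard hdne
    (hs.scarfSide_nonempty hu hcs.injective hcard hne_slack)

end IsScarfSlack

/-- **Scarf's lemma** in the presence of slack points. Dominant sets of cardinality `|I|` are the
rooms and those of cardinality `|I| - 1` whose colors omit exactly `i₀` are the doors; the set of
slack points `s k`, `k ≠ i₀`, is the only door leading outside. -/
theorem exists_scarfDominant_image_eq_univ [Finite V] [Fintype I] [Nonempty I] [DecidableEq I]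
    {s : I → V} (hs : IsScarfSlack u s) (hu : ∀ i, Function.Injective (u i)) {c : V → I}
    (hcs : Function.LeftInverse c s) (hord : ∃ v, v ∉ Set.range s) :
    ∃ σ, ScarfDominant u σ ∧ σ.image c = Finset.univ := by
  classical
  have := Fintype.ofFinite V
  obtain ⟨i₀⟩ := ‹Nonempty I›
  set J : Finset I := Finset.univ.erase i₀
  have hJcard : #J + 1 = Fintype.card I := by
    rw [Finset.card_erase_add_one (Finset.mem_univ i₀), Finset.card_univ]
  let rooms : Finset (Finset V) := {r | ScarfDominant u r ∧ #r = #J + 1}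
  let doors : Finset (Finset V) := {d | (ScarfDominant u d ∧ #d = #J) ∧ d.image c = J}
  have card_rooms {d A : Finset V} (hd : #d = #J) (hA : Disjoint A d)
      (h : ∀ w ∉ d, ScarfDominant u (insert w d) ↔ w ∈ A) :
      #(rooms.bipartiteAbove (· ⊆ ·) d) = #A := by
    rw [Finset.bipartiteAbove, Finset.filter_filter, ← hd]
    exact card_filter_superset_eq hA h
  have hd₀card : #(J.image s) = #J := Finset.card_image_of_injective J hcs.injective
  have hd₀ : J.image s ∈ doors := Finset.mem_filter.2 ⟨Finset.mem_univ _,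
    ⟨hs.scarfDominant_image_erase i₀, hd₀card⟩, finset_image_image_of_leftInverse hcs J⟩
  have one_room : Odd #(rooms.bipartiteAbove (· ⊆ ·) (J.image s)) := by
    obtain ⟨y, hy, hiff⟩ := hs.exists_insert_image_erase_iff hu hcs.injective hord i₀
    rw [card_rooms (A := {y}) hd₀card (Finset.disjoint_singleton_left.2 hy)
      fun w hw ↦ (hiff w hw).trans Finset.mem_singleton.symm]
    exact odd_one
  have two_rooms : ∀ d ∈ doors, d ≠ J.image s → Even #(rooms.bipartiteAbove (· ⊆ ·) d) :=
    fun d hd hne ↦ by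
      obtain ⟨⟨hddom, hdcard⟩, himg⟩ := (Finset.mem_filter.1 hd).2
      obtain ⟨y, z, hyz, hy, hz, hiff⟩ :=
        hs.exists_pair_insert_iff hu hcs hddom (by rw [hdcard, hJcard]) himg hne
      rw [card_rooms (A := {y, z}) hdcard (by simp [hy, hz]) (by simpa using hiff),
        Finset.card_pair hyz]
      exact even_two
  obtain ⟨r, hr, hodd⟩ := exists_odd_card_bipartiteBelow (· ⊆ ·) hd₀ one_room two_rooms
  obtain ⟨hrdom, hrcard⟩ := (Finset.mem_filter.1 hr).2
  rw [Finset.bipartiteBelow, Finset.filter_filter] at hodd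
  refine ⟨r, hrdom, Finset.eq_univ_of_card _ ?_⟩
  rw [Finset.card_image_of_injOn (hrdom.injOn_of_odd_card hrcard hodd), hrcard, hJcard]

/-- **Scarf's lemma**, obtained by adjoining slack points and breaking ties by an enumeration. -/
theorem exists_dominant_subset_image [Finite V] [Nonempty V] [Finite I] [Nonempty I]
    (u : I → V → α) (c : V → I) :
    ∃ (σ : Finset V) (C : Finset I), (∀ t, ∃ i ∈ C, ∀ x ∈ σ, u i t ≤ u i x) ∧
      ∀ i ∈ C, ∃ x ∈ σ, c x = i := by
  classical
  have := Fintype.ofFinite V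
  have := Fintype.ofFinite I
  let e := Fintype.equivFin (V ⊕ I)
  let a (i : I) : V ⊕ I → WithBot (WithTop α) :=
    Sum.elim (fun x ↦ ((u i x : WithTop α) : WithBot (WithTop α)))
      fun j ↦ if j = i then ⊥ else ((⊤ : WithTop α) : WithBot (WithTop α))
  let U (i : I) (v : V ⊕ I) : WithBot (WithTop α) ×ₗ Fin (Fintype.card (V ⊕ I)) :=
    toLex (a i v, e v)
  have lt_of_lt {i : I} {v w : V ⊕ I} (h : a i v < a i w) : U i v < U i w :=
    Prod.Lex.toLex_lt_toLex.2 (.inl h)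
  have le_of_le {i : I} {v w : V ⊕ I} (h : U i v ≤ U i w) : a i v ≤ a i w :=
    not_lt.1 fun h' ↦ (lt_of_lt h').not_ge h
  have hslack : IsScarfSlack U Sum.inr := by
    refine ⟨fun i v ↦ ?_, fun i j v hji hv ↦ ?_⟩
    · rcases eq_or_ne v (.inr i) with rfl | hv
      · rfl
      · refine (lt_of_lt ?_).le
        rcases v with x | j
        · simp [a]
        · simp [a, show j ≠ i from fun h ↦ hv (h ▸ rfl)]
    · rcases v with x | k
      · refine lt_of_lt ?_
        simp only [a, Sum.elim_inl, Sum.elim_inr, if_neg hji]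
        exact WithBot.coe_lt_coe.2 (WithTop.coe_lt_top _)
      · exact absurd ⟨k, rfl⟩ hv
  have hU (i : I) : Function.Injective (U i) := fun v w h ↦
    e.injective (congrArg Prod.snd (toLex.injective h))
  obtain ⟨σ, hσ, hσc⟩ := exists_scarfDominant_image_eq_univ hslack hU (c := Sum.elim c id)
    (fun _ ↦ rfl) ⟨.inl (Classical.arbitrary V), by simp⟩
  refine ⟨σ.toLeft, σ.toRightᶜ, fun t ↦ ?_, fun i hi ↦ ?_⟩
  · obtain ⟨i, hi⟩ := hσ (.inl t)
    refine ⟨i, Finset.mem_compl.2 fun hiσ ↦ ?_, fun x hx ↦ ?_⟩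
    · simpa [a] using le_of_le (hi _ (Finset.mem_toRight.1 hiσ))
    · simpa [a] using le_of_le (hi _ (Finset.mem_toLeft.1 hx))
  · obtain ⟨v, hv, hvi⟩ := Finset.mem_image.1 (hσc ▸ Finset.mem_univ i)
    rcases v with x | j
    · exact ⟨x, Finset.mem_toLeft.2 hv, hvi⟩
    · obtain rfl : j = i := hvi
      exact absurd (Finset.mem_toRight.2 hv) (Finset.mem_compl.1 hi)

end Scarf

lemma exists_forall_mem_closure_of_isCompact {X : Type*} [TopologicalSpace X] {K : Set X}
    (hK : IsCompact K) {A : ℝ → Set X} (hA : Monotone A) (h : ∀ ε > 0, (K ∩ A ε).Nonempty) :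
    ∃ z ∈ K, ∀ ε > 0, z ∈ closure (A ε) := by
  by_contra! hcon
  have hempty : (K ∩ ⋂ ε : Ioi (0 : ℝ), closure (A ε)) = ∅ := by
    refine Set.eq_empty_of_forall_notMem fun z ⟨hzK, hz⟩ ↦ ?_
    obtain ⟨ε, hε, hzε⟩ := hcon z hzK
    exact hzε (Set.mem_iInter.1 hz ⟨ε, hε⟩)
  have : Nonempty (Ioi (0 : ℝ)) := ⟨⟨1, Set.mem_Ioi.2 one_pos⟩⟩
  obtain ⟨ε, hε⟩ := hK.elim_directed_family_closed _ (fun _ ↦ isClosed_closure) hempty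
    (Monotone.directed_ge fun _ _ h ↦ closure_mono (hA h))
  exact ((h ε ε.2).mono (Set.inter_subset_inter_right K subset_closure)).ne_empty hε

section Brouwer

variable {I : Type*} [Fintype I]

lemma one_sub_sum_le_card_mul {C : Finset I} (hC : C.Nonempty) {m : I → ℝ} (hm : ∀ i, 0 ≤ m i)
    (hm1 : ∑ i ∈ C, m i ≤ 1) {ε : ℝ}
    (h : ∀ p ∈ stdSimplex ℝ I, ∃ i ∈ C, p i ≤ m i + ε) : 1 - ∑ i ∈ C, m i ≤ #C * ε := by
  classical
  have hC0 : (0 : ℝ) < #C := Nat.cast_pos.2 hC.card_pos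
  obtain ⟨i, hi, hle⟩ := h (fun i ↦ if i ∈ C then m i + (1 - ∑ i ∈ C, m i) / #C else 0) <| by
    refine ⟨fun i ↦ ?_, ?_⟩
    · have := div_nonneg (sub_nonneg.2 hm1) hC0.le
      dsimp only
      split_ifs
      exacts [add_nonneg (hm i) this, le_rfl]
    · rw [Finset.sum_ite_mem, Finset.univ_inter, Finset.sum_add_distrib, Finset.sum_const,
        nsmul_eq_mul, mul_div_cancel₀ _ hC0.ne', add_sub_cancel]
  rw [if_pos hi, add_le_add_iff_left, div_le_iff₀ hC0] at hle
  rwa [mul_comm]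

lemma sub_le_one_sub_sum {x : I → ℝ} (hx : x ∈ stdSimplex ℝ I) {m : I → ℝ} (hm : m ≤ x) (i : I) :
    x i - m i ≤ 1 - ∑ j, m j := by
  rw [← hx.2, ← Finset.sum_sub_distrib]
  exact Finset.single_le_sum (f := fun j ↦ x j - m j) (fun j _ ↦ sub_nonneg.2 (hm j))
    (Finset.mem_univ i)

variable [Nonempty I]

/-- The role of a fully colored small cell in Sperner's lemma is played by `σ`. The coordinates
outside `C`, which need no color, almost vanish on `σ`. -/
lemma exists_mem_Icc_forall_exists_color {V : Type*} [Finite V] {x : V → I → ℝ}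
    (hx : ∀ v, x v ∈ stdSimplex ℝ I) {ε : ℝ} (hε : 0 ≤ ε)
    (hnet : ∀ p ∈ stdSimplex ℝ I, ∃ v, dist p (x v) ≤ ε) (c : V → I) :
    ∃ (σ : Finset V) (C : Finset I) (m : I → ℝ), σ.Nonempty ∧ (∀ i ∈ C, ∃ v ∈ σ, c v = i) ∧
      (∀ i ∉ C, m i = 0) ∧ ∀ v ∈ σ, x v ∈ Icc m fun i ↦ m i + Fintype.card I * ε := by
  classical
  obtain ⟨v₀, -⟩ := hnet _ (single_mem_stdSimplex ℝ (Classical.arbitrary I))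
  have : Nonempty V := ⟨v₀⟩
  obtain ⟨σ, C, hdom, hcol⟩ := exists_dominant_subset_image (fun i v ↦ x v i) c
  have hC : C.Nonempty := (hdom v₀).imp fun _ h ↦ h.1
  have hσ : σ.Nonempty := hC.elim fun i hi ↦ (hcol i hi).imp fun _ h ↦ h.1
  choose worst hworst hle using fun i ↦ σ.exists_min_image (fun v ↦ x v i) hσ
  let m (i : I) : ℝ := if i ∈ C then x (worst i) i else 0
  have hm : ∀ v ∈ σ, m ≤ x v := fun v hv i ↦ by
    dsimp only [m]
    split_ifs
    exacts [hle i v hv, (hx v).1 i]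
  have hsum : ∑ i, m i = ∑ i ∈ C, m i :=
    (Finset.sum_subset (Finset.subset_univ C) fun i _ hi ↦ if_neg hi).symm
  have hgap : 1 - ∑ i, m i ≤ Fintype.card I * ε := by
    obtain ⟨v, hv⟩ := hσ
    rw [hsum]
    refine (one_sub_sum_le_card_mul (ε := ε) hC (fun i ↦ ?_) ?_ fun p hp ↦ ?_).trans ?_
    · dsimp only [m]
      split_ifs
      exacts [(hx _).1 i, le_rfl]
    · rw [← hsum, ← (hx v).2]
      exact Finset.sum_le_sum fun i _ ↦ hm v hv i
    · obtain ⟨t, ht⟩ := hnet p hp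
      obtain ⟨i, hi, hdomi⟩ := hdom t
      refine ⟨i, hi, ?_⟩
      have hti : x t i ≤ m i := (hdomi _ (hworst i)).trans_eq (if_pos hi).symm
      linarith [le_abs_self (p i - x t i), (dist_le_pi_dist p (x t) i).trans ht,
        Real.dist_eq (p i) (x t i)]
    · gcongr
      exact Finset.card_le_univ C
  exact ⟨σ, C, m, hσ, hcol, fun i hi ↦ if_neg hi, fun v hv ↦ ⟨hm v hv, fun i ↦ by
    linarith [sub_le_one_sub_sum (hx v) (hm v hv) i]⟩⟩

lemma exists_forall_exists_dist_le_of_mapsTo_stdSimplex {f : (I → ℝ) → I → ℝ}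
    (hf : MapsTo f (stdSimplex ℝ I) (stdSimplex ℝ I)) {δ : ℝ} (hδ : 0 < δ) :
    ∃ x ∈ stdSimplex ℝ I, ∀ i, ∃ y ∈ stdSimplex ℝ I, dist x y ≤ δ ∧ y i ≤ f y i + δ := by
  have hI : (0 : ℝ) < Fintype.card I := Nat.cast_pos.2 Fintype.card_pos
  have hε : 0 < δ / Fintype.card I := by positivity
  obtain ⟨N, hN, hNfin, hcover⟩ := (isCompact_stdSimplex ℝ I).finite_cover_balls hε
  have : Finite N := hNfin
  have hcolor (v : N) : ∃ i, (v : I → ℝ) i ≤ f v i := by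
    simpa using Finset.exists_le_of_sum_le Finset.univ_nonempty
      ((hN v.2).2.trans (hf (hN v.2)).2.symm).le
  choose c hc using hcolor
  obtain ⟨σ, C, m, ⟨v, hv⟩, hcol, hm, hσ⟩ := exists_mem_Icc_forall_exists_color
    (fun v : N ↦ hN v.2) hε.le (fun p hp ↦ by
      obtain ⟨v, hv, hpv⟩ := Set.mem_iUnion₂.1 (hcover hp)
      exact ⟨⟨v, hv⟩, (mem_ball.1 hpv).le⟩) c
  rw [mul_div_cancel₀ _ hI.ne'] at hσ
  refine ⟨v, hN v.2, fun i ↦ ?_⟩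
  by_cases hi : i ∈ C
  · obtain ⟨y, hy, rfl⟩ := hcol i hi
    refine ⟨y, hN y.2, ?_, (hc y).trans (le_add_of_nonneg_right hδ.le)⟩
    refine (Real.dist_le_of_mem_pi_Icc (hσ v hv) (hσ y hy)).trans ?_
    rw [dist_pi_le_iff hδ.le]
    simp [abs_of_pos hδ]
  · refine ⟨v, hN v.2, by simpa using hδ.le, ?_⟩
    have := (hσ v hv).2 i
    linarith [hm i hi, (hf (hN v.2)).1 i]

theorem brouwer_stdSimplex {f : (I → ℝ) → I → ℝ}
    (hf : MapsTo f (stdSimplex ℝ I) (stdSimplex ℝ I)) (hcont : ContinuousOn f (stdSimplex ℝ I)) :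
    ∃ x ∈ stdSimplex ℝ I, f x = x := by
  let A (ε : ℝ) : Set (I → ℝ) :=
    {x | ∀ i, ∃ y ∈ stdSimplex ℝ I, dist x y ≤ ε ∧ y i ≤ f y i + ε}
  have hA : Monotone A := fun ε δ h x hx i ↦ (hx i).imp fun y hy ↦
    ⟨hy.1, hy.2.1.trans h, hy.2.2.trans (by gcongr)⟩
  obtain ⟨z, hz, hzA⟩ := exists_forall_mem_closure_of_isCompact (isCompact_stdSimplex ℝ I) hA
    fun ε hε ↦ exists_forall_exists_dist_le_of_mapsTo_stdSimplex hf hε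
  have hle (i : I) : z i ≤ f z i := by
    by_contra! hlt
    obtain ⟨η, hη, hηlt⟩ : ∃ η > 0, f z i + η < z i :=
      ⟨(z i - f z i) / 2, by linarith, by linarith⟩
    have hev : ∀ᶠ y in 𝓝[stdSimplex ℝ I] z, f y i + η < y i :=
      (((continuous_apply i).continuousAt.comp_continuousWithinAt (hcont z hz)).add
        continuousWithinAt_const).eventually_lt (continuous_apply i).continuousWithinAt hηlt
    obtain ⟨δ, hδ, hball⟩ := Metric.mem_nhdsWithin_iff.1 hev
    obtain ⟨x, hx, hzx⟩ := Metric.mem_closure_iff.1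
      (hzA (min (δ / 2) η) (by positivity)) (δ / 2) (by positivity)
    obtain ⟨y, hy, hxy, hyf⟩ := hx i
    have hzy : dist y z < δ := by
      linarith [dist_triangle_left y z x, dist_comm x z, min_le_left (δ / 2) η]
    have hyη : f y i + η < y i := hball ⟨hzy, hy⟩
    linarith [min_le_right (δ / 2) η]
  refine ⟨z, hz, funext fun i ↦ ((Finset.sum_eq_sum_iff_of_le fun i _ ↦ hle i).1 ?_ i
    (Finset.mem_univ i)).symm⟩
  rw [hz.2, (hf hz).2]

lemma exists_mem_stdSimplex_forall_eq_zero {ψ : (I → ℝ) → I → ℝ}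
    (hcont : ContinuousOn ψ (stdSimplex ℝ I)) (hnonneg : ∀ p ∈ stdSimplex ℝ I, 0 ≤ ψ p)
    (hpos : ∀ p ∈ stdSimplex ℝ I, ∃ i, 0 < ψ p i) :
    ∃ p ∈ stdSimplex ℝ I, ∀ i, ψ p i = 0 → p i = 0 := by
  have hsum : ∀ p ∈ stdSimplex ℝ I, 0 < ∑ i, ψ p i := fun p hp ↦
    Finset.sum_pos' (fun i _ ↦ hnonneg p hp i) ((hpos p hp).imp fun i hi ↦ ⟨Finset.mem_univ i, hi⟩)
  obtain ⟨p, hp, hfix⟩ := brouwer_stdSimplex (f := fun p ↦ (∑ i, ψ p i)⁻¹ • ψ p)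
    (fun p hp ↦ ⟨fun i ↦ mul_nonneg (inv_nonneg.2 (hsum p hp).le) (hnonneg p hp i), by
      simp only [Pi.smul_apply, smul_eq_mul, ← Finset.mul_sum, inv_mul_cancel₀ (hsum p hp).ne']⟩)
    (((continuousOn_finsetSum _ fun i _ ↦ (continuous_apply i).comp_continuousOn hcont).inv₀
      fun p hp ↦ (hsum p hp).ne').smul hcont)
  refine ⟨p, hp, fun i hi ↦ ?_⟩
  rw [← hfix, Pi.smul_apply, hi, smul_zero]

end Brouwer

section ClosedConvexEnvelope

variable {X : Type*} [NormedAddCommGroup X] [NormedSpace ℝ X] {C U : Set X} {F G T : X → X}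
  {x z : X}

lemma mem_ccEnvelope_iff :
    z ∈ ccEnvelope C F x ↔
      ∀ A : Set X, IsClosed A → Convex ℝ A → (∀ᶠ y in 𝓝[C] x, F y ∈ A) → z ∈ A := by
  refine ⟨fun hz A hAcl hA hev ↦ ?_, fun h ↦ Set.mem_iInter₂.2 fun ε hε ↦ ?_⟩
  · obtain ⟨ε, hε, hball⟩ := (nhdsWithin_hasBasis nhds_basis_closedBall C).mem_iff.1 hev
    exact closure_minimal (convexHull_min (Set.image_subset_iff.2 hball) hA) hAcl
      (Set.mem_iInter₂.1 hz ε hε)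
  · refine h _ isClosed_closure (convex_convexHull ℝ _).closure ?_
    filter_upwards [inter_mem_nhdsWithin C (closedBall_mem_nhds x hε)] with y hy
    exact subset_closure (subset_convexHull ℝ _ (Set.mem_image_of_mem F hy.symm))

lemma ccEnvelope_mono (h : C ⊆ U) : ccEnvelope C F x ⊆ ccEnvelope U F x := fun _ hz ↦
  mem_ccEnvelope_iff.2 fun A hAcl hA hev ↦
    mem_ccEnvelope_iff.1 hz A hAcl hA (hev.filter_mono (nhdsWithin_mono x h))

lemma ccEnvelope_const_subset (v : X) : ccEnvelope C (fun _ ↦ v) x ⊆ {v} := fun _ hz ↦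
  mem_ccEnvelope_iff.1 hz {v} isClosed_singleton (convex_singleton v) (.of_forall fun _ ↦ rfl)

lemma ccEnvelope_comp_subset {g : X → X} (hg : ContinuousWithinAt g C x) (hgU : MapsTo g C U) :
    ccEnvelope C (T ∘ g) x ⊆ ccEnvelope U T (g x) := fun _ hz ↦
  mem_ccEnvelope_iff.2 fun A hAcl hA hev ↦ mem_ccEnvelope_iff.1 hz A hAcl hA <|
    (hg.tendsto_nhdsWithin hgU).eventually hev

lemma ccEnvelope_subset_of_tendsto_sub (h : Tendsto (fun y ↦ F y - G y) (𝓝[C] x) (𝓝 0)) :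
    ccEnvelope C F x ⊆ ccEnvelope C G x := fun z hz ↦ by
  refine mem_ccEnvelope_iff.2 fun A hAcl hA hev ↦ ?_
  rw [← hAcl.closure_eq, closure_eq_iInter_cthickening]
  refine Set.mem_iInter₂.2 fun δ hδ ↦
    mem_ccEnvelope_iff.1 hz _ isClosed_cthickening (hA.cthickening δ) ?_
  filter_upwards [hev, h.eventually (closedBall_mem_nhds 0 hδ)] with y hy hFG
  refine mem_cthickening_of_dist_le _ _ δ A hy ?_
  rwa [dist_eq_norm, ← mem_closedBall_zero_iff]

lemma inv_smul_sub_mem_ccEnvelope {a : ℝ} (ha : a ≠ 0) {v : X}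
    (hz : z ∈ ccEnvelope C (fun y ↦ a • G y + v) x) : a⁻¹ • (z - v) ∈ ccEnvelope C G x := by
  refine mem_ccEnvelope_iff.2 fun A hAcl hA hev ↦ ?_
  let e : X →ᵃ[ℝ] X := a⁻¹ • (AffineMap.id ℝ X - AffineMap.const ℝ X v)
  have he : Continuous e := (continuous_id.sub continuous_const).const_smul a⁻¹
  refine mem_ccEnvelope_iff.1 hz (e ⁻¹' A) (hAcl.preimage he) (hA.affine_preimage e) ?_
  filter_upwards [hev] with y hy
  simpa [e, inv_smul_smul₀ ha] using hy

lemma exists_mem_ccEnvelope_eq_smul_add {a : X → ℝ} {v : X → X} (ha : ContinuousWithinAt a C x)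
    (hv : ContinuousWithinAt v C x) (hG : Bornology.IsBounded (G '' C))
    (hz : z ∈ ccEnvelope C (fun y ↦ a y • G y + v y) x) :
    ∃ t, (a x ≠ 0 → t ∈ ccEnvelope C G x) ∧ z = a x • t + v x := by
  have hz' : z ∈ ccEnvelope C (fun y ↦ a x • G y + v x) x := by
    refine ccEnvelope_subset_of_tendsto_sub ?_ hz
    have hsub : Tendsto (fun y ↦ (a y - a x) • G y) (𝓝[C] x) (𝓝 0) := by
      obtain ⟨M, hM⟩ := hG.exists_norm_le
      refine (tendsto_sub_nhds_zero_iff.2 ha.tendsto).zero_smul_isBoundedUnder_le ⟨M, ?_⟩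
      exact eventually_map.2 (eventually_mem_nhdsWithin.mono fun y hy ↦
        hM _ (Set.mem_image_of_mem G hy))
    convert hsub.add (tendsto_sub_nhds_zero_iff.2 hv.tendsto) using 2
    · module
    · rw [add_zero]
  by_cases hax : a x = 0
  · refine ⟨0, fun h ↦ absurd hax h, ?_⟩
    simp only [hax, zero_smul, zero_add] at hz' ⊢
    exact ccEnvelope_const_subset _ hz'
  · refine ⟨_, fun _ ↦ inv_smul_sub_mem_ccEnvelope hax hz', ?_⟩
    rw [smul_inv_smul₀ hax, sub_add_cancel]

end ClosedConvexEnvelope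

section Schauder

variable {X : Type*} [NormedAddCommGroup X] [NormedSpace ℝ X] {C K : Set X} {F : X → X}

lemma exists_mem_convexHull_image_of_isCompact (hC : IsCompact C) (hconv : Convex ℝ C)
    (hne : C.Nonempty) (hF : MapsTo F C C) {ε : ℝ} (hε : 0 < ε) :
    ∃ x ∈ C, x ∈ convexHull ℝ (F '' (closedBall x ε ∩ C)) := by
  obtain ⟨N, hNC, hNfin, hcover⟩ := hC.finite_cover_balls hε
  have : Fintype N := hNfin.fintype
  have exists_near {x : X} (hx : x ∈ C) : ∃ n : N, dist x n < ε := by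
    obtain ⟨n, hn, hxn⟩ := Set.mem_iUnion₂.1 (hcover hx)
    exact ⟨⟨n, hn⟩, hxn⟩
  have : Nonempty N := hne.elim fun x hx ↦ (exists_near hx).nonempty
  let Φ (p : N → ℝ) : X := ∑ n, p n • F n
  have hΦ {p : N → ℝ} (hp : p ∈ stdSimplex ℝ N) : Φ p ∈ C :=
    hconv.sum_mem (fun n _ ↦ hp.1 n) hp.2 fun n _ ↦ hF (hNC n.2)
  obtain ⟨p, hp, hp0⟩ := exists_mem_stdSimplex_forall_eq_zero
    (ψ := fun p n ↦ max 0 (ε - dist (Φ p) n)) (by fun_prop)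
    (fun p _ n ↦ le_max_left _ _)
    (fun p hp ↦ (exists_near (hΦ hp)).imp fun n hn ↦ lt_max_of_lt_right (sub_pos.2 hn))
  refine ⟨Φ p, hΦ hp, ?_⟩
  simp only [Φ, ← finsum_eq_sum_of_fintype]
  refine (convex_convexHull ℝ _).finsum_mem hp.1 ((finsum_eq_sum_of_fintype p).trans hp.2)
    fun n hn ↦ subset_convexHull ℝ _ (Set.mem_image_of_mem F ⟨?_, hNC n.2⟩)
  rw [finsum_eq_sum_of_fintype, mem_closedBall']
  by_contra! hlt
  exact hn (hp0 n (max_eq_left (sub_nonpos.2 hlt.le)))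

theorem exists_mem_ccEnvelope_of_isCompact (hC : IsCompact C) (hconv : Convex ℝ C)
    (hne : C.Nonempty) (hF : MapsTo F C C) : ∃ x ∈ C, x ∈ ccEnvelope C F x := by
  let A (ε : ℝ) : Set X := {x | x ∈ convexHull ℝ (F '' (closedBall x ε ∩ C))}
  have hA : Monotone A := fun ε δ h x hx ↦ convexHull_mono (by gcongr) hx
  obtain ⟨z, hz, hzA⟩ := exists_forall_mem_closure_of_isCompact hC hA fun ε hε ↦
    exists_mem_convexHull_image_of_isCompact hC hconv hne hF hε
  refine ⟨z, hz, Set.mem_iInter₂.2 fun ε hε ↦ Metric.mem_closure_iff.2 fun δ hδ ↦ ?_⟩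
  obtain ⟨x, hx, hzx⟩ := Metric.mem_closure_iff.1 (hzA (ε / 2) (half_pos hε))
    (min (ε / 2) δ) (by positivity)
  refine ⟨x, ?_, hzx.trans_le (min_le_right _ _)⟩
  have hball : closedBall x (ε / 2) ⊆ closedBall z ε := closedBall_subset_closedBall' <| by
    linarith [min_le_left (ε / 2) δ, dist_comm x z]
  exact convexHull_mono (Set.image_mono (Set.inter_subset_inter_left C hball)) hx

theorem exists_mem_ccEnvelope_of_isCompact_closure_image [CompleteSpace X] (hKcl : IsClosed K)
    (hK : Convex ℝ K) (hne : K.Nonempty) (hF : MapsTo F K K)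
    (hcomp : IsCompact (closure (F '' K))) : ∃ x ∈ K, x ∈ ccEnvelope K F x := by
  let C : Set X := closure (convexHull ℝ (F '' K))
  have hCK : C ⊆ K := closure_minimal (convexHull_min hF.image_subset hK) hKcl
  have hFC : MapsTo F K C := fun x hx ↦
    subset_closure (subset_convexHull ℝ _ (Set.mem_image_of_mem F hx))
  have hC : IsCompact C := (totallyBounded_convexHull.2
    (hcomp.totallyBounded.subset subset_closure)).closure.isCompact_of_isClosed isClosed_closure
  obtain ⟨x, hx, hxF⟩ := exists_mem_ccEnvelope_of_isCompact hC (convex_convexHull ℝ _).closure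
    ((hne.image F).mono hFC.image_subset) (hFC.mono_left hCK)
  exact ⟨x, hCK hx, ccEnvelope_mono hCK hxF⟩

end Schauder

section Krasnoselskii

/-- The radius to which a vector of norm `ρ` is rescaled: `r₂` for `ρ ≤ 1`, `r₁` for `2 ≤ ρ`, and
affine in between. -/
noncomputable def transitionRadius (r₂ r₁ ρ : ℝ) : ℝ :=
  AffineMap.lineMap r₂ r₁ (max 0 (min 1 (ρ - 1)))

section TransitionRadius

variable {r₁ r₂ ρ : ℝ}

lemma continuous_transitionRadius : Continuous (transitionRadius r₂ r₁) := by
  unfold transitionRadius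
  fun_prop

lemma transitionRadius_of_le_one (h : ρ ≤ 1) : transitionRadius r₂ r₁ ρ = r₂ := by
  rw [transitionRadius, max_eq_left ((min_le_right _ _).trans (sub_nonpos.2 h)),
    AffineMap.lineMap_apply_zero]

lemma transitionRadius_of_two_le (h : 2 ≤ ρ) : transitionRadius r₂ r₁ ρ = r₁ := by
  rw [transitionRadius, min_eq_left (by linarith), max_eq_right zero_le_one,
    AffineMap.lineMap_apply_one]

lemma transitionRadius_mem_Icc :
    transitionRadius r₂ r₁ ρ ∈ Icc (min r₁ r₂) (max r₁ r₂) := by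
  rw [← segment_eq_Icc', segment_symm, segment_eq_image_lineMap]
  exact Set.mem_image_of_mem _ ⟨le_max_left _ _, max_le zero_le_one (min_le_left _ _)⟩

lemma transitionRadius_mem_Ioo (hne : r₁ ≠ r₂) (h1 : 1 < ρ) (h2 : ρ < 2) :
    transitionRadius r₂ r₁ ρ ∈ Ioo (min r₁ r₂) (max r₁ r₂) := by
  rw [← openSegment_eq_Ioo' hne, openSegment_symm, openSegment_eq_image_lineMap]
  exact Set.mem_image_of_mem _ ⟨lt_max_of_lt_right (lt_min one_pos (by linarith)),
    max_lt one_pos (min_lt_of_right_lt (by linarith))⟩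

end TransitionRadius

variable {X : Type*} [NormedAddCommGroup X] [NormedSpace ℝ X] {K U : Set X} {T : X → X} {w : X}

lemma add_mem_of_convex_of_smul_mem (hK : Convex ℝ K)
    (hsmul : ∀ x ∈ K, ∀ l : ℝ, 0 ≤ l → l • x ∈ K) {x y : X} (hx : x ∈ K) (hy : y ∈ K) :
    x + y ∈ K := by
  have := hsmul _ (hK.midpoint_mem hx hy) 2 zero_le_two
  rwa [midpoint_eq_smul_add, smul_smul, mul_invOf_self, one_smul] at this

variable [CompleteSpace X]

lemma exists_eq_smul_add_smul (hKcl : IsClosed K) (hK : Convex ℝ K)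
    (hsmul : ∀ x ∈ K, ∀ l : ℝ, 0 ≤ l → l • x ∈ K) (hw : w ∈ K) (hT : MapsTo T U K)
    (hcomp : IsCompact (closure (T '' U))) {g : X → X} (hg : MapsTo g K U) {a b : X → ℝ}
    (ha : ContinuousOn a K) (hb : ContinuousOn b K) {A B : ℝ} (haA : MapsTo a K (Icc 0 A))
    (hbB : MapsTo b K (Icc 0 B)) (hgcont : ∀ x ∈ K, a x ≠ 0 → ContinuousWithinAt g K x) :
    ∃ x ∈ K, ∃ t, (a x ≠ 0 → t ∈ ccEnvelope U T (g x)) ∧ x = a x • t + b x • w := by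
  let F (x : X) : X := a x • T (g x) + b x • w
  have hF : MapsTo F K K := fun x hx ↦ add_mem_of_convex_of_smul_mem hK hsmul
    (hsmul _ (hT (hg hx)) _ (haA hx).1) (hsmul _ hw _ (hbB hx).1)
  have hFcomp : IsCompact (closure (F '' K)) := by
    refine (((isCompact_Icc (a := 0) (b := A)).prod (hcomp.prod (isCompact_Icc (a := 0)
      (b := B)))).image (f := fun p : ℝ × X × ℝ ↦ p.1 • p.2.1 + p.2.2 • w)
      (by fun_prop)).closure_of_subset ?_
    rintro _ ⟨x, hx, rfl⟩
    exact ⟨(a x, T (g x), b x), ⟨haA hx, subset_closure (Set.mem_image_of_mem T (hg hx)), hbB hx⟩,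
      rfl⟩
  obtain ⟨x, hx, hxF⟩ := exists_mem_ccEnvelope_of_isCompact_closure_image hKcl hK ⟨w, hw⟩ hF hFcomp
  have hbdd : Bornology.IsBounded ((T ∘ g) '' K) := hcomp.isBounded.subset <| by
    rw [Set.image_comp]
    exact (Set.image_mono hg.image_subset).trans subset_closure
  obtain ⟨t, ht, hxt⟩ := exists_mem_ccEnvelope_eq_smul_add (ha x hx)
    ((hb x hx).smul continuousWithinAt_const) hbdd hxF
  exact ⟨x, hx, t, fun h ↦ ccEnvelope_comp_subset (hgcont x hx h) hg (ht h), hxt⟩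

lemma exists_norm_eq_and_eq_smul_add_smul (hKcl : IsClosed K) (hK : Convex ℝ K)
    (hsmul : ∀ x ∈ K, ∀ l : ℝ, 0 ≤ l → l • x ∈ K) (hw : w ∈ K) (hw0 : w ≠ 0) {m R : ℝ} (hm : 0 < m)
    {φ : ℝ → ℝ} (hφcont : Continuous φ) (hφ : ∀ ρ, φ ρ ∈ Icc m R)
    (hT : MapsTo T (closedBall 0 R ∩ K) K)
    (hcomp : IsCompact (closure (T '' (closedBall 0 R ∩ K)))) :
    ∃ ρ > 0, ∃ z ∈ K, ‖z‖ = φ ρ ∧ ∃ t ∈ ccEnvelope (closedBall 0 R ∩ K) T z,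
      z = (min ρ 2 / ρ) • t + (φ ρ / ρ * max 0 (1 - ρ)) • w := by
  have hφ0 (ρ : ℝ) : 0 < φ ρ := hm.trans_le (hφ ρ).1
  let g (x : X) : X := (φ ‖x‖ / ‖x‖) • x
  have hgK : MapsTo g K K := fun x hx ↦ hsmul x hx _ (div_nonneg (hφ0 _).le (norm_nonneg x))
  have norm_g {x : X} (hx : x ≠ 0) : ‖g x‖ = φ ‖x‖ := by
    rw [norm_smul, Real.norm_of_nonneg (div_nonneg (hφ0 _).le (norm_nonneg x)),
      div_mul_cancel₀ _ (norm_ne_zero_iff.2 hx)]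
  have hgR (x : X) : ‖g x‖ ≤ R := by
    rcases eq_or_ne x 0 with rfl | hx
    · simpa [g] using (hφ0 0).le.trans (hφ 0).2
    · exact (norm_g hx).trans_le (hφ _).2
  have hgcont {x : X} (hx : x ≠ 0) : ContinuousAt g x := by
    have := norm_ne_zero_iff.2 hx
    fun_prop (disch := assumption)
  obtain ⟨x, hx, t, ht, hxt⟩ := exists_eq_smul_add_smul (g := g)
    (a := fun x ↦ min ‖x‖ 2 / φ ‖x‖) (b := fun x ↦ max 0 (1 - ‖x‖)) (A := 2 / m) (B := 1)
    hKcl hK hsmul hw hT hcomp (fun x hx ↦ ⟨mem_closedBall_zero_iff.2 (hgR x), hgK hx⟩)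
    (Continuous.continuousOn (by fun_prop (disch := exact fun _ ↦ (hφ0 _).ne')))
    (Continuous.continuousOn (by fun_prop))
    (fun x _ ↦ ⟨div_nonneg (le_min (norm_nonneg x) zero_le_two) (hφ0 _).le,
      div_le_div₀ zero_le_two (min_le_right _ _) hm (hφ _).1⟩)
    (fun x _ ↦ ⟨le_max_left _ _, max_le zero_le_one (sub_le_self 1 (norm_nonneg x))⟩)
    (fun x _ hax ↦ (hgcont fun hx0 ↦ hax (by simp [hx0])).continuousWithinAt)
  have hx0 : x ≠ 0 := by
    rintro rfl
    exact hw0 (by simpa using hxt.symm)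
  have hρ : 0 < ‖x‖ := norm_pos_iff.2 hx0
  have ht' := ht (div_pos (lt_min hρ two_pos) (hφ0 _)).ne'
  refine ⟨‖x‖, hρ, g x, hgK hx, norm_g hx0, t, ht', ?_⟩
  calc g x = (φ ‖x‖ / ‖x‖) • ((min ‖x‖ 2 / φ ‖x‖) • t + max 0 (1 - ‖x‖) • w) :=
        congrArg ((φ ‖x‖ / ‖x‖) • ·) hxt
    _ = _ := by
      rw [smul_add, smul_smul, smul_smul, mul_comm (φ ‖x‖ / ‖x‖) (min ‖x‖ 2 / φ ‖x‖),
        div_mul_div_cancel₀ (hφ0 _).ne']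

theorem krasnoselskii_discontinuous_general (hKcl : IsClosed K) (hKconv : Convex ℝ K)
    (hKcone : ∀ x ∈ K, ∀ l : ℝ, 0 ≤ l → l • x ∈ K)
    {R r₁ r₂ : ℝ} (hr₁ : 0 < r₁) (hr₂ : 0 < r₂) (hr₁R : r₁ ≤ R) (hr₂R : r₂ ≤ R)
    (hne : r₁ ≠ r₂) (hTmaps : ∀ x ∈ closedBall (0 : X) R ∩ K, T x ∈ K)
    (hTcompact : IsCompact (closure (T '' (closedBall (0 : X) R ∩ K))))
    (ha : ∀ x ∈ K, ‖x‖ = r₁ → ∀ l : ℝ, 1 ≤ l →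
      l • x ∉ ccEnvelope (closedBall (0 : X) R ∩ K) T x)
    (hb : ∃ w ∈ K, ‖w‖ ≠ 0 ∧ ∀ l : ℝ, 0 ≤ l → ∀ x ∈ K, ‖x‖ = r₂ →
      ∀ y ∈ ccEnvelope (closedBall (0 : X) R ∩ K) T x, x ≠ y + l • w) :
    ∃ x ∈ K, x ∈ ccEnvelope (closedBall (0 : X) R ∩ K) T x ∧ ‖x‖ ∈ Ioo (min r₁ r₂) (max r₁ r₂) := by
  obtain ⟨w, hw, hw0, hb⟩ := hb
  have hradius (ρ : ℝ) : transitionRadius r₂ r₁ ρ ∈ Icc (min r₁ r₂) R :=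
    Icc_subset_Icc_right (max_le hr₁R hr₂R) transitionRadius_mem_Icc
  obtain ⟨ρ, hρ, z, hz, hnorm, t, ht, hzt⟩ := exists_norm_eq_and_eq_smul_add_smul hKcl hKconv hKcone
    hw (norm_ne_zero_iff.1 hw0) (lt_min hr₁ hr₂) continuous_transitionRadius hradius hTmaps
    hTcompact
  rcases le_or_gt ρ 1 with h1 | h1
  · rw [transitionRadius_of_le_one h1] at hnorm hzt
    rw [min_eq_left (h1.trans one_le_two), div_self hρ.ne', one_smul] at hzt
    exact absurd hzt (hb _ (by positivity) z hz hnorm t ht)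
  rw [max_eq_left (sub_nonpos.2 h1.le), mul_zero, zero_smul, add_zero] at hzt
  rcases lt_or_ge ρ 2 with h2 | h2
  · rw [min_eq_left h2.le, div_self hρ.ne', one_smul] at hzt
    exact ⟨z, hz, hzt ▸ ht, hnorm ▸ transitionRadius_mem_Ioo hne h1 h2⟩
  · rw [transitionRadius_of_two_le h2] at hnorm
    have hρz : (ρ / 2) • z = t := by
      rw [hzt, min_eq_right h2, smul_smul, div_mul_div_cancel₀ two_ne_zero, div_self hρ.ne',
        one_smul]
    exact absurd (hρz ▸ ht) (ha z hz hnorm _ ((one_le_div two_pos).2 h2))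

end Krasnoselskii

/-- Krasnoselskii fixed point theorem for discontinuous operators, first version. -/
theorem krasnoselskii_discontinuous
    {X : Type*} [NormedAddCommGroup X] [NormedSpace ℝ X] [CompleteSpace X]
    (K : Set X) (hKcl : IsClosed K) (hKconv : Convex ℝ K)
    (hKcone : ∀ x ∈ K, ∀ l : ℝ, 0 ≤ l → l • x ∈ K)
    (hKpointed : ∀ x ∈ K, -x ∈ K → x = 0)
    (R r₁ r₂ : ℝ) (hr₁ : 0 < r₁) (hr₂ : 0 < r₂) (hr₁R : r₁ ≤ R) (hr₂R : r₂ ≤ R)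
    (hne : r₁ ≠ r₂)
    (T : X → X) (hTmaps : ∀ x ∈ closedBall (0:X) R ∩ K, T x ∈ K)
    (hTcompact : IsCompact (closure (T '' (closedBall (0:X) R ∩ K))))
    (hcond : ∀ x ∈ closedBall (0:X) R ∩ K,
      x ∈ ccEnvelope (closedBall (0:X) R ∩ K) T x → x = T x)
    (ha : ∀ x ∈ K, ‖x‖ = r₁ → ∀ l : ℝ, 1 ≤ l →
      l • x ∉ ccEnvelope (closedBall (0:X) R ∩ K) T x)
    (hb : ∃ w ∈ K, ‖w‖ ≠ 0 ∧ ∀ l : ℝ, 0 ≤ l → ∀ x ∈ K, ‖x‖ = r₂ →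
      ∀ y ∈ ccEnvelope (closedBall (0:X) R ∩ K) T x, x ≠ y + l • w) :
    ∃ x ∈ K, T x = x ∧ min r₁ r₂ < ‖x‖ ∧ ‖x‖ < max r₁ r₂ := by
  obtain ⟨x, hx, hxT, hlt, hgt⟩ := krasnoselskii_discontinuous_general hKcl hKconv hKcone
    hr₁ hr₂ hr₁R hr₂R hne hTmaps hTcompact ha hb
  have hxR : ‖x‖ ≤ R := hgt.le.trans (max_le hr₁R hr₂R)
  exact ⟨x, hx, (hcond x ⟨mem_closedBall_zero_iff.2 hxR, hx⟩ hxT).symm, hlt, hgt⟩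
end

section
/- Let K = ℝ²₊ = {(x,y) ∈ ℝ² : x ≥ 0, y ≥ 0} with the order (x₁,y₁) ⪯ (x₂,y₂) iff x₂ − x₁ ≥ 0 and y₂ − y₁ ≥ 0. Fix 0 < r < R and define T : K → K in polar coordinates (ρ,θ) by: T(ρ,θ) = (0,0) if ρ ≠ r; T(r,θ) = the point with polar coordinates (r, π/2) if θ ∈ [0, π/4); and T(r,θ) = the point with polar coordinates (r, 0) if θ ∈ [π/4, π/2]. Then: (1) for all x ∈ K with ‖x‖ = R and y = Tx, it is not the case that y ⪰ x; (2) for all x ∈ K with ‖x‖ = r and y = Tx, it is not the case that y ⪯ x; yet (3) T has no fixed point in closedBall(0,R) \ ball(0,r). (Hence the compression–expansion hypotheses imposed on T itself, rather than on its closed–convex envelope, do not guarantee a fixed point.) -/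
open Set Metric

/-- The operator of the counterexample, written in cartesian coordinates on the
Euclidean plane: in polar coordinates it maps `(ρ,θ)` with `ρ ≠ r` to the origin,
points `(r,θ)` with `θ ∈ [0,π/4)` (i.e. `x₂ < x₁`) to the point of polar
coordinates `(r,π/2)`, and points `(r,θ)` with `θ ∈ [π/4,π/2]` (i.e. `x₁ ≤ x₂`)
to the point of polar coordinates `(r,0)`. -/
noncomputable def Tpolar (r : ℝ) (x : EuclideanSpace ℝ (Fin 2)) :
    EuclideanSpace ℝ (Fin 2) :=
  if ‖x‖ = r then
    (if x 1 < x 0 then (WithLp.equiv 2 (Fin 2 → ℝ)).symm ![0, r]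
      else (WithLp.equiv 2 (Fin 2 → ℝ)).symm ![r, 0])
  else 0

/-!
Since vectors of the nonnegative orthant have nonnegative inner products, the Euclidean norm is
strictly monotone on it: comparable vectors of the orthant with equal norms coincide. The map
`Tpolar r` never increases the norm and preserves it on the sphere of radius `r`, so both order
conditions reduce to the absence of nonzero fixed points. There are none because on that sphere
the map exchanges the two sectors separated by the diagonal, and off it everything goes to `0`.
-/

open scoped InnerProductSpace

theorem eq_of_norm_le_of_re_inner_sub_nonneg {𝕜 E : Type*} [RCLike 𝕜] [NormedAddCommGroup E]
    [InnerProductSpace 𝕜 E] {x y : E} (hinner : 0 ≤ RCLike.re ⟪x, y - x⟫_𝕜)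
    (hnorm : ‖y‖ ≤ ‖x‖) : y = x := by
  have hexpand : ‖y‖ ^ 2 = ‖x‖ ^ 2 + 2 * RCLike.re ⟪x, y - x⟫_𝕜 + ‖y - x‖ ^ 2 := by
    simpa only [add_sub_cancel] using norm_add_sq (𝕜 := 𝕜) x (y - x)
  have hle : ‖y‖ ^ 2 ≤ ‖x‖ ^ 2 := by gcongr
  have hdist : ‖y - x‖ ^ 2 = 0 := le_antisymm (by linarith) (sq_nonneg _)
  rwa [sq_eq_zero_iff, norm_sub_eq_zero_iff] at hdist

/-- The nonnegative orthant `ℝ^ι₊`, which for `ι = Fin 2` is the cone `K` of the counterexample.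
Its order is not registered as an instance: `x ⪯ y` is written `y - x ∈ nonnegOrthant ι`. -/
def nonnegOrthant (ι : Type*) : Set (EuclideanSpace ℝ ι) :=
  {x | ∀ i, 0 ≤ x i}

theorem nonnegOrthant_fin_two :
    nonnegOrthant (Fin 2) = {x : EuclideanSpace ℝ (Fin 2) | 0 ≤ x 0 ∧ 0 ≤ x 1} :=
  Set.ext fun _ => Fin.forall_fin_two

theorem zero_mem_nonnegOrthant {ι : Type*} : (0 : EuclideanSpace ℝ ι) ∈ nonnegOrthant ι :=
  fun _ => le_rfl

theorem single_mem_nonnegOrthant {ι : Type*} [DecidableEq ι] (i : ι) {a : ℝ} (ha : 0 ≤ a) :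
    EuclideanSpace.single i a ∈ nonnegOrthant ι := fun j => by
  rw [PiLp.single_apply]
  split_ifs
  exacts [ha, le_rfl]

section Fintype

variable {ι : Type*} [Fintype ι] {x y : EuclideanSpace ℝ ι}

theorem inner_nonneg_of_mem_nonnegOrthant (hx : x ∈ nonnegOrthant ι) (hy : y ∈ nonnegOrthant ι) :
    0 ≤ ⟪x, y⟫_ℝ := by
  rw [PiLp.inner_apply]
  exact Finset.sum_nonneg fun i _ => mul_nonneg (hy i) (hx i)

theorem eq_of_norm_le_of_sub_mem_nonnegOrthant (hx : x ∈ nonnegOrthant ι)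
    (hxy : y - x ∈ nonnegOrthant ι) (hnorm : ‖y‖ ≤ ‖x‖) : y = x :=
  eq_of_norm_le_of_re_inner_sub_nonneg (𝕜 := ℝ) (inner_nonneg_of_mem_nonnegOrthant hx hxy) hnorm

end Fintype

section Tpolar

variable {r : ℝ} {x : EuclideanSpace ℝ (Fin 2)}

theorem Tpolar_of_norm_ne (hx : ‖x‖ ≠ r) : Tpolar r x = 0 :=
  if_neg hx

theorem Tpolar_of_norm_eq (hx : ‖x‖ = r) :
    Tpolar r x = EuclideanSpace.single (if x 1 < x 0 then 1 else 0) r := by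
  rw [Tpolar, if_pos hx]
  ext i
  split_ifs <;> fin_cases i <;> simp

theorem norm_Tpolar_of_norm_eq (hx : ‖x‖ = r) : ‖Tpolar r x‖ = ‖x‖ := by
  rw [Tpolar_of_norm_eq hx, PiLp.norm_single, ← hx, norm_norm]

theorem norm_Tpolar_le (r : ℝ) (x : EuclideanSpace ℝ (Fin 2)) : ‖Tpolar r x‖ ≤ ‖x‖ := by
  by_cases hx : ‖x‖ = r
  · exact (norm_Tpolar_of_norm_eq hx).le
  · rw [Tpolar_of_norm_ne hx, norm_zero]
    exact norm_nonneg x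

theorem Tpolar_mem_nonnegOrthant (r : ℝ) (x : EuclideanSpace ℝ (Fin 2)) :
    Tpolar r x ∈ nonnegOrthant (Fin 2) := by
  by_cases hx : ‖x‖ = r
  · rw [Tpolar_of_norm_eq hx]
    exact single_mem_nonnegOrthant _ (hx ▸ norm_nonneg x)
  · rw [Tpolar_of_norm_ne hx]
    exact zero_mem_nonnegOrthant

theorem Tpolar_one_lt_Tpolar_zero_iff (hr : 0 < r) (hx : ‖x‖ = r) :
    Tpolar r x 1 < Tpolar r x 0 ↔ x 0 ≤ x 1 := by
  rw [Tpolar_of_norm_eq hx, ← not_lt]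
  split_ifs with hlt <;> simp [hlt, hr, hr.le]

theorem Tpolar_eq_self_iff : Tpolar r x = x ↔ x = 0 := by
  refine ⟨fun hfix => ?_, ?_⟩
  · by_contra hx0
    by_cases hx : ‖x‖ = r
    · have hswap := Tpolar_one_lt_Tpolar_zero_iff (hx ▸ norm_pos_iff.2 hx0) hx
      rw [hfix, ← not_lt] at hswap
      exact iff_not_self hswap
    · exact hx0 (hfix.symm.trans (Tpolar_of_norm_ne hx))
  · rintro rfl
    exact norm_le_zero_iff.1 ((norm_Tpolar_le r 0).trans norm_zero.le)

end Tpolar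

theorem no_fixed_point_example_general (r : ℝ) {x : EuclideanSpace ℝ (Fin 2)} (hx0 : x ≠ 0) :
    (x ∈ nonnegOrthant (Fin 2) → Tpolar r x - x ∉ nonnegOrthant (Fin 2)) ∧
    (‖x‖ = r → x - Tpolar r x ∉ nonnegOrthant (Fin 2)) ∧
    Tpolar r x ≠ x := by
  have hne : Tpolar r x ≠ x := mt Tpolar_eq_self_iff.1 hx0
  refine ⟨fun hx hle => hne ?_, fun hxr hge => hne.symm ?_, hne⟩
  · exact eq_of_norm_le_of_sub_mem_nonnegOrthant hx hle (norm_Tpolar_le r x)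
  · exact eq_of_norm_le_of_sub_mem_nonnegOrthant (Tpolar_mem_nonnegOrthant r x) hge
      (norm_Tpolar_of_norm_eq hxr).ge

/-- In the cone `K = ℝ²₊` of the Euclidean plane with the induced order, the map
`Tpolar r` satisfies the compression–expansion conditions (with radii `R` and `r`)
but has no fixed point in `closedBall 0 R \ ball 0 r`. -/
theorem no_fixed_point_example (r R : ℝ) (hr : 0 < r) (hrR : r < R) :
    (∀ x ∈ {y : EuclideanSpace ℝ (Fin 2) | 0 ≤ y 0 ∧ 0 ≤ y 1}, ‖x‖ = R →
      Tpolar r x - x ∉ {y : EuclideanSpace ℝ (Fin 2) | 0 ≤ y 0 ∧ 0 ≤ y 1}) ∧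
    (∀ x ∈ {y : EuclideanSpace ℝ (Fin 2) | 0 ≤ y 0 ∧ 0 ≤ y 1}, ‖x‖ = r →
      x - Tpolar r x ∉ {y : EuclideanSpace ℝ (Fin 2) | 0 ≤ y 0 ∧ 0 ≤ y 1}) ∧
    (∀ x ∈ {y : EuclideanSpace ℝ (Fin 2) | 0 ≤ y 0 ∧ 0 ≤ y 1},
      x ∈ closedBall (0 : EuclideanSpace ℝ (Fin 2)) R \ ball (0 : EuclideanSpace ℝ (Fin 2)) r →
      Tpolar r x ≠ x) := by
  rw [← nonnegOrthant_fin_two]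
  have hne_zero {x : EuclideanSpace ℝ (Fin 2)} (hx : r ≤ ‖x‖) : x ≠ 0 :=
    norm_pos_iff.1 (hr.trans_le hx)
  refine ⟨fun x hx hxR => ?_, fun x _ hxr => ?_, fun x _ hx => ?_⟩
  · exact (no_fixed_point_example_general r (hne_zero (hxR ▸ hrR.le))).1 hx
  · exact (no_fixed_point_example_general r (hne_zero hxr.ge)).2.1 hxr
  · have hrx : r ≤ ‖x‖ := by simpa only [mem_ball_zero_iff, not_lt] using hx.2
    exact (no_fixed_point_example_general r (hne_zero hrx)).2.2
end

section
/- Assume (H1)–(H4). Then the Hammerstein operator Tu(t) = ∫₀¹ k(t,s) g(s) f(s,u(s)) ds is a well-defined map from the cone K into K, and T maps bounded subsets of K into relatively compact subsets of C([0,1]). -/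
open Set Metric MeasureTheory Filter Topology

/-- Extension of a continuous function on `[0,1]` to all of `ℝ`. -/
noncomputable def uext (u : C(Icc (0:ℝ) 1, ℝ)) : ℝ → ℝ :=
  IccExtend zero_le_one ⇑u

/-- Value of the Hammerstein operator: `Tu(t) = ∫₀¹ k(t,s) g(s) f(s,u(s)) ds`. -/
noncomputable def hamVal (k : ℝ → ℝ → ℝ) (g : ℝ → ℝ) (f : ℝ → ℝ → ℝ)
    (u : C(Icc (0:ℝ) 1, ℝ)) (t : ℝ) : ℝ :=
  ∫ s in Icc (0:ℝ) 1, k t s * g s * f s (uext u s)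

/-- The cone `K = {u ∈ C([0,1]) : u ≥ 0, min_{t ∈ [a,b]} u(t) ≥ c‖u‖}`. -/
def coneK (a b c : ℝ) : Set C(Icc (0:ℝ) 1, ℝ) :=
  {u | (∀ t, 0 ≤ u t) ∧ ∀ t : Icc (0:ℝ) 1, (t:ℝ) ∈ Icc a b → c * ‖u‖ ≤ u t}

/-! With `K(t,s) = k(t,s) g(s)` and `Ψ = Φ g`, the operator factors as `T = L ∘ N`, where
`N u = f(·, u(·))` maps the nonnegative functions into `L^∞`, boundedly on bounded sets, and
`L y (t) = ∫ K(t,s) y(s) ds` is linear from `L^∞` to `C([0,1])`. Dominated convergence makes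
`t ↦ K(t,·)` a continuous curve in `L¹`, so the images of bounded sets under `L` are
equicontinuous and `L` is compact by Arzelà–Ascoli. For `y ≥ 0` the bounds
`cΨ ≤ K(t,·) ≤ Ψ` give `‖L y‖ ≤ ∫ Ψ y` and `c ∫ Ψ y ≤ L y (t)` on `[a,b]`, so `L y` lies in the
cone. -/

open scoped ENNReal

section PointwiseApply

variable {X : Type*} [TopologicalSpace X] [CompactSpace X]

theorem isCompact_closure_of_equicontinuous {β : Type*} [MetricSpace β] {s : Set β}
    (hs : IsCompact s) {A : Set C(X, β)} (hA : ∀ v ∈ A, ∀ t, v t ∈ s)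
    (hA_equi : Equicontinuous ((↑) : A → X → β)) : IsCompact (closure A) := by
  let e := ContinuousMap.isometryEquivBoundedOfCompact X β
  have h_image : IsCompact (closure (e '' A)) := by
    refine BoundedContinuousFunction.arzela_ascoli s hs _ ?_ ?_
    · rintro _ t ⟨v, hv, rfl⟩
      exact hA v hv t
    · intro t₀ U hU
      filter_upwards [hA_equi t₀ U hU] with t ht
      rintro ⟨_, v, hv, rfl⟩
      exact ht ⟨v, hv⟩
  rw [← e.toHomeomorph.isCompact_image, e.toHomeomorph.image_closure]
  exact h_image

variable {𝕜 F G : Type*} [NontriviallyNormedField 𝕜] [SeminormedAddCommGroup F]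
  [NormedSpace 𝕜 F] [NormedAddCommGroup G] [NormedSpace 𝕜 G]

/-- The operator `y ↦ (t ↦ κ t y)` from `F` to `C(X, G)` attached to a continuous family `κ` of
operators from `F` to `G`. -/
noncomputable def pointwiseApplyCLM (κ : C(X, F →L[𝕜] G)) : F →L[𝕜] C(X, G) :=
  LinearMap.mkContinuous
    { toFun := fun y => ⟨fun t => κ t y, by fun_prop⟩
      map_add' := fun y z => by ext t; simp
      map_smul' := fun r y => by ext t; simp }
    ‖κ‖ fun y => (ContinuousMap.norm_le _ (by positivity)).2 fun t =>
      (κ t).le_of_opNorm_le (κ.norm_coe_le_norm t) y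

@[simp]
theorem pointwiseApplyCLM_apply (κ : C(X, F →L[𝕜] G)) (y : F) (t : X) :
    pointwiseApplyCLM κ y t = κ t y := rfl

theorem isCompactOperator_pointwiseApplyCLM [ProperSpace G] (κ : C(X, F →L[𝕜] G)) :
    IsCompactOperator (pointwiseApplyCLM κ) := by
  refine (isCompactOperator_iff_isCompact_closure_image_ball
    (pointwiseApplyCLM κ).toLinearMap one_pos).2 ?_
  refine isCompact_closure_of_equicontinuous (isCompact_closedBall 0 ‖κ‖) ?_ fun t₀ => ?_
  · rintro _ ⟨y, hy, rfl⟩ t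
    rw [mem_closedBall_zero_iff, ContinuousLinearMap.coe_coe, pointwiseApplyCLM_apply,
      ← mul_one ‖κ‖]
    exact (κ t).le_of_opNorm_le_of_le (κ.norm_coe_le_norm t) (mem_ball_zero_iff.1 hy).le
  · have h_modulus : Tendsto (fun t => ‖κ t₀ - κ t‖) (𝓝 t₀) (𝓝 0) := by
      have : Continuous fun t => ‖κ t₀ - κ t‖ := by fun_prop
      simpa using this.tendsto t₀
    refine equicontinuousAt_of_continuity_modulus _ h_modulus _ (.of_forall fun t => ?_)
    rintro ⟨_, y, hy, rfl⟩
    rw [dist_eq_norm, ← mul_one ‖κ t₀ - κ t‖]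
    exact (κ t₀ - κ t).le_of_opNorm_le_of_le le_rfl (mem_ball_zero_iff.1 hy).le

end PointwiseApply

/-- The cone of the nonnegative functions satisfying the Harnack-type inequality `c * ‖u‖ ≤ u`
on `J`, as in `coneK`, where `J = [a,b]` in `X = [0,1]`. -/
def harnackCone {X : Type*} [TopologicalSpace X] [CompactSpace X] (J : Set X) (c : ℝ) :
    Set C(X, ℝ) :=
  {u | (∀ t, 0 ≤ u t) ∧ ∀ t ∈ J, c * ‖u‖ ≤ u t}

section DominatedKernel

variable {X S : Type*} [TopologicalSpace X] [MeasurableSpace S] {μ : Measure S}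

/-- A kernel `K` on `X × S` that is continuous in its first variable and dominated by an integrable
function `Ψ` of its second variable: the hypotheses of dominated convergence for the integrals
`∫ s, K t s ∂μ` depending on the parameter `t`. -/
structure IsDominatedKernel {E : Type*} [NormedAddCommGroup E] (K : X → S → E) (Ψ : S → ℝ)
    (μ : Measure S) : Prop where
  aestronglyMeasurable : ∀ t, AEStronglyMeasurable (K t) μ
  continuous : ∀ᵐ s ∂μ, Continuous fun t => K t s
  integrable_bound : Integrable Ψ μ
  norm_le_bound : ∀ t, ∀ᵐ s ∂μ, ‖K t s‖ ≤ Ψ s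

theorem isDominatedKernel_mul_weight {k : X → S → ℝ} {g Φ : S → ℝ}
    (hk_meas : ∀ t, AEStronglyMeasurable (k t) μ) (hk_cont : ∀ᵐ s ∂μ, Continuous fun t => k t s)
    (hk_nonneg : ∀ t, 0 ≤ᵐ[μ] k t) (hkΦ : ∀ t, ∀ᵐ s ∂μ, k t s ≤ Φ s)
    (hg_meas : AEStronglyMeasurable g μ) (hg_nonneg : 0 ≤ᵐ[μ] g)
    (hΦg_int : Integrable (fun s => Φ s * g s) μ) :
    IsDominatedKernel (fun t s => k t s * g s) (fun s => Φ s * g s) μ where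
  aestronglyMeasurable t := (hk_meas t).mul hg_meas
  continuous := hk_cont.mono fun s hs => hs.mul_const (g s)
  integrable_bound := hΦg_int
  norm_le_bound t := by
    filter_upwards [hk_nonneg t, hkΦ t, hg_nonneg] with s hks hkΦs hgs
    rw [Real.norm_of_nonneg (mul_nonneg hks hgs)]
    exact mul_le_mul_of_nonneg_right hkΦs hgs

namespace IsDominatedKernel

section NormedGroup

variable {E : Type*} [NormedAddCommGroup E] {K : X → S → E} {Ψ : S → ℝ}

theorem integrable (hK : IsDominatedKernel K Ψ μ) (t : X) : Integrable (K t) μ :=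
  hK.integrable_bound.mono' (hK.aestronglyMeasurable t) (hK.norm_le_bound t)

theorem tendsto_integral_norm_sub [FirstCountableTopology X] (hK : IsDominatedKernel K Ψ μ)
    (t₀ : X) : Tendsto (fun t => ∫ s, ‖K t s - K t₀ s‖ ∂μ) (𝓝 t₀) (𝓝 0) := by
  have h_cont : ContinuousAt (fun t => ∫ s, ‖K t s - K t₀ s‖ ∂μ) t₀ := by
    refine continuousAt_of_dominated (bound := fun s => Ψ s + Ψ s)
      (.of_forall fun t => ((hK.integrable t).sub (hK.integrable t₀)).norm.aestronglyMeasurable)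
      (.of_forall fun t => ?_) (hK.integrable_bound.add hK.integrable_bound) ?_
    · filter_upwards [hK.norm_le_bound t, hK.norm_le_bound t₀] with s hs hs₀
      rw [norm_norm]
      exact norm_sub_le_of_le hs hs₀
    · filter_upwards [hK.continuous] with s hs
      exact (hs.sub continuous_const).norm.continuousAt
  simpa using h_cont.tendsto

/-- The continuous curve `t ↦ K t` in `L¹` traced by the sections of a dominated kernel. -/
noncomputable def toL1 [FirstCountableTopology X] (hK : IsDominatedKernel K Ψ μ) :
    C(X, Lp E 1 μ) where
  toFun t := (hK.integrable t).toL1 (K t)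
  continuous_toFun := continuous_iff_continuousAt.2 fun t₀ => by
    rw [ContinuousAt, tendsto_iff_norm_sub_tendsto_zero]
    simpa only [← Integrable.toL1_sub, L1.norm_of_fun_eq_integral_norm, Pi.sub_apply] using
      hK.tendsto_integral_norm_sub t₀

theorem coeFn_toL1 [FirstCountableTopology X] (hK : IsDominatedKernel K Ψ μ) (t : X) :
    hK.toL1 t =ᵐ[μ] K t :=
  (hK.integrable t).coeFn_toL1

theorem integrable_bound_mul_norm {F : Type*} [NormedAddCommGroup F]
    (hK : IsDominatedKernel K Ψ μ) (y : Lp F ∞ μ) : Integrable (fun s => Ψ s * ‖y s‖) μ :=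
  hK.integrable_bound.mul_of_top_left (Lp.memLp y).norm

end NormedGroup

variable [FirstCountableTopology X] [CompactSpace X]

section IntegralOperator

variable {𝕜 : Type*} [RCLike 𝕜] {K : X → S → 𝕜} {Ψ : S → ℝ}

/-- The integral operator `y ↦ (t ↦ ∫ s, K t s * y s ∂μ)` from `L^∞` to `C(X, 𝕜)`, obtained by
pairing the `L¹` curve of `K` with `y`. -/
noncomputable def integralOperator (hK : IsDominatedKernel K Ψ μ) : Lp 𝕜 ∞ μ →L[𝕜] C(X, 𝕜) :=
  pointwiseApplyCLM (((ContinuousLinearMap.mul 𝕜 𝕜).lpPairing μ 1 ∞ : C(_, _)).comp hK.toL1)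

theorem isCompactOperator_integralOperator (hK : IsDominatedKernel K Ψ μ) :
    IsCompactOperator hK.integralOperator :=
  isCompactOperator_pointwiseApplyCLM _

theorem integralOperator_apply (hK : IsDominatedKernel K Ψ μ) (y : Lp 𝕜 ∞ μ) (t : X) :
    hK.integralOperator y t = ∫ s, K t s * y s ∂μ := by
  refine (ContinuousLinearMap.lpPairing_eq_integral _ (hK.toL1 t) y).trans (integral_congr_ae ?_)
  filter_upwards [hK.coeFn_toL1 t] with s hs
  rw [hs, ContinuousLinearMap.mul_apply']

theorem norm_integralOperator_le [Nonempty X] (hK : IsDominatedKernel K Ψ μ) (y : Lp 𝕜 ∞ μ) :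
    ‖hK.integralOperator y‖ ≤ ∫ s, Ψ s * ‖y s‖ ∂μ := by
  refine (ContinuousMap.norm_le_of_nonempty _).2 fun t => ?_
  rw [hK.integralOperator_apply]
  refine norm_integral_le_of_norm_le (hK.integrable_bound_mul_norm y) ?_
  filter_upwards [hK.norm_le_bound t] with s hs
  rw [norm_mul]
  exact mul_le_mul_of_nonneg_right hs (norm_nonneg _)

end IntegralOperator

section Cone

variable {K : X → S → ℝ} {Ψ : S → ℝ} {y : Lp ℝ ∞ μ}

theorem integralOperator_nonneg (hK : IsDominatedKernel K Ψ μ) {t : X}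
    (hKt_nonneg : 0 ≤ᵐ[μ] K t) (hy : 0 ≤ᵐ[μ] y) : 0 ≤ hK.integralOperator y t := by
  rw [hK.integralOperator_apply]
  refine integral_nonneg_of_ae ?_
  filter_upwards [hKt_nonneg, hy] with s hKs hys using mul_nonneg hKs hys

theorem mul_integral_le_integralOperator (hK : IsDominatedKernel K Ψ μ) {c : ℝ} {t : X}
    (hcK : ∀ᵐ s ∂μ, c * Ψ s ≤ K t s) (hy : 0 ≤ᵐ[μ] y) :
    c * ∫ s, Ψ s * ‖y s‖ ∂μ ≤ hK.integralOperator y t := by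
  rw [hK.integralOperator_apply, ← integral_const_mul]
  refine integral_mono_ae ((hK.integrable_bound_mul_norm y).const_mul c)
    ((hK.integrable t).mul_of_top_left (Lp.memLp y)) ?_
  filter_upwards [hcK, hy] with s hcs hys
  rw [Real.norm_of_nonneg hys, ← mul_assoc]
  exact mul_le_mul_of_nonneg_right hcs hys

theorem integralOperator_mem_harnackCone (hK : IsDominatedKernel K Ψ μ) {J : Set X} {c : ℝ}
    (hc : 0 ≤ c) (hK_nonneg : ∀ t, 0 ≤ᵐ[μ] K t) (hcK : ∀ t ∈ J, ∀ᵐ s ∂μ, c * Ψ s ≤ K t s)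
    (hy : 0 ≤ᵐ[μ] y) : hK.integralOperator y ∈ harnackCone J c := by
  refine ⟨fun t => hK.integralOperator_nonneg (hK_nonneg t) hy, fun t ht => ?_⟩
  have : Nonempty X := ⟨t⟩
  calc c * ‖hK.integralOperator y‖
    _ ≤ c * ∫ s, Ψ s * ‖y s‖ ∂μ := mul_le_mul_of_nonneg_left (hK.norm_integralOperator_le y) hc
    _ ≤ hK.integralOperator y t := hK.mul_integral_le_integralOperator (hcK t ht) hy

end Cone

end IsDominatedKernel

end DominatedKernel

section Superposition

variable {X S : Type*} [TopologicalSpace X] [CompactSpace X] [MeasurableSpace S] {μ : Measure S}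
  {f : S → ℝ → ℝ}

theorem norm_Lp_top_le_of_ae_bound {E : Type*} [NormedAddCommGroup E] {y : Lp E ∞ μ} {R : ℝ}
    (hR : 0 ≤ R) (hy : ∀ᵐ s ∂μ, ‖y s‖ ≤ R) : ‖y‖ ≤ R := by
  rw [Lp.norm_def, eLpNorm_exponent_top]
  exact ENNReal.toReal_le_of_le_ofReal hR (eLpNormEssSup_le_of_ae_bound hy)

theorem ae_norm_superposition_le {π : S → X} (hf_nonneg : ∀ᵐ s ∂μ, ∀ v, 0 ≤ v → 0 ≤ f s v)
    {r R : ℝ} (hfR : ∀ᵐ s ∂μ, ∀ v ∈ Icc 0 r, f s v ≤ R) {u : C(X, ℝ)} (hu : ∀ t, 0 ≤ u t)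
    (hur : ‖u‖ ≤ r) : ∀ᵐ s ∂μ, ‖f s (u (π s))‖ ≤ R := by
  filter_upwards [hf_nonneg, hfR] with s hs hsR
  rw [Real.norm_of_nonneg (hs _ (hu _))]
  exact hsR _ ⟨hu _, (u.apply_le_norm _).trans hur⟩

theorem exists_superposition_Lp_top {π : S → X}
    (hf_meas : ∀ u : C(X, ℝ), AEStronglyMeasurable (fun s => f s (u (π s))) μ)
    (hf_nonneg : ∀ᵐ s ∂μ, ∀ v, 0 ≤ v → 0 ≤ f s v)
    (hf_bdd : ∀ r > 0, ∃ R, ∀ᵐ s ∂μ, ∀ v ∈ Icc 0 r, f s v ≤ R) :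
    ∃ N : C(X, ℝ) → Lp ℝ ∞ μ,
      (∀ u, (∀ t, 0 ≤ u t) → N u =ᵐ[μ] fun s => f s (u (π s))) ∧
      ∀ B : Set C(X, ℝ), (∀ u ∈ B, ∀ t, 0 ≤ u t) → Bornology.IsBounded B →
        Bornology.IsBounded (N '' B) := by
  have h_Lp (u : C(X, ℝ)) (hu : ∀ t, 0 ≤ u t) :
      ∃ y : Lp ℝ ∞ μ, y =ᵐ[μ] fun s => f s (u (π s)) := by
    obtain ⟨R, hR⟩ := hf_bdd (‖u‖ + 1) (by positivity)
    have hfu := memLp_top_of_bound (hf_meas u) R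
      (ae_norm_superposition_le hf_nonneg hR hu (le_add_of_nonneg_right zero_le_one))
    exact ⟨hfu.toLp, hfu.coeFn_toLp⟩
  choose! N hN using h_Lp
  refine ⟨N, hN, fun B hB hB_bdd => ?_⟩
  obtain ⟨r, hr, hBr⟩ := hB_bdd.exists_pos_norm_le
  obtain ⟨R, hR⟩ := hf_bdd r hr
  refine isBounded_iff_forall_norm_le.2 ⟨max R 0, ?_⟩
  rintro _ ⟨u, hu, rfl⟩
  refine norm_Lp_top_le_of_ae_bound (le_max_right R 0) ?_
  filter_upwards [hN u (hB u hu), ae_norm_superposition_le hf_nonneg hR (hB u hu) (hBr u hu)]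
    with s hNs hs
  exact hNs ▸ hs.trans (le_max_left R 0)

end Superposition

theorem hammerstein_well_defined_and_compact_general {X S : Type*} [TopologicalSpace X]
    [FirstCountableTopology X] [CompactSpace X] [MeasurableSpace S] {μ : Measure S} {π : S → X}
    {J : Set X} {c : ℝ} (hc : 0 ≤ c) {f : S → ℝ → ℝ} {g Φ : S → ℝ} {k : X → S → ℝ}
    (hf_meas : ∀ u : C(X, ℝ), AEStronglyMeasurable (fun s => f s (u (π s))) μ)
    (hf_nonneg : ∀ᵐ s ∂μ, ∀ v, 0 ≤ v → 0 ≤ f s v)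
    (hf_bdd : ∀ r > 0, ∃ R, ∀ᵐ s ∂μ, ∀ v ∈ Icc 0 r, f s v ≤ R)
    (hg_meas : AEStronglyMeasurable g μ) (hg_nonneg : 0 ≤ᵐ[μ] g)
    (hk_meas : ∀ t, AEStronglyMeasurable (k t) μ) (hk_cont : ∀ᵐ s ∂μ, Continuous fun t => k t s)
    (hk_nonneg : ∀ t, 0 ≤ᵐ[μ] k t) (hΦg_int : Integrable (fun s => Φ s * g s) μ)
    (hkΦ : ∀ t, ∀ᵐ s ∂μ, k t s ≤ Φ s) (hckΦ : ∀ t ∈ J, ∀ᵐ s ∂μ, c * Φ s ≤ k t s) :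
    ∃ T : C(X, ℝ) → C(X, ℝ),
      (∀ u ∈ harnackCone J c, ∀ t, T u t = ∫ s, k t s * g s * f s (u (π s)) ∂μ) ∧
      MapsTo T (harnackCone J c) (harnackCone J c) ∧
      ∀ B ⊆ harnackCone J c, Bornology.IsBounded B → IsCompact (closure (T '' B)) := by
  obtain ⟨N, hN, hN_bdd⟩ := exists_superposition_Lp_top hf_meas hf_nonneg hf_bdd
  have hK : IsDominatedKernel (fun t s => k t s * g s) (fun s => Φ s * g s) μ :=
    isDominatedKernel_mul_weight hk_meas hk_cont hk_nonneg hkΦ hg_meas hg_nonneg hΦg_int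
  refine ⟨hK.integralOperator ∘ N, fun u hu t => ?_, fun u hu => ?_, fun B hB hB_bdd => ?_⟩
  · refine (hK.integralOperator_apply (N u) t).trans (integral_congr_ae ?_)
    filter_upwards [hN u hu.1] with s hs
    rw [hs]
  · refine hK.integralOperator_mem_harnackCone hc (fun t => ?_) (fun t ht => ?_) ?_
    · filter_upwards [hk_nonneg t, hg_nonneg] with s hks hgs using mul_nonneg hks hgs
    · filter_upwards [hckΦ t ht, hg_nonneg] with s hcs hgs
      simpa only [mul_assoc] using mul_le_mul_of_nonneg_right hcs hgs
    · filter_upwards [hN u hu.1, hf_nonneg] with s hs hfs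
      exact hs ▸ hfs _ (hu.1 _)
  · rw [image_comp]
    exact hK.isCompactOperator_integralOperator.isCompact_closure_image_of_bounded
      (hN_bdd B (fun u hu => (hB hu).1) hB_bdd)

/-- Under (H1)–(H4), the Hammerstein operator `Tu(t) = ∫₀¹ k(t,s)g(s)f(s,u(s)) ds`
is a well-defined map from `K` into `K`, and it maps bounded subsets of `K` into
relatively compact subsets of `C([0,1])`. -/
theorem hammerstein_well_defined_and_compact
    (a b c : ℝ) (ha0 : 0 ≤ a) (hab : a ≤ b) (hb1 : b ≤ 1) (hc0 : 0 < c) (hc1 : c ≤ 1)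
    (f : ℝ → ℝ → ℝ) (g : ℝ → ℝ) (k : ℝ → ℝ → ℝ)
    -- (H1)
    (hf_nonneg : ∀ t ∈ Icc (0:ℝ) 1, ∀ v, 0 ≤ v → 0 ≤ f t v)
    (hf_meas : ∀ v : ℝ → ℝ, Continuous v → Measurable fun t => f t (v t))
    (hf_bdd : ∀ r > (0:ℝ), ∃ R > (0:ℝ),
      ∀ᵐ t ∂(volume.restrict (Icc (0:ℝ) 1)), ∀ v ∈ Icc (0:ℝ) r, f t v ≤ R)
    -- (H2)
    (hg_meas : Measurable g)
    (hg_nonneg : ∀ᵐ s ∂(volume.restrict (Icc (0:ℝ) 1)), 0 ≤ g s)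
    -- (H3)
    (hk_cont : ContinuousOn (fun p : ℝ × ℝ => k p.1 p.2) (Icc 0 1 ×ˢ Icc 0 1))
    (hk_nonneg : ∀ t ∈ Icc (0:ℝ) 1, ∀ s ∈ Icc (0:ℝ) 1, 0 ≤ k t s)
    -- (H4)
    (Φ : ℝ → ℝ) (hΦ_meas : Measurable Φ) (hΦ_nonneg : ∀ s ∈ Icc (0:ℝ) 1, 0 ≤ Φ s)
    (hΦg_int : IntegrableOn (fun s => Φ s * g s) (Icc (0:ℝ) 1))
    (hΦg_pos : 0 < ∫ s in Icc a b, Φ s * g s)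
    (hkΦ : ∀ t ∈ Icc (0:ℝ) 1, ∀ s ∈ Icc (0:ℝ) 1, k t s ≤ Φ s)
    (hckΦ : ∀ t ∈ Icc a b, ∀ s ∈ Icc (0:ℝ) 1, c * Φ s ≤ k t s) :
    ∃ T : C(Icc (0:ℝ) 1, ℝ) → C(Icc (0:ℝ) 1, ℝ),
      (∀ u ∈ coneK a b c, ∀ t : Icc (0:ℝ) 1, T u t = hamVal k g f u t) ∧
      MapsTo T (coneK a b c) (coneK a b c) ∧
      (∀ B ⊆ coneK a b c, Bornology.IsBounded B → IsCompact (closure (T '' B))) := by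
  have hk_uncurry : ContinuousOn (Function.uncurry k) (Icc 0 1 ×ˢ Icc 0 1) := hk_cont
  have hk_meas (t : Icc (0:ℝ) 1) :
      AEStronglyMeasurable (k t) (volume.restrict (Icc 0 1)) :=
    (hk_uncurry.uncurry_left (t : ℝ) t.2).aestronglyMeasurable measurableSet_Icc
  have hk_cont_fst : ∀ s ∈ Icc (0:ℝ) 1, Continuous fun t : Icc (0:ℝ) 1 => k t s :=
    fun s hs => (hk_uncurry.uncurry_right s hs).domRestrict
  -- `uext u` unfolds to `u ∘ projIcc 0 1 zero_le_one`.
  exact hammerstein_well_defined_and_compact_general (π := projIcc 0 1 zero_le_one)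
    (J := Subtype.val ⁻¹' Icc a b) hc0.le
    (fun u => (hf_meas _ u.continuous.Icc_extend').aestronglyMeasurable)
    (ae_restrict_of_forall_mem measurableSet_Icc hf_nonneg)
    (fun r hr => (hf_bdd r hr).imp fun _ hR => hR.2)
    hg_meas.aestronglyMeasurable hg_nonneg hk_meas
    (ae_restrict_of_forall_mem measurableSet_Icc hk_cont_fst)
    (fun t => ae_restrict_of_forall_mem measurableSet_Icc (hk_nonneg t t.2)) hΦg_int
    (fun t => ae_restrict_of_forall_mem measurableSet_Icc (hkΦ t t.2))
    (fun t ht => ae_restrict_of_forall_mem measurableSet_Icc (hckΦ t ht))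
end

section
/- Assume (H1)–(H4) and that the Hammerstein operator T satisfies {u} ∩ 𝕋u ⊆ {Tu} for all u ∈ K ∩ 𝕋K, where 𝕋 is the closed–convex envelope of T. Suppose condition (I⁰_ρ): there exist ρ > 0 and ε > 0 such that f_{ρ,ε} > M(a,b), where f_{ρ,ε} = inf{ f(t,u)/ρ : a ≤ t ≤ b, c(ρ−ε) ≤ u ≤ ρ/c + ε } and 1/M(a,b) = inf_{t∈[a,b]} ∫ₐᵇ k(t,s)g(s) ds. Let V_ρ = {u ∈ K : min_{a≤t≤b} u(t) < ρ} and let e be the constant function e(t) ≡ 1. Then u ∉ 𝕋u + λe for all u in the relative boundary of V_ρ in K and all λ ≥ 0. -/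
open Set Metric MeasureTheory Filter Topology

/-- The relatively open set `V_ρ = {u ∈ K : min_{a ≤ t ≤ b} u(t) < ρ}`. -/
def Vrho (a b c ρ : ℝ) : Set C(Icc (0:ℝ) 1, ℝ) :=
  {u ∈ coneK a b c | ∃ t : Icc (0:ℝ) 1, (t:ℝ) ∈ Icc a b ∧ u t < ρ}

/-!
Let `u` lie on the relative boundary of `V_ρ`. Then `ρ ≤ u ≤ ρ/c` on `[a,b]`, with `u t₀ = ρ` for
some `t₀`, so every `v ∈ K` close to `u` takes values in `[c(ρ-ε), ρ/c+ε]` on `[a,b]`. There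
`f ≥ ρ f_{ρ,ε}`, and since the integrand defining `T v` is nonnegative, keeping only the integral
over `[a,b]` gives `T v t₀ ≥ ρ f_{ρ,ε} / M(a,b) > ρ`. This lower bound describes a closed half-space,
hence passes to the closed convex envelope: `y t₀ > ρ = u t₀` for all `y ∈ 𝕋u`, and adding a
nonnegative function to `y` cannot restore equality.
-/

section Envelope

variable {X : Type*} [NormedAddCommGroup X] [NormedSpace ℝ X] {U : Set X} {T : X → X} {x : X}

theorem ccEnvelope_subset {C : Set X} {δ : ℝ} (hδ : 0 < δ) (hC_conv : Convex ℝ C)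
    (hC_closed : IsClosed C) (hTC : MapsTo T (closedBall x δ ∩ U) C) :
    ccEnvelope U T x ⊆ C :=
  (iInter₂_subset δ hδ).trans <|
    closure_minimal (convexHull_min hTC.image_subset hC_conv) hC_closed

theorem le_map_of_mem_ccEnvelope (φ : X →L[ℝ] ℝ) {δ r : ℝ} (hδ : 0 < δ)
    (hT : ∀ v ∈ closedBall x δ ∩ U, r ≤ φ (T v)) {y : X} (hy : y ∈ ccEnvelope U T x) :
    r ≤ φ y :=
  ccEnvelope_subset (C := {w | r ≤ φ w}) hδ
    (convex_halfSpace_ge φ.toLinearMap.isLinear r)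
    (isClosed_le continuous_const φ.continuous) hT hy

end Envelope

section Boundary

theorem isClosed_setOf_exists_mem_apply_le {X Y : Type*} [TopologicalSpace X] [CompactSpace X]
    [TopologicalSpace Y] [LocallyCompactPair X Y] [Preorder Y] [ClosedIicTopology Y]
    {S : Set X} (hS : IsClosed S) (ρ : Y) :
    IsClosed {u : C(X, Y) | ∃ t ∈ S, u t ≤ ρ} := by
  have hpairs : IsClosed {p : X × C(X, Y) | p.1 ∈ S ∧ p.2 p.1 ≤ ρ} :=
    (hS.preimage continuous_fst).inter <|
      isClosed_Iic.preimage (f := fun p : X × C(X, Y) => p.2 p.1) (by fun_prop)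
  convert isClosedMap_snd_of_compactSpace _ hpairs using 1
  ext u
  simp

theorem isClosed_coneK (a b c : ℝ) : IsClosed (coneK a b c) := by
  simp only [coneK, ofPred_and, ofPred_forall]
  exact (isClosed_iInter fun t => isClosed_le continuous_const (by fun_prop)).inter <|
    isClosed_iInter fun t => isClosed_iInter fun _ => isClosed_le (by fun_prop) (by fun_prop)

variable {a b c ρ : ℝ} {u : C(Icc (0 : ℝ) 1, ℝ)}

theorem exists_apply_le_of_mem_closure_Vrho (hu : u ∈ closure (Vrho a b c ρ)) :
    ∃ t : Icc (0 : ℝ) 1, (t : ℝ) ∈ Icc a b ∧ u t ≤ ρ := by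
  refine closure_minimal ?_ (isClosed_setOf_exists_mem_apply_le
    (isClosed_Icc.preimage continuous_subtype_val) ρ) hu
  rintro v ⟨-, t, ht, hvt⟩
  exact ⟨t, ht, hvt.le⟩

theorem norm_le_div_of_mem_closure_Vrho (hc : 0 < c) (hu : u ∈ closure (Vrho a b c ρ)) :
    ‖u‖ ≤ ρ / c := by
  have huK : u ∈ coneK a b c := closure_minimal (sep_subset _ _) (isClosed_coneK a b c) hu
  obtain ⟨t, ht, hut⟩ := exists_apply_le_of_mem_closure_Vrho hu
  rw [le_div_iff₀' hc]
  exact (huK.2 t ht).trans hut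

theorem le_apply_of_mem_closure_coneK_diff_Vrho (hu : u ∈ closure (coneK a b c \ Vrho a b c ρ))
    {t : Icc (0 : ℝ) 1} (ht : (t : ℝ) ∈ Icc a b) : ρ ≤ u t := by
  refine closure_minimal (t := {v : C(Icc (0 : ℝ) 1, ℝ) | ρ ≤ v t}) ?_
    (isClosed_le continuous_const (by fun_prop)) hu
  rintro v ⟨hvK, hvV⟩
  exact not_lt.1 fun hvt => hvV ⟨hvK, t, ht, hvt⟩

theorem apply_mem_Icc_of_mem_closedBall (hc0 : 0 < c) (hc1 : c ≤ 1) {ε : ℝ} (hε : 0 ≤ ε)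
    (hρ : 0 ≤ ρ) (hu : u ∈ closure (Vrho a b c ρ) ∩ closure (coneK a b c \ Vrho a b c ρ))
    {v : C(Icc (0 : ℝ) 1, ℝ)} (hv : v ∈ closedBall u (c * ε))
    {t : Icc (0 : ℝ) 1} (ht : (t : ℝ) ∈ Icc a b) :
    v t ∈ Icc (c * (ρ - ε)) (ρ / c + ε) := by
  have hu_ge : ρ ≤ u t := le_apply_of_mem_closure_coneK_diff_Vrho hu.2 ht
  have hu_le : u t ≤ ρ / c :=
    (u.apply_le_norm t).trans (norm_le_div_of_mem_closure_Vrho hc0 hu.1)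
  have hvu : |v t - u t| ≤ c * ε := (ContinuousMap.dist_apply_le_dist t).trans hv
  have hcρ : c * ρ ≤ ρ := mul_le_of_le_one_left hρ hc1
  have hcε : c * ε ≤ ε := mul_le_of_le_one_left hε hc1
  rw [abs_le] at hvu
  constructor <;> linarith

end Boundary

section Integral

variable {α : Type*} [MeasurableSpace α] {μ : Measure α} {A E : Set α} {w φ : α → ℝ}

theorem ae_restrict_mul_nonneg (hE : MeasurableSet E) (hw : ∀ x ∈ E, 0 ≤ w x)
    (hφ : ∀ᵐ x ∂(μ.restrict E), 0 ≤ φ x) : ∀ᵐ x ∂(μ.restrict E), 0 ≤ w x * φ x := by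
  filter_upwards [ae_restrict_mem hE, hφ] with x hx hφx
  exact mul_nonneg (hw x hx) hφx

theorem integrableOn_mul_of_le {Φ : α → ℝ} (hE : MeasurableSet E)
    (hw_meas : AEStronglyMeasurable w (μ.restrict E))
    (hφ_meas : AEStronglyMeasurable φ (μ.restrict E))
    (hΦφ : IntegrableOn (fun x => Φ x * φ x) E μ) (hw : ∀ x ∈ E, 0 ≤ w x)
    (hwΦ : ∀ x ∈ E, w x ≤ Φ x) (hφ : ∀ᵐ x ∂(μ.restrict E), 0 ≤ φ x) :
    IntegrableOn (fun x => w x * φ x) E μ := by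
  refine Integrable.mono' hΦφ (hw_meas.mul hφ_meas) ?_
  filter_upwards [ae_restrict_mem hE, hφ, ae_restrict_mul_nonneg hE hw hφ] with x hx hφx hwφx
  rw [Real.norm_of_nonneg hwφx]
  exact mul_le_mul_of_nonneg_right (hwΦ x hx) hφx

theorem mul_setIntegral_le_setIntegral_mul {r : ℝ} (hA : MeasurableSet A) (hAE : A ⊆ E)
    (hw_int : IntegrableOn w A μ) (hwφ_int : IntegrableOn (fun x => w x * φ x) E μ)
    (hw : ∀ᵐ x ∂(μ.restrict E), 0 ≤ w x) (hφ : ∀ᵐ x ∂(μ.restrict E), 0 ≤ φ x)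
    (hr : ∀ x ∈ A, r ≤ φ x) :
    r * ∫ x in A, w x ∂μ ≤ ∫ x in E, w x * φ x ∂μ := by
  calc r * ∫ x in A, w x ∂μ = ∫ x in A, w x * r ∂μ := by rw [integral_mul_const, mul_comm]
    _ ≤ ∫ x in A, w x * φ x ∂μ := by
        refine integral_mono_ae (hw_int.mul_const r) (hwφ_int.mono_set hAE) ?_
        filter_upwards [ae_restrict_mem hA, ae_restrict_of_ae_restrict_of_subset hAE hw]
          with x hx hwx
        exact mul_le_mul_of_nonneg_left (hr x hx) hwx
    _ ≤ ∫ x in E, w x * φ x ∂μ := by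
        refine setIntegral_mono_set hwφ_int ?_ hAE.eventuallyLE
        filter_upwards [hw, hφ] with x hwx hφx
        exact mul_nonneg hwx hφx

end Integral

section Hammerstein

variable {a b t : ℝ} {k : ℝ → ℝ → ℝ} {g : ℝ → ℝ} {f : ℝ → ℝ → ℝ} {v : C(Icc (0 : ℝ) 1, ℝ)}

theorem continuous_uext (v : C(Icc (0 : ℝ) 1, ℝ)) : Continuous (uext v) :=
  v.continuous.Icc_extend'

theorem uext_mem_Icc (hv : ∀ s, 0 ≤ v s) (s : ℝ) : uext v s ∈ Icc 0 ‖v‖ :=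
  ⟨hv _, v.apply_le_norm _⟩

theorem integrableOn_hamVal_integrand
    (hf_nonneg : ∀ s ∈ Icc (0 : ℝ) 1, ∀ x, 0 ≤ x → 0 ≤ f s x)
    (hf_meas : ∀ w : ℝ → ℝ, Continuous w → Measurable fun s => f s (w s))
    (hf_bdd : ∀ r > (0 : ℝ), ∃ R > (0 : ℝ),
      ∀ᵐ s ∂(volume.restrict (Icc (0 : ℝ) 1)), ∀ x ∈ Icc (0 : ℝ) r, f s x ≤ R)
    (hkg_int : IntegrableOn (fun s => k t s * g s) (Icc (0 : ℝ) 1)) (hv : ∀ s, 0 ≤ v s) :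
    IntegrableOn (fun s => k t s * g s * f s (uext v s)) (Icc (0 : ℝ) 1) := by
  obtain ⟨R, -, hfR⟩ := hf_bdd (‖v‖ + 1) (by positivity)
  refine Integrable.mul_bdd (c := R) hkg_int
    (hf_meas _ (continuous_uext v)).aestronglyMeasurable ?_
  filter_upwards [ae_restrict_mem measurableSet_Icc, hfR] with s hs hfs
  obtain ⟨hv_nonneg, hv_le⟩ := uext_mem_Icc hv s
  rw [Real.norm_of_nonneg (hf_nonneg s hs _ hv_nonneg)]
  exact hfs _ ⟨hv_nonneg, by linarith⟩

theorem mul_setIntegral_le_hamVal (ha0 : 0 ≤ a) (hb1 : b ≤ 1)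
    (hf_nonneg : ∀ s ∈ Icc (0 : ℝ) 1, ∀ x, 0 ≤ x → 0 ≤ f s x)
    (hf_meas : ∀ w : ℝ → ℝ, Continuous w → Measurable fun s => f s (w s))
    (hf_bdd : ∀ r > (0 : ℝ), ∃ R > (0 : ℝ),
      ∀ᵐ s ∂(volume.restrict (Icc (0 : ℝ) 1)), ∀ x ∈ Icc (0 : ℝ) r, f s x ≤ R)
    (hkg_int : IntegrableOn (fun s => k t s * g s) (Icc (0 : ℝ) 1))
    (hkg_nonneg : ∀ᵐ s ∂(volume.restrict (Icc (0 : ℝ) 1)), 0 ≤ k t s * g s)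
    (hv : ∀ s, 0 ≤ v s) {r : ℝ} (hr : ∀ s : Icc (0 : ℝ) 1, (s : ℝ) ∈ Icc a b → r ≤ f s (v s)) :
    r * ∫ s in Icc a b, k t s * g s ≤ hamVal k g f v t := by
  have hsub : Icc a b ⊆ Icc (0 : ℝ) 1 := Icc_subset_Icc ha0 hb1
  refine mul_setIntegral_le_setIntegral_mul measurableSet_Icc hsub (hkg_int.mono_set hsub)
    (integrableOn_hamVal_integrand hf_nonneg hf_meas hf_bdd hkg_int hv) hkg_nonneg ?_ ?_
  · filter_upwards [ae_restrict_mem measurableSet_Icc] with s hs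
    exact hf_nonneg s hs _ (uext_mem_Icc hv s).1
  · intro s hs
    rw [uext, IccExtend_of_mem _ _ (hsub hs)]
    exact hr ⟨s, hsub hs⟩ hs

end Hammerstein

/-- `sInf` of a set of reals that is not bounded below is `0`, so positivity implies boundedness. -/
theorem sInf_le_of_sInf_pos {S : Set ℝ} (hS : 0 < sInf S) {x : ℝ} (hx : x ∈ S) : sInf S ≤ x :=
  csInf_le (not_imp_comm.1 Real.sInf_of_not_bddBelow hS.ne') hx

theorem hammerstein_index_condition_zero_general
    {a b c : ℝ} (ha0 : 0 ≤ a) (hb1 : b ≤ 1) (hc0 : 0 < c) (hc1 : c ≤ 1)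
    {f : ℝ → ℝ → ℝ} {g : ℝ → ℝ} {k : ℝ → ℝ → ℝ}
    (hf_nonneg : ∀ t ∈ Icc (0 : ℝ) 1, ∀ v, 0 ≤ v → 0 ≤ f t v)
    (hf_meas : ∀ v : ℝ → ℝ, Continuous v → Measurable fun t => f t (v t))
    (hf_bdd : ∀ r > (0 : ℝ), ∃ R > (0 : ℝ),
      ∀ᵐ t ∂(volume.restrict (Icc (0 : ℝ) 1)), ∀ v ∈ Icc (0 : ℝ) r, f t v ≤ R)
    (hkg_int : ∀ t ∈ Icc a b, IntegrableOn (fun s => k t s * g s) (Icc (0 : ℝ) 1))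
    (hkg_nonneg : ∀ t ∈ Icc a b,
      ∀ᵐ s ∂(volume.restrict (Icc (0 : ℝ) 1)), 0 ≤ k t s * g s)
    {T : C(Icc (0 : ℝ) 1, ℝ) → C(Icc (0 : ℝ) 1, ℝ)}
    (hT : ∀ u ∈ coneK a b c, ∀ t : Icc (0 : ℝ) 1, T u t = hamVal k g f u t)
    {ρ ε : ℝ} (hρ : 0 < ρ) (hε : 0 < ε)
    (hM_pos : 0 < ⨅ t : Icc a b, ∫ s in Icc a b, k t s * g s)
    (hI0 : (⨅ t : Icc a b, ∫ s in Icc a b, k t s * g s)⁻¹ <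
      sInf {y : ℝ | ∃ t ∈ Icc a b, ∃ v ∈ Icc (c * (ρ - ε)) (ρ / c + ε), y = f t v / ρ})
    {u : C(Icc (0 : ℝ) 1, ℝ)}
    (hu : u ∈ closure (Vrho a b c ρ) ∩ closure (coneK a b c \ Vrho a b c ρ))
    {p : C(Icc (0 : ℝ) 1, ℝ)} (hp : 0 ≤ p)
    {y : C(Icc (0 : ℝ) 1, ℝ)} (hy : y ∈ ccEnvelope (coneK a b c) T u) :
    u ≠ y + p := by
  set N := ⨅ t : Icc a b, ∫ s in Icc a b, k t s * g s
  set m := sInf {y : ℝ | ∃ t ∈ Icc a b, ∃ v ∈ Icc (c * (ρ - ε)) (ρ / c + ε), y = f t v / ρ}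
  have hm_pos : 0 < m := (inv_pos.2 hM_pos).trans hI0
  obtain ⟨t, ht, hut⟩ := exists_apply_le_of_mem_closure_Vrho hu.1
  have hN_le : N ≤ ∫ s in Icc a b, k t s * g s := sInf_le_of_sInf_pos hM_pos ⟨⟨t, ht⟩, rfl⟩
  have hT_ge : ∀ v ∈ closedBall u (c * ε) ∩ coneK a b c, m * ρ * N ≤ T v t := by
    rintro v ⟨hvu, hvK⟩
    have hf_ge : ∀ s : Icc (0 : ℝ) 1, (s : ℝ) ∈ Icc a b → m * ρ ≤ f s (v s) := fun s hs =>
      (le_div_iff₀ hρ).1 <| sInf_le_of_sInf_pos hm_pos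
        ⟨s, hs, v s, apply_mem_Icc_of_mem_closedBall hc0 hc1 hε.le hρ.le hu hvu hs, rfl⟩
    calc m * ρ * N ≤ m * ρ * ∫ s in Icc a b, k t s * g s := by gcongr
      _ ≤ hamVal k g f v t := mul_setIntegral_le_hamVal ha0 hb1 hf_nonneg hf_meas hf_bdd
          (hkg_int t ht) (hkg_nonneg t ht) hvK.1 hf_ge
      _ = T v t := (hT v hvK t).symm
  have hy_ge : m * ρ * N ≤ y t :=
    le_map_of_mem_ccEnvelope (ContinuousMap.evalCLM ℝ t) (mul_pos hc0 hε) hT_ge hy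
  have hρ_lt : ρ < m * ρ * N := by
    rw [mul_right_comm]
    exact lt_mul_of_one_lt_left hρ ((inv_lt_iff_one_lt_mul₀ hM_pos).1 hI0)
  rintro rfl
  have hp_nonneg : 0 ≤ p t := hp t
  rw [ContinuousMap.add_apply] at hut
  linarith

/-- Under (H1)–(H4), condition `{u} ∩ 𝕋u ⊆ {Tu}` on `K ∩ 𝕋K` and condition `(I⁰_ρ)`
(`f_{ρ,ε} > M(a,b)` where `1/M(a,b) = inf_{t∈[a,b]} ∫ₐᵇ k(t,s)g(s) ds`), one has
`u ∉ 𝕋u + λe` for every `u` in the relative boundary of `V_ρ` in `K` and every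
`λ ≥ 0`, where `e ≡ 1`. -/
theorem hammerstein_index_condition_zero
    (a b c : ℝ) (ha0 : 0 ≤ a) (hab : a ≤ b) (hb1 : b ≤ 1) (hc0 : 0 < c) (hc1 : c ≤ 1)
    (f : ℝ → ℝ → ℝ) (g : ℝ → ℝ) (k : ℝ → ℝ → ℝ)
    -- (H1)
    (hf_nonneg : ∀ t ∈ Icc (0:ℝ) 1, ∀ v, 0 ≤ v → 0 ≤ f t v)
    (hf_meas : ∀ v : ℝ → ℝ, Continuous v → Measurable fun t => f t (v t))
    (hf_bdd : ∀ r > (0:ℝ), ∃ R > (0:ℝ),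
      ∀ᵐ t ∂(volume.restrict (Icc (0:ℝ) 1)), ∀ v ∈ Icc (0:ℝ) r, f t v ≤ R)
    -- (H2)
    (hg_meas : Measurable g)
    (hg_nonneg : ∀ᵐ s ∂(volume.restrict (Icc (0:ℝ) 1)), 0 ≤ g s)
    -- (H3)
    (hk_cont : ContinuousOn (fun p : ℝ × ℝ => k p.1 p.2) (Icc 0 1 ×ˢ Icc 0 1))
    (hk_nonneg : ∀ t ∈ Icc (0:ℝ) 1, ∀ s ∈ Icc (0:ℝ) 1, 0 ≤ k t s)
    -- (H4)
    (Φ : ℝ → ℝ) (hΦ_meas : Measurable Φ) (hΦ_nonneg : ∀ s ∈ Icc (0:ℝ) 1, 0 ≤ Φ s)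
    (hΦg_int : IntegrableOn (fun s => Φ s * g s) (Icc (0:ℝ) 1))
    (hΦg_pos : 0 < ∫ s in Icc a b, Φ s * g s)
    (hkΦ : ∀ t ∈ Icc (0:ℝ) 1, ∀ s ∈ Icc (0:ℝ) 1, k t s ≤ Φ s)
    (hckΦ : ∀ t ∈ Icc a b, ∀ s ∈ Icc (0:ℝ) 1, c * Φ s ≤ k t s)
    -- the Hammerstein operator
    (T : C(Icc (0:ℝ) 1, ℝ) → C(Icc (0:ℝ) 1, ℝ))
    (hT : ∀ u ∈ coneK a b c, ∀ t : Icc (0:ℝ) 1, T u t = hamVal k g f u t)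
    -- `{u} ∩ 𝕋u ⊆ {Tu}` for all `u ∈ K ∩ 𝕋K`
    (hcond : ∀ u ∈ coneK a b c ∩ (⋃ v ∈ coneK a b c, ccEnvelope (coneK a b c) T v),
      u ∈ ccEnvelope (coneK a b c) T u → u = T u)
    -- condition (I⁰_ρ)
    (ρ ε : ℝ) (hρ : 0 < ρ) (hε : 0 < ε)
    (hM_pos : 0 < ⨅ t : Icc a b, ∫ s in Icc a b, k t s * g s)
    (hI0 : (⨅ t : Icc a b, ∫ s in Icc a b, k t s * g s)⁻¹ <
      sInf {y : ℝ | ∃ t ∈ Icc a b, ∃ v ∈ Icc (c * (ρ - ε)) (ρ / c + ε), y = f t v / ρ}) :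
    ∀ u ∈ closure (Vrho a b c ρ) ∩ closure (coneK a b c \ Vrho a b c ρ),
      ∀ l : ℝ, 0 ≤ l → ∀ y ∈ ccEnvelope (coneK a b c) T u,
        u ≠ y + l • (1 : C(Icc (0:ℝ) 1, ℝ)) := by
  have hsub : Icc a b ⊆ Icc (0 : ℝ) 1 := Icc_subset_Icc ha0 hb1
  have hkg_int : ∀ t ∈ Icc a b, IntegrableOn (fun s => k t s * g s) (Icc (0 : ℝ) 1) :=
    fun t ht => integrableOn_mul_of_le measurableSet_Icc
      ((hk_cont.uncurry_left t (hsub ht)).aestronglyMeasurable measurableSet_Icc)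
      hg_meas.aestronglyMeasurable hΦg_int (hk_nonneg t (hsub ht)) (hkΦ t (hsub ht)) hg_nonneg
  have hkg_nonneg : ∀ t ∈ Icc a b,
      ∀ᵐ s ∂(volume.restrict (Icc (0 : ℝ) 1)), 0 ≤ k t s * g s :=
    fun t ht => ae_restrict_mul_nonneg measurableSet_Icc (hk_nonneg t (hsub ht)) hg_nonneg
  exact fun u hu l hl y hy => hammerstein_index_condition_zero_general ha0 hb1 hc0 hc1
    hf_nonneg hf_meas hf_bdd hkg_int hkg_nonneg hT hρ hε hM_pos hI0 hu
    (smul_nonneg hl zero_le_one) hy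
end

section
/- Let a, b ∈ ℝ with a < b, and let g, h ∈ L¹(a,b) with g ≥ 0 a.e. and h > 0 a.e. in (a,b). For every measurable set J ⊆ (a,b) with m(J) > 0 there is a measurable set J₀ ⊆ J with m(J \ J₀) = 0 such that for every τ₀ ∈ J₀: lim_{t→τ₀⁺} ( ∫_{[τ₀,t]\J} g(s) ds ) / ( ∫_{τ₀}^{t} h(s) ds ) = 0 and lim_{t→τ₀⁻} ( ∫_{[t,τ₀]\J} g(s) ds ) / ( ∫_{t}^{τ₀} h(s) ds ) = 0. -/
open Set MeasureTheory Filter Topology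

/-!
Dividing numerator and denominator by the length of the interval turns the quotient into a ratio of
averages, of `g` times the indicator of the complement of `J` and of `h`. By the Lebesgue
differentiation theorem, at almost every `τ₀ ∈ J` the former tends to `0`, the value of that product
at `τ₀`, and the latter to `h τ₀ ≠ 0`.
-/

section Measurable

variable {α : Type*} [MeasurableSpace α] {μ : Measure α}

theorem exists_measurableSet_subset_forall_of_ae_restrict {s : Set α} (hs : MeasurableSet s)
    {p : α → Prop} (hp : ∀ᵐ x ∂μ.restrict s, p x) :
    ∃ t ⊆ s, MeasurableSet t ∧ μ (s \ t) = 0 ∧ ∀ x ∈ t, p x := by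
  obtain ⟨u, hu_ae, hu_meas, hu⟩ := hp.exists_measurable_mem
  refine ⟨s ∩ u, inter_subset_left, hs.inter hu_meas, ?_, fun x hx ↦ hu x hx.2⟩
  rw [sdiff_self_inter, sdiff_eq_compl_inter, ← Measure.restrict_apply hu_meas.compl]
  exact mem_ae_iff.1 hu_ae

theorem setAverage_div_setAverage {𝕜 : Type*} [RCLike 𝕜] (f g : α → 𝕜) {s : Set α}
    (hs : μ s ≠ ⊤) :
    (⨍ x in s, f x ∂μ) / ⨍ x in s, g x ∂μ = (∫ x in s, f x ∂μ) / ∫ x in s, g x ∂μ := by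
  obtain hs_zero | hs_ne_zero := eq_or_ne (μ s) 0
  · simp only [Measure.restrict_eq_zero.2 hs_zero, average_zero_measure, integral_zero_measure]
  · have hs_inv : (((μ.real s)⁻¹ : ℝ) : 𝕜) ≠ 0 :=
      RCLike.ofReal_ne_zero.2 (inv_ne_zero ((measureReal_ne_zero_iff hs).2 hs_ne_zero))
    simp only [setAverage_eq, RCLike.real_smul_eq_coe_mul, mul_div_mul_left _ _ hs_inv]

end Measurable

section VitaliFamily

variable {α : Type*} [PseudoMetricSpace α] [SecondCountableTopology α] [MeasurableSpace α]
  [BorelSpace α] {μ : Measure α} [IsLocallyFiniteMeasure μ] (v : VitaliFamily μ) {U J : Set α}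

section NormedSpace

variable {E : Type*} [NormedAddCommGroup E] [NormedSpace ℝ E] [CompleteSpace E] {f : α → E}

theorem ae_restrict_tendsto_setAverage_of_integrableOn (hU : IsOpen U)
    (hf : IntegrableOn f U μ) :
    ∀ᵐ x ∂μ.restrict U, Tendsto (fun A ↦ ⨍ y in A, f y ∂μ) (v.filterAt x) (𝓝 (f x)) := by
  have hf_ind : Integrable (U.indicator f) μ := hf.integrable_indicator hU.measurableSet
  filter_upwards [ae_restrict_of_ae (v.ae_tendsto_average hf_ind.locallyIntegrable),
    ae_restrict_mem hU.measurableSet] with x hx hxU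
  rw [indicator_of_mem hxU] at hx
  refine hx.congr' ?_
  filter_upwards [v.eventually_filterAt_subset_of_nhds (hU.mem_nhds hxU),
    v.eventually_filterAt_measurableSet x] with A hAU hA
  exact setAverage_congr_fun hA (ae_of_all _ fun y hy ↦ indicator_of_mem (hAU hy) f)

theorem ae_restrict_tendsto_setAverage (hU : IsOpen U) (hf : LocallyIntegrableOn f U μ) :
    ∀ᵐ x ∂μ.restrict U, Tendsto (fun A ↦ ⨍ y in A, f y ∂μ) (v.filterAt x) (𝓝 (f x)) := by
  obtain ⟨u, hu_open, hUu, hfu⟩ := hf.exists_nat_integrableOn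
  have hU_eq : ⋃ n, u n ∩ U = U := by rw [← iUnion_inter, inter_eq_right.2 hUu]
  rw [← hU_eq, ae_restrict_iUnion_iff]
  exact fun n ↦ ae_restrict_tendsto_setAverage_of_integrableOn v ((hu_open n).inter hU) (hfu n)

theorem ae_restrict_tendsto_setAverage_indicator_compl (hU : IsOpen U)
    (hf : LocallyIntegrableOn f U μ) (hJ : MeasurableSet J) (hJU : J ⊆ U) :
    ∀ᵐ x ∂μ.restrict J,
      Tendsto (fun A ↦ ⨍ y in A, Jᶜ.indicator f y ∂μ) (v.filterAt x) (𝓝 0) := by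
  have hf_ind : LocallyIntegrableOn (Jᶜ.indicator f) U μ := fun x hx ↦
    let ⟨t, ht, hft⟩ := hf x hx
    ⟨t, ht, hft.indicator hJ.compl⟩
  filter_upwards [ae_restrict_of_ae_restrict_of_subset hJU
    (ae_restrict_tendsto_setAverage v hU hf_ind), ae_restrict_mem hJ] with x hx hxJ
  rwa [indicator_of_notMem (notMem_compl_iff.2 hxJ)] at hx

end NormedSpace

variable {𝕜 : Type*} [RCLike 𝕜] {g h : α → 𝕜}

theorem ae_restrict_tendsto_setIntegral_diff_div_setIntegral (hU : IsOpen U)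
    (hg : LocallyIntegrableOn g U μ) (hh : LocallyIntegrableOn h U μ)
    (hJ : MeasurableSet J) (hJU : J ⊆ U) (hh_ne : ∀ᵐ x ∂μ.restrict J, h x ≠ 0) :
    ∀ᵐ x ∂μ.restrict J,
      Tendsto (fun A ↦ (∫ y in A \ J, g y ∂μ) / ∫ y in A, h y ∂μ) (v.filterAt x) (𝓝 0) := by
  filter_upwards [ae_restrict_tendsto_setAverage_indicator_compl v hU hg hJ hJU,
    ae_restrict_of_ae_restrict_of_subset hJU (ae_restrict_tendsto_setAverage v hU hh), hh_ne]
    with x hgx hhx hx_ne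
  have h_div := hgx.div hhx hx_ne
  rw [zero_div] at h_div
  refine h_div.congr' ?_
  filter_upwards [v.eventually_measure_lt_top x] with A hA
  calc (⨍ y in A, Jᶜ.indicator g y ∂μ) / ⨍ y in A, h y ∂μ
    _ = (∫ y in A, Jᶜ.indicator g y ∂μ) / ∫ y in A, h y ∂μ :=
      setAverage_div_setAverage _ _ hA.ne
    _ = (∫ y in A \ J, g y ∂μ) / ∫ y in A, h y ∂μ := by
      rw [setIntegral_indicator hJ.compl, sdiff_eq]

end VitaliFamily

theorem density_quotient_tendsto_zero_general {𝕜 : Type*} [RCLike 𝕜] {U J : Set ℝ}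
    {g h : ℝ → 𝕜} (hU : IsOpen U) (hg : LocallyIntegrableOn g U) (hh : LocallyIntegrableOn h U)
    (hJ : MeasurableSet J) (hJU : J ⊆ U) (hh_ne : ∀ᵐ s ∂volume.restrict J, h s ≠ 0) :
    ∃ J₀ ⊆ J, MeasurableSet J₀ ∧ volume (J \ J₀) = 0 ∧
      ∀ τ₀ ∈ J₀,
        Tendsto (fun t ↦ (∫ s in Icc τ₀ t \ J, g s) / ∫ s in Icc τ₀ t, h s) (𝓝[>] τ₀) (𝓝 0) ∧
        Tendsto (fun t ↦ (∫ s in Icc t τ₀ \ J, g s) / ∫ s in Icc t τ₀, h s)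
          (𝓝[<] τ₀) (𝓝 0) := by
  refine exists_measurableSet_subset_forall_of_ae_restrict hJ ?_
  filter_upwards [ae_restrict_tendsto_setIntegral_diff_div_setIntegral
    (IsUnifLocDoublingMeasure.vitaliFamily volume 1) hU hg hh hJ hJU hh_ne] with τ₀ hτ₀
  exact ⟨hτ₀.comp (Real.tendsto_Icc_vitaliFamily_right τ₀),
    hτ₀.comp (Real.tendsto_Icc_vitaliFamily_left τ₀)⟩

/-- Lemma 4.1 of López Pouso: for `g, h ∈ L¹(a,b)` with `g ≥ 0` a.e. and `h > 0` a.e.,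
and any measurable `J ⊆ (a,b)` of positive measure, almost every point `τ₀ ∈ J`
satisfies `∫_{[τ₀,t]∖J} g / ∫_{τ₀}^{t} h → 0` as `t → τ₀⁺`, and symmetrically from
the left. -/
theorem density_quotient_tendsto_zero
    (a b : ℝ) (hab : a < b) (g h : ℝ → ℝ)
    (hg_int : IntegrableOn g (Ioo a b)) (hh_int : IntegrableOn h (Ioo a b))
    (hg_nonneg : ∀ᵐ s ∂(volume.restrict (Ioo a b)), 0 ≤ g s)
    (hh_pos : ∀ᵐ s ∂(volume.restrict (Ioo a b)), 0 < h s)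
    (J : Set ℝ) (hJ_meas : MeasurableSet J) (hJ_sub : J ⊆ Ioo a b)
    (hJ_pos : 0 < volume J) :
    ∃ J₀ ⊆ J, MeasurableSet J₀ ∧ volume (J \ J₀) = 0 ∧
      ∀ τ₀ ∈ J₀,
        Tendsto (fun t => (∫ s in Icc τ₀ t \ J, g s) / ∫ s in Icc τ₀ t, h s)
          (𝓝[>] τ₀) (𝓝 0) ∧
        Tendsto (fun t => (∫ s in Icc t τ₀ \ J, g s) / ∫ s in Icc t τ₀, h s)
          (𝓝[<] τ₀) (𝓝 0) :=
  density_quotient_tendsto_zero_general isOpen_Ioo hg_int.locallyIntegrableOn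
    hh_int.locallyIntegrableOn hJ_meas hJ_sub
    (ae_restrict_of_ae_restrict_of_subset hJ_sub (hh_pos.mono fun _ hs ↦ hs.ne'))
end

section
/- Let a, b ∈ ℝ with a < b, and let f, f_n : [a,b] → ℝ (n ∈ ℕ) be absolutely continuous functions on [a,b] such that f_n → f uniformly on [a,b], and suppose that for a measurable set A ⊆ [a,b] with m(A) > 0 one has lim_{n→∞} f_n'(t) = g(t) for a.e. t ∈ A. If there exists M ∈ L¹(a,b) such that |f'(t)| ≤ M(t) a.e. in [a,b] and |f_n'(t)| ≤ M(t) a.e. in [a,b] for every n ∈ ℕ, then f'(t) = g(t) for a.e. t ∈ A. -/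
open Set MeasureTheory Filter Topology intervalIntegral

/-!
Integrating the derivatives turns pointwise convergence `F n → f` into convergence of `∫ F' n` to
`∫ f'` over initial segments of `[a, b]`. These form a π-system generating the Borel sets, and
domination lets the convergence pass to countable disjoint unions, so it holds over every Borel
subset of `[a, b]`. On Borel subsets of `A` dominated convergence identifies the same limit as the
integral of the pointwise limit `g`, so `f'` and `g` have equal integrals over all of them.
-/

variable {E ι : Type*} [NormedAddCommGroup E] {l : Filter ι}

section Measure

variable {α : Type*} [MeasurableSpace α] {μ : Measure α} {u : ι → α → E} {v : α → E}
  {bound : α → ℝ}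

theorem integrable_of_tendsto_ae_of_norm_le [l.NeBot] [l.IsCountablyGenerated]
    (hu_meas : ∀ n, AEStronglyMeasurable (u n) μ) (hbound_int : Integrable bound μ)
    (hbound : ∀ n, ∀ᵐ x ∂μ, ‖u n x‖ ≤ bound x)
    (hlim : ∀ᵐ x ∂μ, Tendsto (fun n ↦ u n x) l (𝓝 (v x))) : Integrable v μ := by
  obtain ⟨k, hk⟩ := l.exists_seq_tendsto
  exact ⟨aestronglyMeasurable_of_tendsto_ae l hu_meas hlim,
    hasFiniteIntegral_of_dominated_convergence hbound_int.hasFiniteIntegral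
      (fun n ↦ hbound (k n)) (hlim.mono fun _ hx ↦ hx.comp hk)⟩

variable [NormedSpace ℝ E] [CompleteSpace E]

theorem tendsto_setIntegral_of_isPiSystem {C : Set (Set α)}
    (hC : ‹MeasurableSpace α› = MeasurableSpace.generateFrom C) (hC_pi : IsPiSystem C)
    (hu_int : ∀ n, Integrable (u n) μ) (hv_int : Integrable v μ)
    (hbound_int : Integrable bound μ) (hbound : ∀ n, ∀ᵐ x ∂μ, ‖u n x‖ ≤ bound x)
    (huniv : Tendsto (fun n ↦ ∫ x, u n x ∂μ) l (𝓝 (∫ x, v x ∂μ)))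
    (hgen : ∀ s ∈ C, Tendsto (fun n ↦ ∫ x in s, u n x ∂μ) l (𝓝 (∫ x in s, v x ∂μ)))
    {s : Set α} (hs : MeasurableSet s) :
    Tendsto (fun n ↦ ∫ x in s, u n x ∂μ) l (𝓝 (∫ x in s, v x ∂μ)) := by
  induction s, hs using MeasurableSpace.induction_on_inter hC hC_pi with
  | empty => simpa using tendsto_const_nhds
  | basic t ht => exact hgen t ht
  | compl t ht ih =>
    simpa only [setIntegral_compl ht (hu_int _), setIntegral_compl ht hv_int]
      using huniv.sub ih
  | iUnion t htd htm ih =>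
    have hsum : Summable fun i ↦ ∫ x in t i, bound x ∂μ :=
      (hasSum_integral_iUnion htm htd hbound_int.integrableOn).summable
    simp only [integral_iUnion htm htd (hu_int _).integrableOn,
      integral_iUnion htm htd hv_int.integrableOn]
    exact tendsto_tsum_of_dominated_convergence hsum ih <| .of_forall fun n i ↦
      norm_integral_le_of_norm_le hbound_int.integrableOn (ae_restrict_of_ae (hbound n))

theorem ae_eq_of_tendsto_setIntegral_of_tendsto_ae [l.NeBot] [l.IsCountablyGenerated]
    {w : α → E} (hu_meas : ∀ n, AEStronglyMeasurable (u n) μ)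
    (hw_int : Integrable w μ) (hbound_int : Integrable bound μ)
    (hbound : ∀ n, ∀ᵐ x ∂μ, ‖u n x‖ ≤ bound x)
    (hweak : ∀ s, MeasurableSet s →
      Tendsto (fun n ↦ ∫ x in s, u n x ∂μ) l (𝓝 (∫ x in s, w x ∂μ)))
    (hlim : ∀ᵐ x ∂μ, Tendsto (fun n ↦ u n x) l (𝓝 (v x))) : w =ᵐ[μ] v := by
  have hv_int : Integrable v μ :=
    integrable_of_tendsto_ae_of_norm_le hu_meas hbound_int hbound hlim
  refine hw_int.ae_eq_of_forall_setIntegral_eq w v hv_int fun s hs _ ↦ ?_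
  have hstrong : Tendsto (fun n ↦ ∫ x in s, u n x ∂μ) l (𝓝 (∫ x in s, v x ∂μ)) :=
    tendsto_integral_filter_of_dominated_convergence bound
      (.of_forall fun n ↦ (hu_meas n).restrict)
      (.of_forall fun n ↦ ae_restrict_of_ae (hbound n)) hbound_int.integrableOn
      (ae_restrict_of_ae hlim)
  exact tendsto_nhds_unique (hweak s hs) hstrong

end Measure

variable [NormedSpace ℝ E] [CompleteSpace E]

theorem tendsto_setIntegral_Ioc_of_tendsto_intervalIntegral {μ : Measure ℝ}
    {a b : ℝ} (hab : a ≤ b) {u : ι → ℝ → E} {v : ℝ → E} {bound : ℝ → ℝ}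
    (hu_int : ∀ n, IntegrableOn (u n) (Ioc a b) μ) (hv_int : IntegrableOn v (Ioc a b) μ)
    (hbound_int : IntegrableOn bound (Ioc a b) μ)
    (hbound : ∀ n, ∀ᵐ x ∂μ.restrict (Ioc a b), ‖u n x‖ ≤ bound x)
    (hlim : ∀ t ∈ Icc a b,
      Tendsto (fun n ↦ ∫ x in a..t, u n x ∂μ) l (𝓝 (∫ x in a..t, v x ∂μ)))
    {s : Set ℝ} (hs : MeasurableSet s) :
    Tendsto (fun n ↦ ∫ x in s, u n x ∂μ.restrict (Ioc a b)) l
      (𝓝 (∫ x in s, v x ∂μ.restrict (Ioc a b))) := by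
  have hIoc : ∀ t ∈ Icc a b,
      Tendsto (fun n ↦ ∫ x in Ioc a t, u n x ∂μ) l (𝓝 (∫ x in Ioc a t, v x ∂μ)) :=
    fun t ht ↦ by simpa only [integral_of_le ht.1] using hlim t ht
  have hIic : ∀ s ∈ range Iic, Tendsto (fun n ↦ ∫ x in s, u n x ∂μ.restrict (Ioc a b)) l
      (𝓝 (∫ x in s, v x ∂μ.restrict (Ioc a b))) := by
    rintro _ ⟨t, rfl⟩
    rw [Measure.restrict_restrict measurableSet_Iic, inter_comm, Ioc_inter_Iic]
    rcases le_total a t with hat | hta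
    · exact hIoc _ ⟨le_min hab hat, min_le_left b t⟩
    · simpa [Ioc_eq_empty_of_le (min_le_of_right_le hta)] using tendsto_const_nhds
  exact tendsto_setIntegral_of_isPiSystem
    (BorelSpace.measurable_eq.trans (borel_eq_generateFrom_Iic ℝ)) isPiSystem_Iic
    hu_int hv_int hbound_int hbound (hIoc b (right_mem_Icc.2 hab)) hIic hs

theorem ae_derivative_limit_general [l.NeBot] [l.IsCountablyGenerated]
    {a b : ℝ} (hab : a ≤ b) {f f' g : ℝ → E} {F F' : ι → ℝ → E} {M : ℝ → ℝ} {A : Set ℝ}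
    (hf'_int : IntegrableOn f' (Icc a b))
    (hf_ac : ∀ t ∈ Icc a b, f t = f a + ∫ s in a..t, f' s)
    (hF'_int : ∀ n, IntegrableOn (F' n) (Icc a b))
    (hF_ac : ∀ n, ∀ t ∈ Icc a b, F n t = F n a + ∫ s in a..t, F' n s)
    (hpointwise : ∀ t ∈ Icc a b, Tendsto (fun n ↦ F n t) l (𝓝 (f t)))
    (hA_meas : MeasurableSet A) (hA_sub : A ⊆ Icc a b)
    (hconv : ∀ᵐ t ∂volume.restrict A, Tendsto (fun n ↦ F' n t) l (𝓝 (g t)))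
    (hM_int : IntegrableOn M (Icc a b))
    (hdom : ∀ n, ∀ᵐ t ∂volume.restrict (Icc a b), ‖F' n t‖ ≤ M t) :
    ∀ᵐ t ∂volume.restrict A, f' t = g t := by
  have hprimitive : ∀ t ∈ Icc a b,
      Tendsto (fun n ↦ ∫ s in a..t, F' n s) l (𝓝 (∫ s in a..t, f' s)) := by
    intro t ht
    have hincrement := (hpointwise t ht).sub (hpointwise a (left_mem_Icc.2 hab))
    simpa only [hF_ac _ t ht, hf_ac t ht, add_sub_cancel_left] using hincrement
  have hweak : ∀ s, MeasurableSet s → Tendsto (fun n ↦ ∫ x in s, F' n x ∂volume.restrict A) l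
      (𝓝 (∫ x in s, f' x ∂volume.restrict A)) := by
    intro s hs
    have hsA : MeasurableSet (s ∩ A) := hs.inter hA_meas
    have hsub : s ∩ A ⊆ Icc a b := inter_subset_right.trans hA_sub
    simp only [IntegrableOn, ← restrict_Ioc_eq_restrict_Icc] at hf'_int hF'_int hM_int hdom
    simpa only [restrict_Ioc_eq_restrict_Icc, Measure.restrict_restrict_of_subset hsub,
      Measure.restrict_restrict hs] using
      tendsto_setIntegral_Ioc_of_tendsto_intervalIntegral hab hF'_int hf'_int hM_int hdom
        hprimitive hsA
  exact ae_eq_of_tendsto_setIntegral_of_tendsto_ae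
    (fun n ↦ ((hF'_int n).mono_set hA_sub).aestronglyMeasurable) (hf'_int.mono_set hA_sub)
    (hM_int.mono_set hA_sub) (fun n ↦ ae_restrict_of_ae_restrict_of_subset hA_sub (hdom n))
    hweak hconv

/-- Corollary 4.3 of López Pouso: if absolutely continuous functions `fₙ` (given with
their a.e. derivatives `F' n` via the fundamental theorem of calculus) converge
uniformly to an absolutely continuous function `f` (with a.e. derivative `f'`), the
derivatives `F' n` converge a.e. on a set `A` of positive measure to `g`, and all
derivatives are dominated by `M ∈ L¹(a,b)`, then `f' = g` a.e. on `A`. -/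
theorem ae_derivative_limit
    (a b : ℝ) (hab : a < b)
    (f f' gg M : ℝ → ℝ) (F F' : ℕ → ℝ → ℝ)
    -- `f` is absolutely continuous with a.e. derivative `f'`
    (hf'_int : IntegrableOn f' (Icc a b))
    (hf_ac : ∀ t ∈ Icc a b, f t = f a + ∫ s in a..t, f' s)
    -- each `fₙ` is absolutely continuous with a.e. derivative `F' n`
    (hF'_int : ∀ n, IntegrableOn (F' n) (Icc a b))
    (hF_ac : ∀ n, ∀ t ∈ Icc a b, F n t = F n a + ∫ s in a..t, F' n s)
    -- uniform convergence `fₙ → f` on `[a,b]`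
    (hunif : TendstoUniformlyOn F f atTop (Icc a b))
    -- `A ⊆ [a,b]` measurable of positive measure, `F' n → gg` a.e. on `A`
    (A : Set ℝ) (hA_meas : MeasurableSet A) (hA_sub : A ⊆ Icc a b)
    (hA_pos : 0 < volume A)
    (hconv : ∀ᵐ t ∂(volume.restrict A), Tendsto (fun n => F' n t) atTop (𝓝 (gg t)))
    -- domination by `M ∈ L¹(a,b)`
    (hM_int : IntegrableOn M (Icc a b))
    (hdom : ∀ᵐ t ∂(volume.restrict (Icc a b)), |f' t| ≤ M t)
    (hdom' : ∀ n, ∀ᵐ t ∂(volume.restrict (Icc a b)), |F' n t| ≤ M t) :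
    ∀ᵐ t ∂(volume.restrict A), f' t = gg t :=
  ae_derivative_limit_general hab.le hf'_int hf_ac hF'_int hF_ac
    (fun _ ht ↦ hunif.tendsto_at ht) hA_meas hA_sub hconv hM_int hdom'
end

section
/- Let M ∈ L¹(0,1) with M ≥ 0 a.e., and let Q = { u ∈ C¹([0,1]) : |u'(t) − u'(s)| ≤ ∫ₛᵗ M(r) dr whenever 0 ≤ s ≤ t ≤ 1 }. Then Q is a closed subset of C([0,1]) with the maximum norm topology: if u_n ∈ Q for all n and u_n → u uniformly on [0,1], then u ∈ Q. -/
open Set MeasureTheory Filter Topology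

/-- `u` belongs to the set `Q = {u ∈ C¹([0,1]) : |u'(t) − u'(s)| ≤ ∫ₛᵗ M, 0 ≤ s ≤ t ≤ 1}`. -/
def memQ (M : ℝ → ℝ) (u : ℝ → ℝ) : Prop :=
  ∃ u' : ℝ → ℝ,
    (∀ t ∈ Icc (0:ℝ) 1, HasDerivWithinAt u (u' t) (Icc (0:ℝ) 1) t) ∧
    ContinuousOn u' (Icc (0:ℝ) 1) ∧
    ∀ s t : ℝ, 0 ≤ s → s ≤ t → t ≤ 1 → |u' t - u' s| ≤ ∫ r in Icc s t, M r

/-! The derivatives of the elements of `Q` share the modulus of continuity `|∫ₓʸ M|`, so by the mean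
value inequality the difference quotients at `x` converge to the derivative at `x` uniformly over
`Q`. By the Moore–Osgood theorem the limits `y → x` and `n → ∞` of the difference quotients then
exist and may be interchanged. Hence pointwise convergence of functions in `Q` already forces
pointwise convergence of their derivatives, to the derivative of the limit function. -/

theorem exists_tendsto_of_tendstoUniformlyOnFilter {α β E : Type*} [UniformSpace E]
    [CompleteSpace E] {p : Filter α} [p.NeBot] {q : Filter β} [q.NeBot]
    {F : α → β → E} {f : β → E} {L : α → E} (hF : TendstoUniformlyOnFilter F f p q)
    (hL : ∀ᶠ a in p, Tendsto (F a) q (𝓝 (L a))) :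
    ∃ c, Tendsto f q (𝓝 c) ∧ Tendsto L p (𝓝 c) := by
  have hL_cauchy : Cauchy (map L p) := by
    rw [cauchy_map_iff']
    refine uniformity_hasBasis_closed.tendsto_right_iff.2 fun V ⟨hV, hV_closed⟩ ↦ ?_
    filter_upwards [(hF.uniformCauchySeqOnFilter V hV).curry, hL.prod_mk hL] with a hFa ⟨hL₁, hL₂⟩
    exact hV_closed.mem_of_tendsto (hL₁.prodMk_nhds hL₂) hFa
  obtain ⟨c, hc⟩ := CompleteSpace.complete hL_cauchy
  exact ⟨c, hF.tendsto_of_eventually_tendsto hL hc, hc⟩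

section Derivative

variable {𝕜 G : Type*} [RCLike 𝕜] [NormedAddCommGroup G] [NormedSpace 𝕜 G] {s : Set 𝕜} {x : 𝕜}

theorem norm_slope_sub_le_of_norm_hasDerivWithin_sub_le {f f' : 𝕜 → G} {c : G} {C : ℝ} {y : 𝕜}
    (hs : Convex ℝ s) (hf : ∀ z ∈ s, HasDerivWithinAt f (f' z) s z)
    (bound : ∀ z ∈ s, ‖f' z - c‖ ≤ C) (hx : x ∈ s) (hy : y ∈ s) (hyx : y ≠ x) :
    ‖slope f x y - c‖ ≤ C := by
  have hderiv : ∀ z ∈ s, HasDerivWithinAt (fun z ↦ f z - z • c) (f' z - c) s z := fun z hz ↦ by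
    simpa using (hf z hz).fun_sub ((hasDerivWithinAt_id z s).smul_const c)
  have hmean := hs.norm_image_sub_le_of_norm_hasDerivWithin_le hderiv bound hx hy
  have hyx' : y - x ≠ 0 := sub_ne_zero.2 hyx
  have hslope : slope f x y - c = (y - x)⁻¹ • (f y - y • c - (f x - x • c)) := by
    rw [slope_def_module, sub_sub_sub_comm, ← sub_smul, smul_sub _ (f y - f x),
      inv_smul_smul₀ hyx']
  rw [hslope, norm_smul, norm_inv, inv_mul_le_iff₀ (norm_pos_iff.2 hyx'), mul_comm]
  exact hmean

variable {ι : Type*} {f f' : ι → 𝕜 → G}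

theorem tendstoUniformly_slope_of_equicontinuousWithinAt (hs : Convex ℝ s) (hx : x ∈ s)
    (hf : ∀ i, ∀ y ∈ s, HasDerivWithinAt (f i) (f' i y) s y)
    (hf' : EquicontinuousWithinAt f' s x) :
    TendstoUniformly (fun y i ↦ slope (f i) x y) (fun i ↦ f' i x) (𝓝[s \ {x}] x) := by
  rw [Metric.tendstoUniformly_iff]
  intro ε hε
  obtain ⟨δ, hδ, hball⟩ := (Metric.nhdsWithin_basis_ball.equicontinuousWithinAt_iff
    Metric.uniformity_basis_dist_le).1 hf' (ε / 2) (half_pos hε)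
  filter_upwards [self_mem_nhdsWithin, mem_nhdsWithin_of_mem_nhds (Metric.ball_mem_nhds x hδ)]
    with y ⟨hys, hyx⟩ hyδ i
  have hslope : ‖slope (f i) x y - f' i x‖ ≤ ε / 2 :=
    norm_slope_sub_le_of_norm_hasDerivWithin_sub_le ((convex_ball x δ).inter hs)
      (fun z hz ↦ (hf i z hz.2).mono inter_subset_right)
      (fun z hz ↦ by simpa [dist_eq_norm'] using hball z hz i)
      ⟨Metric.mem_ball_self hδ, hx⟩ ⟨hyδ, hys⟩ hyx
  rw [dist_eq_norm']
  exact hslope.trans_lt (half_lt_self hε)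

variable [CompleteSpace G] {l : Filter ι} [l.NeBot] {g : 𝕜 → G}

theorem exists_hasDerivWithinAt_of_equicontinuousWithinAt (hs : Convex ℝ s)
    (hs' : UniqueDiffWithinAt 𝕜 s x) (hx : x ∈ s)
    (hf : ∀ i, ∀ y ∈ s, HasDerivWithinAt (f i) (f' i y) s y)
    (hf' : EquicontinuousWithinAt f' s x) (hfg : ∀ y ∈ s, Tendsto (f · y) l (𝓝 (g y))) :
    ∃ c, Tendsto (f' · x) l (𝓝 c) ∧ HasDerivWithinAt g c s x := by
  have : (𝓝[s \ {x}] x).NeBot := accPt_principal_iff_nhdsWithin.1 hs'.accPt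
  have hslope : ∀ᶠ y in 𝓝[s \ {x}] x, Tendsto (fun i ↦ slope (f i) x y) l (𝓝 (slope g x y)) := by
    filter_upwards [self_mem_nhdsWithin] with y hy
    exact ((hfg y hy.1).sub (hfg x hx)).const_smul _
  simp only [hasDerivWithinAt_iff_tendsto_slope]
  exact exists_tendsto_of_tendstoUniformlyOnFilter
    ((tendstoUniformly_slope_of_equicontinuousWithinAt hs hx hf hf').tendstoUniformlyOnFilter
      |>.mono_right le_top) hslope

theorem exists_hasDerivWithinAt_continuousOn_of_equicontinuousOn (hs : Convex ℝ s)
    (hs' : UniqueDiffOn 𝕜 s) (hf : ∀ i, ∀ x ∈ s, HasDerivWithinAt (f i) (f' i x) s x)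
    (hf' : EquicontinuousOn f' s) (hfg : ∀ x ∈ s, Tendsto (f · x) l (𝓝 (g x))) :
    ∃ g' : 𝕜 → G, (∀ x ∈ s, Tendsto (f' · x) l (𝓝 (g' x))) ∧
      (∀ x ∈ s, HasDerivWithinAt g (g' x) s x) ∧ ContinuousOn g' s := by
  choose! g' hg' hg using fun x hx ↦
    exists_hasDerivWithinAt_of_equicontinuousWithinAt hs (hs' x hx) hx hf (hf' x hx) hfg
  exact ⟨g', hg', hg, Tendsto.continuousOn_of_equicontinuousOn hg' hf'⟩

end Derivative

theorem equicontinuousOn_Icc_of_dist_le_setIntegral {ι E : Type*} [PseudoMetricSpace E]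
    {μ : Measure ℝ} [NullSingletonClass μ] {M : ℝ → ℝ} {a b : ℝ} {f : ι → ℝ → E}
    (hM : IntegrableOn M (Icc a b) μ)
    (hf : ∀ i s t, a ≤ s → s ≤ t → t ≤ b → dist (f i s) (f i t) ≤ ∫ r in Icc s t, M r ∂μ) :
    EquicontinuousOn f (Icc a b) := by
  intro x hx
  have hab : a ≤ b := hx.1.trans hx.2
  have hmodulus : ∀ i, ∀ y ∈ Icc a b, dist (f i x) (f i y) ≤ |∫ r in x..y, M r ∂μ| := by
    intro i y hy
    rcases le_total x y with hxy | hyx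
    · rw [intervalIntegral.integral_of_le hxy, ← integral_Icc_eq_integral_Ioc]
      exact (hf i x y hx.1 hxy hy.2).trans (le_abs_self _)
    · rw [dist_comm, intervalIntegral.integral_symm, abs_neg, intervalIntegral.integral_of_le hyx,
        ← integral_Icc_eq_integral_Ioc]
      exact (hf i y x hy.1 hyx hx.2).trans (le_abs_self _)
  have hlim : Tendsto (fun y ↦ |∫ r in x..y, M r ∂μ|) (𝓝[Icc a b] x) (𝓝 0) := by
    rw [← uIcc_of_le hab] at hM hx ⊢
    simpa [ContinuousWithinAt] using
      (intervalIntegral.continuousOn_primitive_interval' hM.intervalIntegrable hx x hx).abs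
  refine (Metric.uniformity_basis_dist.equicontinuousWithinAt_iff_right).2 fun ε hε ↦ ?_
  filter_upwards [self_mem_nhdsWithin, hlim.eventually_lt_const hε] with y hy hyε i
  exact (hmodulus i y hy).trans_lt hyε

theorem Q_is_closed_general {ι : Type*} {l : Filter ι} [l.NeBot] {M : ℝ → ℝ}
    (hM : IntegrableOn M (Icc (0 : ℝ) 1)) {uN : ι → ℝ → ℝ} (hN : ∀ n, memQ M (uN n))
    {u : ℝ → ℝ} (hu : ∀ t ∈ Icc (0 : ℝ) 1, Tendsto (uN · t) l (𝓝 (u t))) :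
    memQ M u := by
  choose uN' hderiv _ hbound using hN
  have hequi : EquicontinuousOn uN' (Icc 0 1) :=
    equicontinuousOn_Icc_of_dist_le_setIntegral hM fun n s t hs hst ht ↦ by
      simpa [Real.dist_eq, abs_sub_comm] using hbound n s t hs hst ht
  obtain ⟨u', hlim, hu', hcont⟩ := exists_hasDerivWithinAt_continuousOn_of_equicontinuousOn
    (convex_Icc 0 1) (uniqueDiffOn_Icc zero_lt_one) hderiv hequi hu
  refine ⟨u', hu', hcont, fun s t hs hst ht ↦ ?_⟩
  have hlim_sub : Tendsto (fun n ↦ |uN' n t - uN' n s|) l (𝓝 |u' t - u' s|) :=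
    ((hlim t ⟨hs.trans hst, ht⟩).sub (hlim s ⟨hs, hst.trans ht⟩)).abs
  exact le_of_tendsto' hlim_sub fun n ↦ hbound n s t hs hst ht

/-- For `M ∈ L¹(0,1)`, `M ≥ 0` a.e., the set `Q` is closed in `C([0,1])` with the
maximum norm topology: a uniform limit of elements of `Q` belongs to `Q`. -/
theorem Q_is_closed
    (M : ℝ → ℝ) (hM_int : IntegrableOn M (Icc (0:ℝ) 1))
    (hM_nonneg : ∀ᵐ r ∂(volume.restrict (Icc (0:ℝ) 1)), 0 ≤ M r)
    (uN : ℕ → ℝ → ℝ) (hN : ∀ n, memQ M (uN n))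
    (u : ℝ → ℝ) (hu : TendstoUniformlyOn uN u atTop (Icc (0:ℝ) 1)) :
    memQ M u := by
  exact Q_is_closed_general hM_int hN fun t ht ↦ hu.tendsto_at ht
end

section
/- Let M ∈ L¹(0,1) with M ≥ 0 a.e., and let Q = { u ∈ C¹([0,1]) : |u'(t) − u'(s)| ≤ ∫ₛᵗ M(r) dr whenever 0 ≤ s ≤ t ≤ 1 }. If u_n ∈ Q for all n ∈ ℕ and u_n → u uniformly on [0,1], then there exists a subsequence (u_{n_k}) which converges to u in the C¹ norm; in particular u ∈ C¹([0,1]) and u_{n_k}' → u' uniformly on [0,1]. -/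
open Set MeasureTheory Filter Topology

/-!
The primitive of `M` is uniformly continuous and its increments dominate those of every `uₙ'`, so
the derivatives are uniformly equicontinuous. By the mean value inequality, the difference quotients
of `uₙ` with a small step `h` are then within `ε` of `uₙ'`, uniformly in `n`; for fixed `h` these
quotients converge uniformly because `uₙ` does. Hence `uₙ'` is uniformly Cauchy, and the whole
sequence converges in `C¹` without passing to a subsequence.
-/

theorem uniformEquicontinuousOn_of_dist_le_dist {ι α β γ : Type*} [UniformSpace α]
    [PseudoMetricSpace β] [PseudoMetricSpace γ] {F : ι → α → β} {G : α → γ} {s : Set α}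
    (hG : UniformContinuousOn G s)
    (hFG : ∀ i, ∀ x ∈ s, ∀ y ∈ s, dist (F i x) (F i y) ≤ dist (G x) (G y)) :
    UniformEquicontinuousOn F s := by
  intro U hU
  obtain ⟨ε, hε, hεU⟩ := Metric.mem_uniformity_dist.1 hU
  filter_upwards [hG (Metric.dist_mem_uniformity hε), mem_inf_of_right (mem_principal_self _)]
    with ⟨x, y⟩ hGxy ⟨hx, hy⟩ i
  exact hεU ((hFG i x hx y hy).trans_lt hGxy)

theorem setIntegral_Ioc_sub_setIntegral_Ioc {X E : Type*} [LinearOrder X] [TopologicalSpace X]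
    [OrderClosedTopology X] [MeasurableSpace X] [OpensMeasurableSpace X] [NormedAddCommGroup E]
    [NormedSpace ℝ E] {μ : Measure X} {f : X → E} {a s t : X} (hf : IntegrableOn f (Ioc a t) μ)
    (has : a ≤ s) (hst : s ≤ t) :
    (∫ r in Ioc a t, f r ∂μ) - ∫ r in Ioc a s, f r ∂μ = ∫ r in Ioc s t, f r ∂μ := by
  rw [← Ioc_union_Ioc_eq_Ioc has hst,
    setIntegral_union (Ioc_disjoint_Ioc_of_le le_rfl) measurableSet_Ioc
      (hf.mono_set (Ioc_subset_Ioc_right hst)) (hf.mono_set (Ioc_subset_Ioc_left has)),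
    add_sub_cancel_left]

theorem uniformEquicontinuousOn_Icc_of_norm_sub_le_integral {ι E : Type*}
    [SeminormedAddCommGroup E] {μ : Measure ℝ} [NullSingletonClass μ] {F : ι → ℝ → E}
    {M : ℝ → ℝ} {a b : ℝ} (hM : IntegrableOn M (Icc a b) μ)
    (hF : ∀ i, ∀ s t : ℝ, a ≤ s → s ≤ t → t ≤ b → ‖F i t - F i s‖ ≤ ∫ r in Icc s t, M r ∂μ) :
    UniformEquicontinuousOn F (Icc a b) := by
  refine uniformEquicontinuousOn_of_dist_le_dist
    (isCompact_Icc.uniformContinuousOn_of_continuous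
      (intervalIntegral.continuousOn_primitive hM)) fun i s hs t ht => ?_
  wlog hst : s ≤ t generalizing s t
  · rw [dist_comm, dist_comm (∫ r in Ioc a s, M r ∂μ)]
    exact this t ht s hs (le_of_not_ge hst)
  calc dist (F i s) (F i t) ≤ ∫ r in Icc s t, M r ∂μ := by
        rw [dist_comm, dist_eq_norm]
        exact hF i s t hs.1 hst ht.2
    _ = (∫ r in Ioc a t, M r ∂μ) - ∫ r in Ioc a s, M r ∂μ := by
        have hM' : IntegrableOn M (Ioc a t) μ :=
          hM.mono_set (Ioc_subset_Icc_self.trans (Icc_subset_Icc_right ht.2))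
        rw [integral_Icc_eq_integral_Ioc, setIntegral_Ioc_sub_setIntegral_Ioc hM' hs.1 hst]
    _ ≤ dist (∫ r in Ioc a s, M r ∂μ) (∫ r in Ioc a t, M r ∂μ) := by
        rw [dist_comm]
        exact le_abs_self _

theorem exists_tendstoUniformlyOn_of_uniformCauchySeqOn {ι α β : Type*} [UniformSpace β]
    [CompleteSpace β] [Nonempty β] {l : Filter ι} [l.NeBot] {F : ι → α → β} {s : Set α}
    (hF : UniformCauchySeqOn F l s) : ∃ g : α → β, TendstoUniformlyOn F g l s := by
  choose! g hg using fun x (hx : x ∈ s) => CompleteSpace.complete (hF.cauchy_map hx)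
  exact ⟨g, hF.tendstoUniformlyOn_of_tendsto hg⟩

theorem exists_mem_dist_eq_of_convex {s : Set ℝ} (hs : Convex ℝ s) {a b x h : ℝ} (ha : a ∈ s)
    (hb : b ∈ s) (hx : x ∈ s) (hh₀ : 0 ≤ h) (hh : h ≤ (b - a) / 2) : ∃ y ∈ s, dist y x = h := by
  have hs' : s.OrdConnected := hs.ordConnected
  rcases le_total x ((a + b) / 2) with hx' | hx'
  · exact ⟨x + h, hs'.out hx hb ⟨by linarith, by linarith⟩, by simp [abs_of_nonneg hh₀]⟩
  · exact ⟨x - h, hs'.out ha hx ⟨by linarith, by linarith⟩, by simp [abs_of_nonneg hh₀]⟩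

section Equidifferentiability

variable {ι E : Type*} [NormedAddCommGroup E] [NormedSpace ℝ E]
  {f f' : ι → ℝ → E} {u : ℝ → E} {l : Filter ι} {s : Set ℝ}

/-- The functions `f i` are differentiable within `s` with derivatives `f' i`, the first-order
remainder being `o(|y - x|)` uniformly in the index `i` and in the base point `x ∈ s`. -/
def UniformEquidifferentiableOn (f f' : ι → ℝ → E) (s : Set ℝ) : Prop :=
  ∀ ε > 0, ∃ δ > 0, ∀ i, ∀ x ∈ s, ∀ y ∈ s, dist y x < δ →
    ‖f i y - f i x - (y - x) • f' i x‖ ≤ ε * ‖y - x‖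

theorem uniformEquidifferentiableOn_of_uniformEquicontinuousOn (hs : Convex ℝ s)
    (hf : ∀ i, ∀ x ∈ s, HasDerivWithinAt (f i) (f' i x) s x)
    (hf' : UniformEquicontinuousOn f' s) : UniformEquidifferentiableOn f f' s := by
  intro ε hε
  obtain ⟨δ, hδ, hδε⟩ := (Metric.uniformity_basis_dist.inf_principal _).eventually_iff.1
    (hf' _ (Metric.dist_mem_uniformity hε))
  refine ⟨δ, hδ, fun i x hx y hy hyx => ?_⟩
  have hclose : ∀ z ∈ s ∩ Metric.ball x δ, dist (f' i z) (f' i x) ≤ ε := fun z hz =>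
    (@hδε (z, x) ⟨hz.2, hz.1, hx⟩ i).le
  have hbound : ∀ z ∈ s ∩ Metric.ball x δ, ‖ContinuousLinearMap.toSpanSingleton ℝ (f' i z) -
      ContinuousLinearMap.toSpanSingleton ℝ (f' i x)‖ ≤ ε := fun z hz => by
    rw [← dist_eq_norm]
    exact ((ContinuousLinearMap.toSpanSingletonLIE ℝ E).dist_map _ _).trans_le (hclose z hz)
  exact (hs.inter (convex_ball x δ)).norm_image_sub_le_of_norm_hasFDerivWithin_le'
    (fun z hz => ((hf i z hz.1).mono inter_subset_left).hasFDerivWithinAt) hbound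
    ⟨hx, Metric.mem_ball_self hδ⟩ ⟨hy, hyx⟩

namespace UniformEquidifferentiableOn

theorem uniformCauchySeqOn_deriv (h : UniformEquidifferentiableOn f f' s) (hs : Convex ℝ s)
    (hs' : s.Nontrivial) (hf : UniformCauchySeqOn f l s) : UniformCauchySeqOn f' l s := by
  intro U hU
  obtain ⟨ε, hε, hεU⟩ := Metric.mem_uniformity_dist.1 hU
  obtain ⟨a, ha, b, hb, hab⟩ := hs'.exists_lt
  obtain ⟨δ, hδ, hremainder⟩ := h (ε / 4) (by positivity)
  obtain ⟨η, hη, hηlt⟩ := exists_between (lt_min hδ (half_pos (sub_pos.2 hab)))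
  filter_upwards [hf _ (Metric.dist_mem_uniformity (show 0 < ε * η / 8 by positivity))]
    with ⟨i, j⟩ hij x hx
  obtain ⟨y, hy, hyx⟩ :=
    exists_mem_dist_eq_of_convex hs ha hb hx hη.le (hηlt.le.trans (min_le_right _ _))
  have hyxδ : dist y x < δ := hyx.trans_lt (hηlt.trans_le (min_le_left _ _))
  have hyx_norm : ‖y - x‖ = η := by rw [← dist_eq_norm, hyx]
  have hi := hremainder i x hx y hy hyxδ
  have hj := hremainder j x hx y hy hyxδ
  have hfx : ‖f i x - f j x‖ < ε * η / 8 := by simpa only [← dist_eq_norm] using hij x hx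
  have hfy : ‖f i y - f j y‖ < ε * η / 8 := by simpa only [← dist_eq_norm] using hij y hy
  rw [hyx_norm] at hi hj
  have hscaled : η * ‖f' i x - f' j x‖ < η * ε :=
    calc η * ‖f' i x - f' j x‖
        = ‖(f i y - f j y) - (f i x - f j x) - (f i y - f i x - (y - x) • f' i x)
            + (f j y - f j x - (y - x) • f' j x)‖ := by
          rw [← hyx_norm, ← norm_smul, smul_sub]
          congr 1
          abel
      _ ≤ ‖f i y - f j y‖ + ‖f i x - f j x‖ + ‖f i y - f i x - (y - x) • f' i x‖
            + ‖f j y - f j x - (y - x) • f' j x‖ :=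
          norm_add_le_of_le (norm_sub_le_of_le (norm_sub_le _ _) le_rfl) le_rfl
      _ < η * ε := by linarith [mul_pos hε hη]
  exact hεU ((dist_eq_norm _ _).trans_lt (lt_of_mul_lt_mul_left hscaled hη.le))

theorem hasDerivWithinAt_of_tendsto [l.NeBot] (h : UniformEquidifferentiableOn f f' s)
    (hf : ∀ x ∈ s, Tendsto (f · x) l (𝓝 (u x))) {x : ℝ} {v : E} (hx : x ∈ s)
    (hf' : Tendsto (f' · x) l (𝓝 v)) : HasDerivWithinAt u v s x := by
  rw [hasDerivWithinAt_iff_isLittleO, Asymptotics.isLittleO_iff]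
  intro ε hε
  obtain ⟨δ, hδ, hremainder⟩ := h ε hε
  filter_upwards [self_mem_nhdsWithin, mem_nhdsWithin_of_mem_nhds (Metric.ball_mem_nhds x hδ)]
    with y hy hyx
  exact le_of_tendsto (((hf y hy).sub (hf x hx)).sub (hf'.const_smul (y - x))).norm
    (Eventually.of_forall fun i => hremainder i x hx y hy hyx)

end UniformEquidifferentiableOn

theorem Q_subsequence_C1_convergence_general [CompleteSpace E] [l.NeBot] (hs : Convex ℝ s)
    (hs' : s.Nontrivial) (hf : ∀ i, ∀ x ∈ s, HasDerivWithinAt (f i) (f' i x) s x)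
    (hf' : UniformEquicontinuousOn f' s) (hu : TendstoUniformlyOn f u l s) :
    ∃ u' : ℝ → E, (∀ x ∈ s, HasDerivWithinAt u (u' x) s x) ∧ ContinuousOn u' s ∧
      TendstoUniformlyOn f' u' l s := by
  have hdiff := uniformEquidifferentiableOn_of_uniformEquicontinuousOn hs hf hf'
  obtain ⟨u', hu'⟩ := exists_tendstoUniformlyOn_of_uniformCauchySeqOn
    (hdiff.uniformCauchySeqOn_deriv hs hs' hu.uniformCauchySeqOn)
  refine ⟨u', fun x hx => ?_, ?_, hu'⟩
  · exact hdiff.hasDerivWithinAt_of_tendsto (fun y hy => hu.tendsto_at hy) hx (hu'.tendsto_at hx)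
  · exact (Tendsto.uniformContinuousOn_of_uniformEquicontinuousOn
      (fun x hx => hu'.tendsto_at hx) hf').continuousOn

end Equidifferentiability

/-- For `M ∈ L¹(0,1)`, `M ≥ 0` a.e., if `uₙ` belong to
`Q = {u ∈ C¹([0,1]) : |u'(t) − u'(s)| ≤ ∫ₛᵗ M, 0 ≤ s ≤ t ≤ 1}` (with derivatives
`dN n`) and `uₙ → u` uniformly on `[0,1]`, then some subsequence of `uₙ` converges to
`u` in the `C¹` norm: `u ∈ C¹([0,1])` and the corresponding derivatives converge
uniformly to `u'`. -/
theorem Q_subsequence_C1_convergence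
    (M : ℝ → ℝ) (hM_int : IntegrableOn M (Icc (0:ℝ) 1))
    (hM_nonneg : ∀ᵐ r ∂(volume.restrict (Icc (0:ℝ) 1)), 0 ≤ M r)
    (uN : ℕ → ℝ → ℝ) (dN : ℕ → ℝ → ℝ)
    (hderiv : ∀ n, ∀ t ∈ Icc (0:ℝ) 1, HasDerivWithinAt (uN n) (dN n t) (Icc (0:ℝ) 1) t)
    (hcont : ∀ n, ContinuousOn (dN n) (Icc (0:ℝ) 1))
    (hQ : ∀ n, ∀ s t : ℝ, 0 ≤ s → s ≤ t → t ≤ 1 → |dN n t - dN n s| ≤ ∫ r in Icc s t, M r)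
    (u : ℝ → ℝ) (hu : TendstoUniformlyOn uN u atTop (Icc (0:ℝ) 1)) :
    ∃ φ : ℕ → ℕ, StrictMono φ ∧ ∃ u' : ℝ → ℝ,
      (∀ t ∈ Icc (0:ℝ) 1, HasDerivWithinAt u (u' t) (Icc (0:ℝ) 1) t) ∧
      ContinuousOn u' (Icc (0:ℝ) 1) ∧
      TendstoUniformlyOn (fun k => uN (φ k)) u atTop (Icc (0:ℝ) 1) ∧
      TendstoUniformlyOn (fun k => dN (φ k)) u' atTop (Icc (0:ℝ) 1) := by
  obtain ⟨u', hu', hcont', htendsto⟩ := Q_subsequence_C1_convergence_general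
    (convex_Icc 0 1) ⟨0, unitInterval.zero_mem, 1, unitInterval.one_mem, zero_ne_one⟩
    hderiv (uniformEquicontinuousOn_Icc_of_norm_sub_le_integral hM_int hQ) hu
  exact ⟨id, strictMono_id, u', hu', hcont', hu, htendsto⟩
end

section
/- Let α, β, γ, δ ≥ 0 with Γ := γβ + αγ + αδ > 0, and let G(t,s) = (1/Γ)·(γ + δ − γt)(β + αs) if 0 ≤ s ≤ t ≤ 1 and G(t,s) = (1/Γ)·(β + αt)(γ + δ − γs) if 0 ≤ t < s ≤ 1. Then G is nonnegative, G(t,s) ≤ G(s,s) for all t, s ∈ [0,1], and if a, b ∈ [0,1] satisfy −β/α < a < b < 1 + δ/γ (with β/α = ∞ if α = 0 and δ/γ = ∞ if γ = 0) and c = min{ (γ + δ − γb)/(γ + δ), (β + αa)/(α + β) }, then c·G(s,s) ≤ G(t,s) for all t ∈ [a,b] and s ∈ [0,1]. -/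
open Set

/-- The Green's function of the Sturm–Liouville problem `u'' + h = 0`,
`αu(0) − βu'(0) = 0`, `γu(1) + δu'(1) = 0`. -/
noncomputable def GreenG (α β γ δ : ℝ) (t s : ℝ) : ℝ :=
  (1 / (γ * β + α * γ + α * δ)) *
    (if s ≤ t then (γ + δ - γ * t) * (β + α * s) else (β + α * t) * (γ + δ - γ * s))

/-!
Let `ψ` and `φ` be the solutions of `u'' = 0` satisfying the left and the right boundary condition.
Then `G(t,s) = φ(max t s) ψ(min t s) / Γ`, where `Γ = φψ' − φ'ψ` is their Wronskian, `ψ` is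
increasing and `φ` is decreasing. Passing from `(s,s)` to `(t,s)` replaces exactly one of the
factors `φ(s)`, `ψ(s)` by its value at `t`. That value is no larger, but for `t ∈ [a,b]` it is at
least `c` times the maximum of the factor over `[0,1]`, which is `φ(0)` or `ψ(1)`.
-/

/-- The solution `ψ(x) = β + αx` of `u'' = 0` with `αu(0) − βu'(0) = 0`. Reflecting the interval
swaps the two boundary conditions, so `φ(x) = γ + δ − γx`, the solution with
`γu(1) + δu'(1) = 0`, is encoded as `boundarySol γ δ (1 - x)`. -/
def boundarySol (α β x : ℝ) : ℝ := β + α * x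

/-- The set where both boundary solutions are nonnegative, that is `[−β/α, 1 + δ/γ]` when `α` and
`γ` are positive; it is the natural domain for sign statements on `GreenG`. -/
def nonnegRegion (α β γ δ : ℝ) : Set ℝ :=
  {x | 0 ≤ boundarySol α β x ∧ 0 ≤ boundarySol γ δ (1 - x)}

section BoundarySol

variable {α β : ℝ}

lemma boundarySol_one : boundarySol α β 1 = α + β := by
  rw [boundarySol, mul_one, add_comm]

lemma boundarySol_one_sub (x : ℝ) : boundarySol α β (1 - x) = α + β - α * x := by
  rw [boundarySol]
  ring

lemma boundarySol_nonneg (hα : 0 ≤ α) (hβ : 0 ≤ β) {x : ℝ} (hx : 0 ≤ x) :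
    0 ≤ boundarySol α β x :=
  add_nonneg hβ (mul_nonneg hα hx)

lemma boundarySol_monotone (hα : 0 ≤ α) : Monotone (boundarySol α β) :=
  fun _ _ hxy => add_le_add_right (mul_le_mul_of_nonneg_left hxy hα) β

lemma mul_boundarySol_le (hα : 0 ≤ α) {c u v x y : ℝ} (hc : 0 ≤ c)
    (hcuv : c * boundarySol α β v ≤ boundarySol α β u) (hxv : x ≤ v) (huy : u ≤ y) :
    c * boundarySol α β x ≤ boundarySol α β y :=
  calc c * boundarySol α β x
      ≤ c * boundarySol α β v := mul_le_mul_of_nonneg_left (boundarySol_monotone hα hxv) hc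
    _ ≤ boundarySol α β u := hcuv
    _ ≤ boundarySol α β y := boundarySol_monotone hα huy

end BoundarySol

section GreenG

variable {α β γ δ : ℝ}

lemma Icc_subset_nonnegRegion (hα : 0 ≤ α) (hβ : 0 ≤ β) (hγ : 0 ≤ γ) (hδ : 0 ≤ δ) :
    Icc 0 1 ⊆ nonnegRegion α β γ δ :=
  fun _ hx => ⟨boundarySol_nonneg hα hβ hx.1, boundarySol_nonneg hγ hδ (sub_nonneg.2 hx.2)⟩

lemma GreenG_of_le {t s : ℝ} (hst : s ≤ t) :
    GreenG α β γ δ t s =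
      (γ * β + α * γ + α * δ)⁻¹ * (boundarySol γ δ (1 - t) * boundarySol α β s) := by
  rw [GreenG, if_pos hst, one_div, boundarySol_one_sub, boundarySol]

lemma GreenG_of_ge {t s : ℝ} (hts : t ≤ s) :
    GreenG α β γ δ t s =
      (γ * β + α * γ + α * δ)⁻¹ * (boundarySol γ δ (1 - s) * boundarySol α β t) := by
  rcases hts.eq_or_lt with rfl | hlt
  · exact GreenG_of_le le_rfl
  · rw [GreenG, if_neg hlt.not_ge, one_div, boundarySol_one_sub, boundarySol, mul_comm (β + α * t)]

lemma GreenG_nonneg (hΓ : 0 < γ * β + α * γ + α * δ) {t s : ℝ}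
    (ht : t ∈ nonnegRegion α β γ δ) (hs : s ∈ nonnegRegion α β γ δ) :
    0 ≤ GreenG α β γ δ t s := by
  rcases le_total s t with hst | hts
  · rw [GreenG_of_le hst]
    exact mul_nonneg (inv_nonneg.2 hΓ.le) (mul_nonneg ht.2 hs.1)
  · rw [GreenG_of_ge hts]
    exact mul_nonneg (inv_nonneg.2 hΓ.le) (mul_nonneg hs.2 ht.1)

lemma GreenG_le_diag (hα : 0 ≤ α) (hγ : 0 ≤ γ) (hΓ : 0 < γ * β + α * γ + α * δ) (t : ℝ) {s : ℝ}
    (hs : s ∈ nonnegRegion α β γ δ) :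
    GreenG α β γ δ t s ≤ GreenG α β γ δ s s := by
  rw [GreenG_of_le (le_refl s)]
  rcases le_total s t with hst | hts
  · rw [GreenG_of_le hst]
    have hφ : boundarySol γ δ (1 - t) ≤ boundarySol γ δ (1 - s) :=
      boundarySol_monotone hγ (sub_le_sub_left hst 1)
    exact mul_le_mul_of_nonneg_left (mul_le_mul_of_nonneg_right hφ hs.1) (inv_nonneg.2 hΓ.le)
  · rw [GreenG_of_ge hts]
    have hψ : boundarySol α β t ≤ boundarySol α β s := boundarySol_monotone hα hts
    exact mul_le_mul_of_nonneg_left (mul_le_mul_of_nonneg_left hψ hs.2) (inv_nonneg.2 hΓ.le)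

lemma mul_GreenG_diag_le (hα : 0 ≤ α) (hγ : 0 ≤ γ) (hΓ : 0 < γ * β + α * γ + α * δ)
    {a b c t s : ℝ} (hc : 0 ≤ c)
    (hcb : c * boundarySol γ δ 1 ≤ boundarySol γ δ (1 - b))
    (hca : c * boundarySol α β 1 ≤ boundarySol α β a)
    (ht : t ∈ Icc a b) (hs : s ∈ Icc 0 1) (hs' : s ∈ nonnegRegion α β γ δ) :
    c * GreenG α β γ δ s s ≤ GreenG α β γ δ t s := by
  rw [GreenG_of_le (le_refl s), mul_left_comm]
  rcases le_total s t with hst | hts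
  · rw [GreenG_of_le hst, ← mul_assoc c]
    have hφ : c * boundarySol γ δ (1 - s) ≤ boundarySol γ δ (1 - t) :=
      mul_boundarySol_le hγ hc hcb (sub_le_self 1 hs.1) (sub_le_sub_left ht.2 1)
    exact mul_le_mul_of_nonneg_left (mul_le_mul_of_nonneg_right hφ hs'.1) (inv_nonneg.2 hΓ.le)
  · rw [GreenG_of_ge hts, mul_left_comm c]
    have hψ : c * boundarySol α β s ≤ boundarySol α β t :=
      mul_boundarySol_le hα hc hca hs.2 ht.1
    exact mul_le_mul_of_nonneg_left (mul_le_mul_of_nonneg_left hψ hs'.2) (inv_nonneg.2 hΓ.le)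

lemma add_pos_of_wronskian_pos (hα : 0 ≤ α) (hβ : 0 ≤ β)
    (hΓ : 0 < γ * β + α * γ + α * δ) : 0 < α + β := by
  refine (add_nonneg hα hβ).lt_of_ne' fun hαβ => hΓ.ne' ?_
  obtain ⟨rfl, rfl⟩ := (add_eq_zero_iff_of_nonneg hα hβ).1 hαβ
  ring

theorem GreenG_bounds_general (hα : 0 ≤ α) (hγ : 0 ≤ γ)
    (hαβ : 0 < α + β) (hγδ : 0 < γ + δ) (hΓ : 0 < γ * β + α * γ + α * δ)
    {a b c : ℝ} (ha : 0 ≤ β + α * a) (hb : 0 ≤ γ + δ - γ * b)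
    (hc : c = min ((γ + δ - γ * b) / (γ + δ)) ((β + α * a) / (α + β))) :
    (∀ t ∈ nonnegRegion α β γ δ, ∀ s ∈ nonnegRegion α β γ δ, 0 ≤ GreenG α β γ δ t s) ∧
    (∀ t, ∀ s ∈ nonnegRegion α β γ δ, GreenG α β γ δ t s ≤ GreenG α β γ δ s s) ∧
    (∀ t ∈ Icc a b, ∀ s ∈ Icc 0 1 ∩ nonnegRegion α β γ δ,
      c * GreenG α β γ δ s s ≤ GreenG α β γ δ t s) := by
  have hc_nonneg : 0 ≤ c := hc ▸ le_min (div_nonneg hb hγδ.le) (div_nonneg ha hαβ.le)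
  have hcb : c * boundarySol γ δ 1 ≤ boundarySol γ δ (1 - b) := by
    rw [boundarySol_one, boundarySol_one_sub, ← le_div_iff₀ hγδ, hc]
    exact min_le_left _ _
  have hca : c * boundarySol α β 1 ≤ boundarySol α β a := by
    rw [boundarySol_one, boundarySol, ← le_div_iff₀ hαβ, hc]
    exact min_le_right _ _
  exact ⟨fun _ ht _ hs => GreenG_nonneg hΓ ht hs, fun t _ hs => GreenG_le_diag hα hγ hΓ t hs,
    fun _ ht _ hs => mul_GreenG_diag_le hα hγ hΓ hc_nonneg hcb hca ht hs.1 hs.2⟩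

end GreenG

/-- The Green's function is nonnegative, satisfies `G(t,s) ≤ G(s,s)`, and with the
choices `−β/α < a < b < 1 + δ/γ` and
`c = min{(γ+δ−γb)/(γ+δ), (β+αa)/(α+β)}` one has `c·G(s,s) ≤ G(t,s)` for
`t ∈ [a,b]`, `s ∈ [0,1]`. -/
theorem GreenG_bounds
    (α β γ δ : ℝ) (hα : 0 ≤ α) (hβ : 0 ≤ β) (hγ : 0 ≤ γ) (hδ : 0 ≤ δ)
    (hΓ : 0 < γ * β + α * γ + α * δ)
    (a b : ℝ) (ha0 : 0 ≤ a) (hab : a < b) (hb1 : b ≤ 1)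
    (haα : α ≠ 0 → -(β / α) < a) (hbγ : γ ≠ 0 → b < 1 + δ / γ)
    (c : ℝ) (hc : c = min ((γ + δ - γ * b) / (γ + δ)) ((β + α * a) / (α + β))) :
    (∀ t ∈ Icc (0:ℝ) 1, ∀ s ∈ Icc (0:ℝ) 1, 0 ≤ GreenG α β γ δ t s) ∧
    (∀ t ∈ Icc (0:ℝ) 1, ∀ s ∈ Icc (0:ℝ) 1, GreenG α β γ δ t s ≤ GreenG α β γ δ s s) ∧
    (∀ t ∈ Icc a b, ∀ s ∈ Icc (0:ℝ) 1,
      c * GreenG α β γ δ s s ≤ GreenG α β γ δ t s) := by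
  have hI : Icc 0 1 ⊆ nonnegRegion α β γ δ := Icc_subset_nonnegRegion hα hβ hγ hδ
  obtain ⟨hnonneg, hdiag, hlower⟩ := GreenG_bounds_general hα hγ
    (add_pos_of_wronskian_pos hα hβ hΓ)
    (add_pos_of_wronskian_pos hγ hδ (by linarith : 0 < α * δ + γ * α + γ * β)) hΓ
    (boundarySol_nonneg hα hβ ha0)
    (boundarySol_one_sub b ▸ boundarySol_nonneg hγ hδ (sub_nonneg.2 hb1)) hc
  exact ⟨fun t ht s hs => hnonneg t (hI ht) s (hI hs), fun t _ s hs => hdiag t s (hI hs),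
    fun t ht s hs => hlower t ht s ⟨hs, hI hs⟩⟩
end
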